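/- arXiv:1903.04617 — 2 statements merged into one kernel-verified Lean document; each statement's English description precedes it below -/
import Mathlib

section
/- Fix α ∈ (0,π). For every ε > 0 there exists δ > 0 such that: whenever 0 < w < δ and L ∈ (0,∞) are such that there exists a translator u : P(α,w,L) → ℝ with boundary value −∞ at every point of the horizontal sides of P(α,w,L) and +∞ at every point of the nonhorizontal sides, then |w/L − sin α| < ε. (In other words, w/L(α,w) → sin α as w → 0, where L(α,w) is the unique such side length.) -/
/-!
Write `W = √(1 + |∇u|²)` and `X = ∇u / W`, so that `|X| < 1`. The translator equation says
`div X = 1 / W ∈ (0, 1]` (`div_field`). If the outward flux of `X` through each side of the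
parallelogram is the full length of the side, with sign `+` on the nonhorizontal sides and `-` on
the horizontal ones, then the divergence theorem gives

  `2 w / sin α - 2 L = ∫ 1 / W ∈ [0, L w]`,

that is, `0 ≤ w / L - sin α ≤ (w sin α) / 2`, so `δ = ε` works (`scherk_flux_bounds`).

The flux through a side where `u = +∞` (for `-∞` replace `u` by `-u`) is found by a calibration
argument (`flux_le`, `side_flux_le`). Let `n` be the outward unit normal of the side and
`f = φ(u - k)` for a smooth monotone step `φ`. From `∇u · X = W - 1 / W` and `∇u · n ≤ W` one gets
`∇u · n - ∇u · X ≤ 1`, so `div ((1 - f) X + f n) ≤ 1 + sup φ'`. On a thin box along the side, at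
distances between `s` and `r` from it, `k` and then `s` can be chosen such that `f = 0` on the inner
edge and `f = 1` on the outer edge. The divergence theorem on this box shows that the flux of `X`
through the inner edge agrees with that of `n` up to `O(r)`. All boxes stay at distance `r` from the
corners, where nothing is known about `u`.
-/

open Real Filter MeasureTheory Set

noncomputable section

/-- Partial derivative with respect to the first variable. -/
def pdx (u : ℝ × ℝ → ℝ) (p : ℝ × ℝ) : ℝ := fderiv ℝ u p (1, 0)

/-- Partial derivative with respect to the second variable. -/
def pdy (u : ℝ × ℝ → ℝ) (p : ℝ × ℝ) : ℝ := fderiv ℝ u p (0, 1)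

/-- `u` is a smooth solution of the translator equation
`(1 + u_y²)u_xx − 2u_x u_y u_xy + (1 + u_x²)u_yy = 1 + u_x² + u_y²` on `Ω`. -/
def IsTranslatorOn (Ω : Set (ℝ × ℝ)) (u : ℝ × ℝ → ℝ) : Prop :=
  ContDiffOn ℝ (⊤ : ℕ∞) u Ω ∧
  ∀ p ∈ Ω,
    (1 + (pdy u p) ^ 2) * pdx (pdx u) p
      - 2 * pdx u p * pdy u p * pdy (pdx u) p
      + (1 + (pdx u p) ^ 2) * pdy (pdy u) p
    = 1 + (pdx u p) ^ 2 + (pdy u p) ^ 2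

/-- The open parallelogram `P(α, w, L)`. -/
def Pgram (α w L : ℝ) : Set (ℝ × ℝ) :=
  {p | 0 < p.2 ∧ p.2 < w ∧
       p.2 * Real.cos α / Real.sin α < p.1 ∧
       p.1 < L + p.2 * Real.cos α / Real.sin α}

/-- `u` is a translator on `P(α,w,L)` with boundary value `−∞` at every point of the
horizontal sides and `+∞` at every point of the nonhorizontal sides. -/
def ScherkBVP (α w L : ℝ) (u : ℝ × ℝ → ℝ) : Prop :=
  IsTranslatorOn (Pgram α w L) u ∧
  (∀ x : ℝ, 0 < x → x < L →
      Tendsto u (nhdsWithin (x, 0) (Pgram α w L)) atBot) ∧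
  (∀ x : ℝ, w * Real.cos α / Real.sin α < x → x < L + w * Real.cos α / Real.sin α →
      Tendsto u (nhdsWithin (x, w) (Pgram α w L)) atBot) ∧
  (∀ y : ℝ, 0 < y → y < w →
      Tendsto u (nhdsWithin (y * Real.cos α / Real.sin α, y) (Pgram α w L)) atTop) ∧
  (∀ y : ℝ, 0 < y → y < w →
      Tendsto u (nhdsWithin (L + y * Real.cos α / Real.sin α, y) (Pgram α w L)) atTop)

/-- The region `Ω(α, w)`: a "parallelogram" whose right-hand side is at infinity. -/
def OmegaReg (α w : ℝ) : Set (ℝ × ℝ) :=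
  {p | 0 < p.2 ∧ p.2 < w ∧ p.2 * Real.cos α / Real.sin α < p.1}

/-- `u` is a translator on `Ω(α,w)` with boundary value `−∞` at every point of the two
horizontal edges and `+∞` at every point of the nonhorizontal edge. -/
def ScherkenoidBVP (α w : ℝ) (u : ℝ × ℝ → ℝ) : Prop :=
  IsTranslatorOn (OmegaReg α w) u ∧
  (∀ x : ℝ, 0 < x → Tendsto u (nhdsWithin (x, 0) (OmegaReg α w)) atBot) ∧
  (∀ x : ℝ, w * Real.cos α / Real.sin α < x →
      Tendsto u (nhdsWithin (x, w) (OmegaReg α w)) atBot) ∧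
  (∀ y : ℝ, 0 < y → y < w →
      Tendsto u (nhdsWithin (y * Real.cos α / Real.sin α, y) (OmegaReg α w)) atTop)

/-- The full strip `ℝ × (0, w)`. -/
def TStrip (w : ℝ) : Set (ℝ × ℝ) := {p | 0 < p.2 ∧ p.2 < w}

/-- The half strip `(0,∞) × (0, w)`. -/
def THalfStrip (w : ℝ) : Set (ℝ × ℝ) := {p | 0 < p.1 ∧ 0 < p.2 ∧ p.2 < w}

/-- A pitchfork function of width `w`: a translator on `ℝ × (0,w)` with boundary value
`+∞` at `(x,0)` for `x < 0`, `−∞` at `(x,0)` for `x > 0`, and `−∞` at `(x,w)` for all `x`. -/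
def IsPitchfork (w : ℝ) (u : ℝ × ℝ → ℝ) : Prop :=
  IsTranslatorOn (TStrip w) u ∧
  (∀ x : ℝ, x < 0 → Tendsto u (nhdsWithin (x, 0) (TStrip w)) atTop) ∧
  (∀ x : ℝ, 0 < x → Tendsto u (nhdsWithin (x, 0) (TStrip w)) atBot) ∧
  (∀ x : ℝ, Tendsto u (nhdsWithin (x, w) (TStrip w)) atBot)

/-- The downward-tilted grim reaper `g_w` of width `w ≥ π`, normalized by `g_w(0,w/2) = 0`. -/
def grimTilt (w : ℝ) (p : ℝ × ℝ) : ℝ :=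
  (w / π) ^ 2 * Real.log (Real.sin (π * p.2 / w)) - p.1 * Real.sqrt ((w / π) ^ 2 - 1)

/-! ### The divergence theorem on a box -/

lemma box_div_le {D : Set (ℝ × ℝ)} (hD : IsOpen D) {F G : ℝ × ℝ → ℝ}
    (hF : ContDiffOn ℝ 1 F D) (hG : ContDiffOn ℝ 1 G D) {a₁ a₂ b₁ b₂ K : ℝ}
    (h₁ : a₁ ≤ b₁) (h₂ : a₂ ≤ b₂) (hsub : Icc a₁ b₁ ×ˢ Icc a₂ b₂ ⊆ D)
    (hK : ∀ p ∈ D, fderiv ℝ F p (1, 0) + fderiv ℝ G p (0, 1) ≤ K) :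
    (((∫ x in a₁..b₁, G (x, b₂)) - ∫ x in a₁..b₁, G (x, a₂)) + ∫ y in a₂..b₂, F (b₁, y))
      - ∫ y in a₂..b₂, F (a₁, y) ≤ K * ((b₁ - a₁) * (b₂ - a₂)) := by
  have hsub' : Icc (a₁, a₂) (b₁, b₂) ⊆ D := by rwa [Icc_prod_eq]
  have hIoo : Ioo a₁ b₁ ×ˢ Ioo a₂ b₂ ⊆ D :=
    (Set.prod_mono Ioo_subset_Icc_self Ioo_subset_Icc_self).trans hsub
  have hF' := hF.continuousOn_fderiv_of_isOpen hD le_rfl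
  have hG' := hG.continuousOn_fderiv_of_isOpen hD le_rfl
  have hcont : ContinuousOn (fun p => fderiv ℝ F p (1, 0) + fderiv ℝ G p (0, 1))
      (Icc (a₁, a₂) (b₁, b₂)) :=
    ((hF'.clm_apply continuousOn_const).add (hG'.clm_apply continuousOn_const)).mono hsub'
  have hintegr := hcont.integrableOn_compact (μ := volume) isCompact_Icc
  have hdiff : ∀ {H : ℝ × ℝ → ℝ}, ContDiffOn ℝ 1 H D →
      ∀ p ∈ Ioo a₁ b₁ ×ˢ Ioo a₂ b₂, HasFDerivAt H (fderiv ℝ H p) p := fun hH p hp =>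
    ((hH.contDiffAt (hD.mem_nhds (hIoo hp))).differentiableAt one_ne_zero).hasFDerivAt
  have key := integral_divergence_prod_Icc_of_hasFDerivAt_of_le F G (fderiv ℝ F) (fderiv ℝ G)
    (a₁, a₂) (b₁, b₂) ⟨h₁, h₂⟩ (hF.continuousOn.mono hsub') (hG.continuousOn.mono hsub')
    (hdiff hF) (hdiff hG) hintegr
  simp only at key
  rw [← key]
  have hvol : volume.real (Icc (a₁, a₂) (b₁, b₂)) = (b₁ - a₁) * (b₂ - a₂) := by
    rw [← Icc_prod_Icc, Measure.volume_eq_prod, measureReal_prod_prod]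
    simp [h₁, h₂]
  calc _ ≤ ∫ _ in Icc (a₁, a₂) (b₁, b₂), K :=
        setIntegral_mono_on hintegr (by simp [isCompact_Icc.measure_lt_top]) measurableSet_Icc
          (fun p hp => hK p (hsub' hp))
    _ = _ := by rw [setIntegral_const, hvol, smul_eq_mul, mul_comm]

lemma abs_integral_le_of_abs_le {f : ℝ → ℝ} {a b M : ℝ} (h : a ≤ b)
    (hf : ∀ x ∈ Icc a b, |f x| ≤ M) : |∫ x in a..b, f x| ≤ M * (b - a) := by
  have := intervalIntegral.norm_integral_le_of_norm_le_const (a := a) (b := b) (f := f) (C := M)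
    (fun x hx => by
      rw [uIoc_of_le h] at hx
      exact hf x ⟨hx.1.le, hx.2⟩)
  rwa [abs_of_nonneg (sub_nonneg.2 h)] at this

/-! ### Flux through a side with infinite boundary value -/

lemma exists_deriv_smoothTransition_bound :
    ∃ C : ℝ, 0 ≤ C ∧ ∀ t, 0 ≤ deriv smoothTransition t ∧ deriv smoothTransition t ≤ C := by
  have hc : Continuous (deriv smoothTransition) :=
    (smoothTransition.contDiff (n := 1)).continuous_deriv le_rfl
  obtain ⟨C, hC⟩ := (isCompact_Icc (a := (0 : ℝ)) (b := 1)).bddAbove_image hc.continuousOn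
  have h0 : ∀ t, 0 ≤ deriv smoothTransition t := fun t => smoothTransition.monotone.deriv_nonneg
  have hC' : ∀ t ∈ Icc (0 : ℝ) 1, deriv smoothTransition t ≤ C := fun t ht =>
    hC (mem_image_of_mem _ ht)
  have hC0 : 0 ≤ C := (h0 0).trans (hC' 0 (by simp))
  refine ⟨C, hC0, fun t => ⟨h0 t, ?_⟩⟩
  rcases lt_or_ge t 0 with ht | ht
  · have : smoothTransition =ᶠ[nhds t] fun _ => 0 := by
      filter_upwards [gt_mem_nhds ht] with x hx using smoothTransition.zero_of_nonpos hx.le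
    rw [this.deriv_eq]; simpa
  rcases le_or_gt t 1 with ht1 | ht1
  · exact hC' t ⟨ht, ht1⟩
  · have : smoothTransition =ᶠ[nhds t] fun _ => 1 := by
      filter_upwards [lt_mem_nhds ht1] with x hx using smoothTransition.one_of_one_le hx.le
    rw [this.deriv_eq]; simpa

/-- Suppose `U → +∞` along the side `{0} × (0,B)` of the box, and `Y` is a field with
bounded second component whose divergence is bounded above and which is calibrated by the constant field `(n₁, n₂)` in the sense
that `dU(n) - dU(Y)` is bounded above. Then the flux of `Y` through `{r} × (r, B - r)` is at most
that of `n`, up to `O(r)`. The proof integrates the divergence of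
`(1 - f) Y + f n`, `f = φ(U - k)`, over `[s,r] × [r,B-r]`, with a step function `φ` and `k`, `s`
chosen so that `f = 1` on the edge `{s}` and `f = 0` on the edge `{r}`. -/
lemma flux_le {A B K M n₁ n₂ : ℝ} {U Y₁ Y₂ : ℝ × ℝ → ℝ}
    (hU : ContDiffOn ℝ 1 U (Ioo 0 A ×ˢ Ioo 0 B))
    (hY₁ : ContDiffOn ℝ 1 Y₁ (Ioo 0 A ×ˢ Ioo 0 B))
    (hY₂ : ContDiffOn ℝ 1 Y₂ (Ioo 0 A ×ˢ Ioo 0 B)) (hK : 0 ≤ K)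
    (hdiv : ∀ p ∈ Ioo 0 A ×ˢ Ioo 0 B, fderiv ℝ Y₁ p (1, 0) + fderiv ℝ Y₂ p (0, 1) ≤ K)
    (hcal : ∀ p ∈ Ioo 0 A ×ˢ Ioo 0 B,
      fderiv ℝ U p (n₁, n₂) - fderiv ℝ U p (Y₁ p, Y₂ p) ≤ K)
    (hM : ∀ p ∈ Ioo 0 A ×ˢ Ioo 0 B, |Y₂ p| ≤ M) (hn : |n₂| ≤ M)
    (hbd : ∀ b ∈ Ioo 0 B, Tendsto U (nhdsWithin (0, b) (Ioo 0 A ×ˢ Ioo 0 B)) atTop) :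
    ∃ C, ∀ r, 0 < r → r < A → 2 * r < B →
      ∫ b in r..(B - r), Y₁ (r, b) ≤ n₁ * (B - 2 * r) + C * r := by
  obtain ⟨Cφ, hCφ, hφ⟩ := exists_deriv_smoothTransition_bound
  set D : Set (ℝ × ℝ) := Ioo 0 A ×ˢ Ioo 0 B with hDdef
  have hD : IsOpen D := isOpen_Ioo.prod isOpen_Ioo
  have hM0 : 0 ≤ M := (abs_nonneg _).trans hn
  refine ⟨2 * M + K * (1 + Cφ) * B, fun r hr hrA hrB => ?_⟩
  -- `k` bounds `U` on the edge `{r} × [r, B - r]`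
  obtain ⟨k, hk⟩ : ∃ k, ∀ b ∈ Icc r (B - r), U (r, b) ≤ k := by
    have hc : ContinuousOn (fun b => U (r, b)) (Icc r (B - r)) := by
      refine hU.continuousOn.comp (by fun_prop) fun b hb => ?_
      exact ⟨⟨hr, hrA⟩, by linarith [hb.1], by linarith [hb.2]⟩
    obtain ⟨k, hk⟩ := isCompact_Icc.bddAbove_image hc
    exact ⟨k, fun b hb => hk (mem_image_of_mem _ hb)⟩
  -- `s` is so small that `U ≥ k + 1` on the edge `{s} × [r, B - r]`
  obtain ⟨s, hs0, hsr, hs⟩ : ∃ s, 0 < s ∧ s < r ∧ ∀ b ∈ Icc r (B - r), k + 1 ≤ U (s, b) := by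
    have hev : ∀ᶠ a in nhds (0 : ℝ), ∀ b ∈ Icc r (B - r), (a, b) ∈ D → k + 1 ≤ U (a, b) := by
      refine isCompact_Icc.eventually_forall_of_forall_eventually
        (P := fun a b => (a, b) ∈ D → k + 1 ≤ U (a, b)) fun b hb => ?_
      have := (hbd b ⟨by linarith [hb.1], by linarith [hb.2]⟩).eventually_ge_atTop (k + 1)
      exact eventually_nhdsWithin_iff.1 this
    have h2 : ∀ᶠ a in nhdsWithin (0 : ℝ) (Ioi 0), 0 < a ∧ a < r :=
      (eventually_mem_nhdsWithin).and
        (mem_nhdsWithin_of_mem_nhds (gt_mem_nhds hr))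
    obtain ⟨s, hs, hs0, hsr⟩ := ((hev.filter_mono nhdsWithin_le_nhds).and h2).exists
    exact ⟨s, hs0, hsr, fun b hb => hs b hb
      ⟨⟨hs0, hsr.trans hrA⟩, by linarith [hb.1], by linarith [hb.2]⟩⟩
  set f : ℝ × ℝ → ℝ := fun p => smoothTransition (U p - k) with hf
  have hfC : ContDiffOn ℝ 1 f D :=
    (smoothTransition.contDiff (n := 1)).comp_contDiffOn (hU.sub contDiffOn_const)
  have hf0 : ∀ p, 0 ≤ f p := fun p => smoothTransition.nonneg _
  have hf1 : ∀ p, f p ≤ 1 := fun p => smoothTransition.le_one _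
  set F : ℝ × ℝ → ℝ := fun p => (1 - f p) * Y₁ p + f p * n₁ with hFdef
  set G : ℝ × ℝ → ℝ := fun p => (1 - f p) * Y₂ p + f p * n₂ with hGdef
  have hFC : ContDiffOn ℝ 1 F D :=
    ((contDiffOn_const.sub hfC).mul hY₁).add (hfC.mul contDiffOn_const)
  have hGC : ContDiffOn ℝ 1 G D :=
    ((contDiffOn_const.sub hfC).mul hY₂).add (hfC.mul contDiffOn_const)
  have hsub : Icc s r ×ˢ Icc r (B - r) ⊆ D := fun p hp =>
    ⟨⟨hs0.trans_le hp.1.1, hp.1.2.trans_lt hrA⟩, hr.trans_le hp.2.1, by linarith [hp.2.2]⟩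
  have hdivFG : ∀ p ∈ D, fderiv ℝ F p (1, 0) + fderiv ℝ G p (0, 1) ≤ K * (1 + Cφ) := by
    intro p hp
    have dd : ∀ {H : ℝ × ℝ → ℝ}, ContDiffOn ℝ 1 H D → HasFDerivAt H (fderiv ℝ H p) p :=
      fun hH => ((hH.contDiffAt (hD.mem_nhds hp)).differentiableAt one_ne_zero).hasFDerivAt
    have hdf : HasFDerivAt f (deriv smoothTransition (U p - k) • fderiv ℝ U p) p := by
      have h1 : HasDerivAt smoothTransition (deriv smoothTransition (U p - k)) (U p - k) :=
        ((smoothTransition.contDiff (n := 1)).differentiable one_ne_zero _).hasDerivAt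
      exact h1.comp_hasFDerivAt p ((dd hU).sub_const k)
    have hdF := ((hdf.const_sub 1).mul (dd hY₁)).add (hdf.mul_const n₁)
    have hdG := ((hdf.const_sub 1).mul (dd hY₂)).add (hdf.mul_const n₂)
    have eF : fderiv ℝ F p = _ := hdF.fderiv
    have eG : fderiv ℝ G p = _ := hdG.fderiv
    have hlin : ∀ a b : ℝ, fderiv ℝ U p (a, b)
        = a * fderiv ℝ U p (1, 0) + b * fderiv ℝ U p (0, 1) := by
      intro a b
      have : ((a, b) : ℝ × ℝ) = a • (1, 0) + b • (0, 1) := by simp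
      rw [this, map_add, map_smul, map_smul, smul_eq_mul, smul_eq_mul]
    have hc := hcal p hp
    have hd := hdiv p hp
    rw [hlin n₁ n₂, hlin (Y₁ p) (Y₂ p)] at hc
    obtain ⟨hφ0, hφ1⟩ := hφ (U p - k)
    rw [eF, eG]
    simp only [add_apply, smul_apply,
      neg_apply, smul_eq_mul]
    have e1 := mul_le_mul_of_nonneg_left hd (sub_nonneg.2 (hf1 p))
    have e2 := mul_le_mul_of_nonneg_left hc hφ0
    have e3 := mul_le_mul_of_nonneg_right hφ1 hK
    have e4 := mul_nonneg (hf0 p) hK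
    linarith
  have hmain := box_div_le hD hFC hGC hsr.le (by linarith : r ≤ B - r) hsub hdivFG
  have hGM : ∀ p ∈ D, |G p| ≤ M := by
    intro p hp
    calc |G p| ≤ |(1 - f p) * Y₂ p| + |f p * n₂| := abs_add_le _ _
      _ = (1 - f p) * |Y₂ p| + f p * |n₂| := by
        rw [abs_mul, abs_mul, abs_of_nonneg (hf0 p), abs_of_nonneg (sub_nonneg.2 (hf1 p))]
      _ ≤ (1 - f p) * M + f p * M := by
        gcongr
        · exact sub_nonneg.2 (hf1 p)
        · exact hM p hp
        · exact hf0 p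
      _ = M := by ring
  have hG1 := abs_le.1 (abs_integral_le_of_abs_le (f := fun x => G (x, B - r)) hsr.le
    fun x hx => hGM _ (hsub ⟨hx, by linarith, le_rfl⟩))
  have hG2 := abs_le.1 (abs_integral_le_of_abs_le (f := fun x => G (x, r)) hsr.le
    fun x hx => hGM _ (hsub ⟨hx, le_rfl, by linarith⟩))
  have hle : r ≤ B - r := by linarith
  have hFr : ∫ y in r..(B - r), F (r, y) = ∫ y in r..(B - r), Y₁ (r, y) := by
    refine intervalIntegral.integral_congr fun y hy => ?_
    rw [uIcc_of_le hle] at hy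
    have : f (r, y) = 0 := smoothTransition.zero_of_nonpos (by linarith [hk y hy])
    simp [hFdef, this]
  have hFs : ∫ y in r..(B - r), F (s, y) = n₁ * (B - 2 * r) := by
    have : ∫ y in r..(B - r), F (s, y) = ∫ _ in r..(B - r), n₁ := by
      refine intervalIntegral.integral_congr fun y hy => ?_
      rw [uIcc_of_le hle] at hy
      have : f (s, y) = 1 := smoothTransition.one_of_one_le (by linarith [hs y hy])
      simp [hFdef, this]
    rw [this, intervalIntegral.integral_const, smul_eq_mul]; ring
  rw [hFr, hFs] at hmain
  have hx1 : M * (r - s) ≤ M * r := by gcongr; linarith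
  have hx2 : K * (1 + Cφ) * ((r - s) * (B - r - r)) ≤ K * (1 + Cφ) * (r * B) := by
    gcongr <;> linarith
  linarith [hG1.1, hG2.2]

/-! ### The field `∇u / W` of a translator -/

/-- The area element `W = √(1 + |∇u|²)`. -/
def areaW (u : ℝ × ℝ → ℝ) (p : ℝ × ℝ) : ℝ := √(1 + (pdx u p) ^ 2 + (pdy u p) ^ 2)

/-- First component of `X = ∇u / W`. -/
def fieldX (u : ℝ × ℝ → ℝ) (p : ℝ × ℝ) : ℝ := pdx u p / areaW u p

/-- Second component of `X = ∇u / W`. -/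
def fieldY (u : ℝ × ℝ → ℝ) (p : ℝ × ℝ) : ℝ := pdy u p / areaW u p

lemma areaW_sq (u : ℝ × ℝ → ℝ) (p : ℝ × ℝ) :
    areaW u p ^ 2 = 1 + (pdx u p) ^ 2 + (pdy u p) ^ 2 := Real.sq_sqrt (by positivity)

lemma areaW_pos (u : ℝ × ℝ → ℝ) (p : ℝ × ℝ) : 0 < areaW u p := Real.sqrt_pos.2 (by positivity)

lemma one_le_areaW (u : ℝ × ℝ → ℝ) (p : ℝ × ℝ) : 1 ≤ areaW u p := by
  nlinarith [areaW_sq u p, areaW_pos u p, sq_nonneg (pdx u p), sq_nonneg (pdy u p)]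

lemma fieldX_sq_add_fieldY_sq_le (u : ℝ × ℝ → ℝ) (p : ℝ × ℝ) :
    fieldX u p ^ 2 + fieldY u p ^ 2 ≤ 1 := by
  unfold fieldX fieldY
  rw [div_pow, div_pow, ← add_div, div_le_one (by have := areaW_pos u p; positivity), areaW_sq]
  linarith

/-- Cauchy–Schwarz for `X`. -/
lemma abs_field_le (u : ℝ × ℝ → ℝ) (p : ℝ × ℝ) (a b : ℝ) :
    |fieldX u p * a - fieldY u p * b| ≤ √(a ^ 2 + b ^ 2) := by
  refine Real.abs_le_sqrt ?_
  have h := mul_le_mul_of_nonneg_right (fieldX_sq_add_fieldY_sq_le u p)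
    (by positivity : 0 ≤ a ^ 2 + b ^ 2)
  nlinarith [sq_nonneg (fieldX u p * b + fieldY u p * a)]

section Translator

variable {Ω : Set (ℝ × ℝ)} {u : ℝ × ℝ → ℝ}

lemma contDiffOn_pd (hΩ : IsOpen Ω) (hu : IsTranslatorOn Ω u) :
    ContDiffOn ℝ 1 (pdx u) Ω ∧ ContDiffOn ℝ 1 (pdy u) Ω := by
  have h := hu.1.fderiv_of_isOpen (m := 1) hΩ (by norm_cast)
  exact ⟨h.clm_apply contDiffOn_const, h.clm_apply contDiffOn_const⟩

lemma contDiffOn_areaW (hΩ : IsOpen Ω) (hu : IsTranslatorOn Ω u) :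
    ContDiffOn ℝ 1 (areaW u) Ω := by
  obtain ⟨h1, h2⟩ := contDiffOn_pd hΩ hu
  exact ((contDiffOn_const.add (h1.pow 2)).add (h2.pow 2)).sqrt fun p _ => by positivity

lemma contDiffOn_field (hΩ : IsOpen Ω) (hu : IsTranslatorOn Ω u) :
    ContDiffOn ℝ 1 (fieldX u) Ω ∧ ContDiffOn ℝ 1 (fieldY u) Ω := by
  obtain ⟨h1, h2⟩ := contDiffOn_pd hΩ hu
  have h3 := contDiffOn_areaW hΩ hu
  exact ⟨h1.div h3 fun p _ => (areaW_pos u p).ne', h2.div h3 fun p _ => (areaW_pos u p).ne'⟩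

lemma pd_comm (hΩ : IsOpen Ω) (hu : IsTranslatorOn Ω u) {p : ℝ × ℝ} (hp : p ∈ Ω) :
    pdx (pdy u) p = pdy (pdx u) p := by
  have hc : ContDiffAt ℝ (⊤ : ℕ∞) u p := hu.1.contDiffAt (hΩ.mem_nhds hp)
  have hd : DifferentiableAt ℝ (fderiv ℝ u) p :=
    (hc.fderiv_right (m := 1) (by norm_cast)).differentiableAt one_ne_zero
  have hs : IsSymmSndFDerivAt ℝ u p :=
    hc.isSymmSndFDerivAt (by simpa using WithTop.coe_le_coe.2 (le_top : (2 : ℕ∞) ≤ ⊤))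
  have key : ∀ v w : ℝ × ℝ, fderiv ℝ (fun q => fderiv ℝ u q v) p w
      = fderiv ℝ (fderiv ℝ u) p w v := by
    intro v w
    have := hd.hasFDerivAt.clm_apply (hasFDerivAt_const v p)
    rw [this.fderiv]
    simp
  change fderiv ℝ (fun q => fderiv ℝ u q (0, 1)) p (1, 0)
    = fderiv ℝ (fun q => fderiv ℝ u q (1, 0)) p (0, 1)
  rw [key, key]
  exact hs _ _

/-- The translator equation in divergence form, `div X = 1 / W`. -/
lemma div_field (hΩ : IsOpen Ω) (hu : IsTranslatorOn Ω u) {p : ℝ × ℝ} (hp : p ∈ Ω) :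
    fderiv ℝ (fieldX u) p (1, 0) + fderiv ℝ (fieldY u) p (0, 1) = 1 / areaW u p := by
  obtain ⟨h1, h2⟩ := contDiffOn_pd hΩ hu
  have h3 := contDiffOn_areaW hΩ hu
  obtain ⟨hX, hY⟩ := contDiffOn_field hΩ hu
  have dd : ∀ {H : ℝ × ℝ → ℝ}, ContDiffOn ℝ 1 H Ω → HasFDerivAt H (fderiv ℝ H p) p :=
    fun hH => ((hH.contDiffAt (hΩ.mem_nhds hp)).differentiableAt one_ne_zero).hasFDerivAt
  have hW := areaW_pos u p
  have hW2 := areaW_sq u p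
  -- differentiating `W² = 1 + u_x² + u_y²` gives the derivative of `W`
  have hdW : ∀ v, areaW u p * fderiv ℝ (areaW u) p v
      = pdx u p * fderiv ℝ (pdx u) p v + pdy u p * fderiv ℝ (pdy u) p v := by
    intro v
    have e1 := (dd h3).pow 2
    have e2 : HasFDerivAt (fun q => 1 + (pdx u q) ^ 2 + (pdy u q) ^ 2) _ p :=
      (((dd h1).pow 2).const_add 1).add ((dd h2).pow 2)
    have heq : (fun q => areaW u q ^ 2) = fun q => 1 + (pdx u q) ^ 2 + (pdy u q) ^ 2 :=
      funext fun q => areaW_sq u q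
    rw [← heq] at e2
    have e3 := HasFDerivAt.unique e1 e2
    have e4 := congrArg (fun l : ℝ × ℝ →L[ℝ] ℝ => l v) e3
    simp at e4
    linarith
  have eX : ∀ v, areaW u p ^ 2 * fderiv ℝ (fieldX u) p v
      = areaW u p * fderiv ℝ (pdx u) p v - pdx u p * fderiv ℝ (areaW u) p v := by
    intro v
    have e1 : HasFDerivAt (fun q => fieldX u q * areaW u q) _ p := (dd hX).mul (dd h3)
    have heq : (fun q => fieldX u q * areaW u q) = pdx u :=
      funext fun q => div_mul_cancel₀ _ (areaW_pos u q).ne'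
    rw [heq] at e1
    have e2 := congrArg (fun l : ℝ × ℝ →L[ℝ] ℝ => l v) (HasFDerivAt.unique e1 (dd h1))
    simp at e2
    have e3 : fieldX u p * areaW u p = pdx u p := congrFun heq p
    rw [← e2, ← e3]
    ring
  have eY : ∀ v, areaW u p ^ 2 * fderiv ℝ (fieldY u) p v
      = areaW u p * fderiv ℝ (pdy u) p v - pdy u p * fderiv ℝ (areaW u) p v := by
    intro v
    have e1 : HasFDerivAt (fun q => fieldY u q * areaW u q) _ p := (dd hY).mul (dd h3)
    have heq : (fun q => fieldY u q * areaW u q) = pdy u :=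
      funext fun q => div_mul_cancel₀ _ (areaW_pos u q).ne'
    rw [heq] at e1
    have e2 := congrArg (fun l : ℝ × ℝ →L[ℝ] ℝ => l v) (HasFDerivAt.unique e1 (dd h2))
    simp at e2
    have e3 : fieldY u p * areaW u p = pdy u p := congrFun heq p
    rw [← e2, ← e3]
    ring
  have hpde := hu.2 p hp
  have hcomm := pd_comm hΩ hu hp
  have w1 := hdW (1, 0)
  have w2 := hdW (0, 1)
  have x1 := eX (1, 0)
  have y2 := eY (0, 1)
  change _ = pdx u p * pdx (pdx u) p + pdy u p * pdx (pdy u) p at w1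
  change _ = pdx u p * pdy (pdx u) p + pdy u p * pdy (pdy u) p at w2
  change _ = areaW u p * pdx (pdx u) p - _ at x1
  change _ = areaW u p * pdy (pdy u) p - _ at y2
  rw [hcomm] at w1
  generalize fderiv ℝ (fieldX u) p (1, 0) = a at *
  generalize fderiv ℝ (fieldY u) p (0, 1) = b at *
  generalize fderiv ℝ (areaW u) p (1, 0) = a' at *
  generalize fderiv ℝ (areaW u) p (0, 1) = b' at *
  generalize areaW u p = W at *
  rw [eq_div_iff hW.ne']
  have hW3 : W ^ 2 ≠ 0 := by positivity
  apply mul_left_cancel₀ hW3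
  linear_combination W * x1 + W * y2 - pdx u p * w1 - pdy u p * w2 + hpde
    + (pdx (pdx u) p + pdy (pdy u) p - 1) * hW2

/-! ### Affine coordinates -/

/-- The affine parametrization `q ↦ p + q₁ e₁ + q₂ e₂` of the plane. -/
def aff (p e₁ e₂ q : ℝ × ℝ) : ℝ × ℝ := p + q.1 • e₁ + q.2 • e₂

/-- First component of `k X` in the coordinates `aff p e₁ e₂`, scaled by `det (e₁, e₂)`. -/
def coordX (u : ℝ × ℝ → ℝ) (k : ℝ) (p e₁ e₂ q : ℝ × ℝ) : ℝ :=
  k * (fieldX u (aff p e₁ e₂ q) * e₂.2 - fieldY u (aff p e₁ e₂ q) * e₂.1)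

/-- Second component of `k X` in the coordinates `aff p e₁ e₂`, scaled by `det (e₁, e₂)`. -/
def coordY (u : ℝ × ℝ → ℝ) (k : ℝ) (p e₁ e₂ q : ℝ × ℝ) : ℝ :=
  k * (fieldY u (aff p e₁ e₂ q) * e₁.1 - fieldX u (aff p e₁ e₂ q) * e₁.2)

lemma contDiff_aff (p e₁ e₂ : ℝ × ℝ) : ContDiff ℝ 1 (aff p e₁ e₂) := by
  unfold aff; fun_prop

lemma fderiv_aff (p e₁ e₂ q v : ℝ × ℝ) :
    fderiv ℝ (aff p e₁ e₂) q v = v.1 • e₁ + v.2 • e₂ := by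
  have h1 : HasFDerivAt (fun q : ℝ × ℝ => q.1 • e₁) _ q :=
    (hasFDerivAt_fst (𝕜 := ℝ)).smul_const e₁
  have h2 : HasFDerivAt (fun q : ℝ × ℝ => q.2 • e₂) _ q :=
    (hasFDerivAt_snd (𝕜 := ℝ)).smul_const e₂
  have : HasFDerivAt (aff p e₁ e₂) _ q := (h1.const_add p).add h2
  rw [this.fderiv]
  simp

lemma apply_eq (l : ℝ × ℝ →L[ℝ] ℝ) (v : ℝ × ℝ) : l v = v.1 * l (1, 0) + v.2 * l (0, 1) := by
  have : v = v.1 • ((1, 0) : ℝ × ℝ) + v.2 • ((0, 1) : ℝ × ℝ) := by ext <;> simp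
  conv_lhs => rw [this]
  rw [map_add, map_smul, map_smul, smul_eq_mul, smul_eq_mul]

lemma hasFDerivAt_comp_aff (hΩ : IsOpen Ω) {H : ℝ × ℝ → ℝ} (hH : ContDiffOn ℝ 1 H Ω)
    {p e₁ e₂ q : ℝ × ℝ} (hq : aff p e₁ e₂ q ∈ Ω) :
    HasFDerivAt (fun q => H (aff p e₁ e₂ q))
      ((fderiv ℝ H (aff p e₁ e₂ q)).comp (fderiv ℝ (aff p e₁ e₂) q)) q :=
  (((hH.contDiffAt (hΩ.mem_nhds hq)).differentiableAt one_ne_zero).hasFDerivAt).comp q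
    ((contDiff_aff p e₁ e₂).differentiable one_ne_zero q).hasFDerivAt

lemma contDiffOn_coord (hΩ : IsOpen Ω) (hu : IsTranslatorOn Ω u) {k : ℝ} {p e₁ e₂ : ℝ × ℝ}
    {D : Set (ℝ × ℝ)} (hD : ∀ q ∈ D, aff p e₁ e₂ q ∈ Ω) :
    ContDiffOn ℝ 1 (coordX u k p e₁ e₂) D ∧ ContDiffOn ℝ 1 (coordY u k p e₁ e₂) D := by
  obtain ⟨h1, h2⟩ := contDiffOn_field hΩ hu
  have g1 := h1.comp (contDiff_aff p e₁ e₂).contDiffOn hD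
  have g2 := h2.comp (contDiff_aff p e₁ e₂).contDiffOn hD
  exact ⟨contDiffOn_const.mul ((g1.mul contDiffOn_const).sub (g2.mul contDiffOn_const)),
    contDiffOn_const.mul ((g2.mul contDiffOn_const).sub (g1.mul contDiffOn_const))⟩

lemma div_coord (hΩ : IsOpen Ω) (hu : IsTranslatorOn Ω u) {k : ℝ} {p e₁ e₂ q : ℝ × ℝ}
    (hq : aff p e₁ e₂ q ∈ Ω) :
    fderiv ℝ (coordX u k p e₁ e₂) q (1, 0) + fderiv ℝ (coordY u k p e₁ e₂) q (0, 1)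
      = k * (e₁.1 * e₂.2 - e₁.2 * e₂.1) / areaW u (aff p e₁ e₂ q) := by
  obtain ⟨h1, h2⟩ := contDiffOn_field hΩ hu
  have g1 := hasFDerivAt_comp_aff hΩ h1 hq
  have g2 := hasFDerivAt_comp_aff hΩ h2 hq
  have k1 : HasFDerivAt (coordX u k p e₁ e₂) _ q :=
    ((g1.mul_const e₂.2).sub (g2.mul_const e₂.1)).const_mul k
  have k2 : HasFDerivAt (coordY u k p e₁ e₂) _ q :=
    ((g2.mul_const e₁.1).sub (g1.mul_const e₁.2)).const_mul k
  rw [k1.fderiv, k2.fderiv]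
  simp only [smul_apply, sub_apply, ContinuousLinearMap.comp_apply,
    fderiv_aff, smul_eq_mul, one_smul, zero_smul, add_zero, zero_add]
  have hd := div_field hΩ hu hq
  rw [apply_eq (fderiv ℝ (fieldX u) _) e₁, apply_eq (fderiv ℝ (fieldX u) _) e₂,
    apply_eq (fderiv ℝ (fieldY u) _) e₁, apply_eq (fderiv ℝ (fieldY u) _) e₂,
    mul_div_assoc, div_eq_mul_one_div (e₁.1 * e₂.2 - _), ← hd]
  ring

/-- Flux of `X` near a side of a parallelogram with infinite boundary value `σ ∞`, `σ = ±1`. The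
side is `{p + b e₂ : 0 < b < B}`, `ε` is the inverse of `det (e₁, e₂)` (a sign in the applications), and
`n₁ e₁ + n₂ e₂` has length at most one; in the applications it is the outward unit normal. -/
lemma side_flux_le (hΩ : IsOpen Ω) (hu : IsTranslatorOn Ω u) {A B ε σ n₁ n₂ : ℝ}
    {p e₁ e₂ : ℝ × ℝ} (hmap : ∀ q ∈ Ioo 0 A ×ˢ Ioo 0 B, aff p e₁ e₂ q ∈ Ω)
    (hσ : σ = 1 ∨ σ = -1) (hε : ε * (e₁.1 * e₂.2 - e₁.2 * e₂.1) = 1)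
    (hn : (n₁ * e₁.1 + n₂ * e₂.1) ^ 2 + (n₁ * e₁.2 + n₂ * e₂.2) ^ 2 ≤ 1)
    (hbd : ∀ b ∈ Ioo 0 B, Tendsto (fun z => σ * u z) (nhdsWithin (aff p e₁ e₂ (0, b)) Ω) atTop) :
    ∃ C, ∀ r, 0 < r → r < A → 2 * r < B →
      ∫ b in r..(B - r), coordX u (ε * σ) p e₁ e₂ (r, b) ≤ n₁ * (B - 2 * r) + C * r := by
  have hD : IsOpen (Ioo 0 A ×ˢ Ioo 0 B) := isOpen_Ioo.prod isOpen_Ioo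
  have hu1 : ContDiffOn ℝ 1 u Ω := hu.1.of_le (by norm_cast)
  have hσ2 : σ * σ = 1 := by rcases hσ with rfl | rfl <;> norm_num
  obtain ⟨c1, c2⟩ := contDiffOn_coord hΩ hu (k := ε * σ) hmap
  refine flux_le (U := fun q => σ * u (aff p e₁ e₂ q)) (K := 1)
    (Y₂ := coordY u (ε * σ) p e₁ e₂) (M := |n₂| + |ε * σ| * √(e₁.2 ^ 2 + e₁.1 ^ 2)) (n₂ := n₂)
    (contDiffOn_const.mul (hu1.comp (contDiff_aff p e₁ e₂).contDiffOn hmap)) c1 c2 zero_le_one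
    (fun q hq => ?_) (fun q hq => ?_) (fun q hq => ?_) ?_ fun b hb => ?_
  · rw [div_coord hΩ hu (hmap q hq)]
    have h1 := one_le_areaW u (aff p e₁ e₂ q)
    rw [div_le_one (by linarith), mul_assoc, mul_left_comm, hε]
    rcases hσ with rfl | rfl <;> linarith
  · have hg : HasFDerivAt (fun q => σ * u (aff p e₁ e₂ q)) _ q :=
      (hasFDerivAt_comp_aff hΩ hu1 (hmap q hq)).const_mul σ
    rw [hg.fderiv]
    simp only [smul_apply, ContinuousLinearMap.comp_apply, fderiv_aff, smul_eq_mul]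
    rw [apply_eq, apply_eq _ (coordX u (ε * σ) p e₁ e₂ q • e₁ + _)]
    simp only [Prod.fst_add, Prod.snd_add, Prod.smul_fst, Prod.smul_snd, smul_eq_mul,
      coordX, coordY]
    set z := aff p e₁ e₂ q
    change σ * ((n₁ * e₁.1 + n₂ * e₂.1) * pdx u z + (n₁ * e₁.2 + n₂ * e₂.2) * pdy u z)
      - σ * (_ * pdx u z + _ * pdy u z) ≤ 1
    generalize n₁ * e₁.1 + n₂ * e₂.1 = a at *
    generalize n₁ * e₁.2 + n₂ * e₂.2 = b at *
    have hW := areaW_pos u z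
    have hW1 := one_le_areaW u z
    have hW2 := areaW_sq u z
    have hX : fieldX u z * areaW u z = pdx u z := div_mul_cancel₀ _ hW.ne'
    have hY : fieldY u z * areaW u z = pdy u z := div_mul_cancel₀ _ hW.ne'
    -- `σ n · ∇u ≤ W`
    have hcs : σ * (a * pdx u z + b * pdy u z) ≤ areaW u z := by
      refine le_trans (le_abs_self _) (abs_le_of_sq_le_sq ?_ hW.le)
      have e : (σ * (a * pdx u z + b * pdy u z)) ^ 2 = (a * pdx u z + b * pdy u z) ^ 2 := by
        rw [mul_pow, sq σ, hσ2, one_mul]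
      rw [e, hW2]
      nlinarith [sq_nonneg (a * pdy u z - b * pdx u z), sq_nonneg (pdx u z),
        sq_nonneg (pdy u z), mul_le_mul_of_nonneg_right hn
          (by positivity : 0 ≤ pdx u z ^ 2 + pdy u z ^ 2)]
    -- `∇u · X = W - 1 / W`
    have hXY : pdx u z * fieldX u z + pdy u z * fieldY u z = areaW u z - 1 / areaW u z := by
      rw [fieldX, fieldY]; field_simp; linarith
    have h1 : 1 / areaW u z ≤ 1 := (div_le_one hW).2 hW1
    have hfin : ∀ X Y : ℝ, σ * ((ε * σ * (X * e₂.2 - Y * e₂.1) * e₁.1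
          + ε * σ * (Y * e₁.1 - X * e₁.2) * e₂.1) * pdx u z
        + (ε * σ * (X * e₂.2 - Y * e₂.1) * e₁.2
          + ε * σ * (Y * e₁.1 - X * e₁.2) * e₂.2) * pdy u z)
        = pdx u z * X + pdy u z * Y := by
      intro X Y
      linear_combination (σ * σ) * (pdx u z * X + pdy u z * Y) * hε
        + (pdx u z * X + pdy u z * Y) * hσ2
    rw [hfin, hXY]
    linarith
  · have h1 := abs_field_le u (aff p e₁ e₂ q) e₁.2 e₁.1
    rw [coordY, abs_mul, abs_sub_comm]
    have := mul_le_mul_of_nonneg_left h1 (abs_nonneg (ε * σ))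
    linarith [abs_nonneg n₂]
  · have : 0 ≤ |ε * σ| * √(e₁.2 ^ 2 + e₁.1 ^ 2) := by positivity
    linarith
  · refine (hbd b hb).comp ?_
    refine tendsto_nhdsWithin_iff.2 ⟨?_, ?_⟩
    · exact ((contDiff_aff p e₁ e₂).continuous.tendsto _).mono_left nhdsWithin_le_nhds
    · filter_upwards [self_mem_nhdsWithin] with q hq using hmap q hq

end Translator

/-! ### The flux balance on the parallelogram -/

lemma isOpen_Pgram (α w L : ℝ) : IsOpen (Pgram α w L) := by
  have h1 : IsOpen {p : ℝ × ℝ | 0 < p.2} := isOpen_lt (by fun_prop) (by fun_prop)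
  have h2 : IsOpen {p : ℝ × ℝ | p.2 < w} := isOpen_lt (by fun_prop) (by fun_prop)
  have h3 : IsOpen {p : ℝ × ℝ | p.2 * cos α / sin α < p.1} :=
    isOpen_lt (by fun_prop) (by fun_prop)
  have h4 : IsOpen {p : ℝ × ℝ | p.1 < L + p.2 * cos α / sin α} :=
    isOpen_lt (by fun_prop) (by fun_prop)
  exact h1.inter (h2.inter (h3.inter h4))

/-- The flux balance `2 w / sin α - 2 L = ∫ 1 / W`, weakened by `0 < 1 / W ≤ 1`. It is obtained
by integrating `div X = 1 / W` over the parallelogram shrunk by `r` in the coordinates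
`(a, b) ↦ (a + b cot α, b)` and letting `r → 0`. -/
lemma scherk_flux_bounds {α w L : ℝ} (hα : 0 < sin α) (hw : 0 < w) (hL : 0 < L)
    {u : ℝ × ℝ → ℝ} (h : ScherkBVP α w L u) :
    0 ≤ 2 * (w / sin α) - 2 * L ∧ 2 * (w / sin α) - 2 * L ≤ L * w := by
  obtain ⟨hu, hbot, htop, hleft, hright⟩ := h
  have hΩ := isOpen_Pgram α w L
  set Ω := Pgram α w L with hΩdef
  set c := cos α / sin α with hc
  have hmul : ∀ y, y * cos α / sin α = c * y := fun y => by rw [hc]; ring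
  have hmem : ∀ z : ℝ × ℝ, z ∈ Ω ↔ 0 < z.2 ∧ z.2 < w ∧ c * z.2 < z.1 ∧ z.1 < L + c * z.2 := by
    intro z
    simp only [hΩdef, Pgram, mem_ofPred_eq, hmul]
  simp only [hmul] at htop hleft hright
  set E := √(1 ^ 2 + c ^ 2) with hE
  have hE2 : E ^ 2 = 1 + c ^ 2 := by rw [hE, Real.sq_sqrt (by positivity)]; ring
  have hE0 : 0 < E := Real.sqrt_pos.2 (by positivity)
  have hEsin : E = 1 / sin α := by
    refine (sq_eq_sq₀ hE0.le (by positivity)).1 ?_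
    rw [hE2, hc]
    field_simp
    linarith [sin_sq_add_cos_sq α]
  set F := coordX u 1 0 (1, 0) (c, 1) with hF
  set G := coordY u 1 0 (1, 0) (c, 1) with hG
  have hmap : ∀ q ∈ Ioo 0 L ×ˢ Ioo 0 w, aff 0 (1, 0) (c, 1) q ∈ Ω := by
    rintro ⟨a, b⟩ ⟨⟨h1, h2⟩, h3, h4⟩
    rw [hmem]
    simp only [aff, Prod.smul_mk, smul_eq_mul, Prod.mk_add_mk, zero_add] at *
    refine ⟨?_, ?_, ?_, ?_⟩ <;> linarith
  -- the four sides
  obtain ⟨C₁, h₁⟩ : ∃ C, ∀ r, 0 < r → r < L → 2 * r < w →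
      ∫ b in r..(w - r), coordX u (1 * 1) 0 (1, 0) (c, 1) (r, b)
        ≤ -E * (w - 2 * r) + C * r := by
    refine side_flux_le hΩ hu (n₂ := c / E) hmap (Or.inl rfl) (by norm_num) ?_ fun b hb => ?_
    · field_simp
      nlinarith
    · simpa [aff, mul_comm] using hleft b hb.1 hb.2
  obtain ⟨C₂, h₂⟩ : ∃ C, ∀ r, 0 < r → r < L → 2 * r < w →
      ∫ b in r..(w - r), coordX u (-1 * 1) (L, 0) (-1, 0) (c, 1) (r, b)
        ≤ -E * (w - 2 * r) + C * r := by
    refine side_flux_le hΩ hu (n₂ := -c / E) ?_ (Or.inl rfl) (by norm_num) ?_ fun b hb => ?_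
    · rintro ⟨a, b⟩ ⟨⟨h1, h2⟩, h3, h4⟩
      rw [hmem]
      simp only [aff, Prod.smul_mk, smul_eq_mul, Prod.mk_add_mk] at *
      refine ⟨?_, ?_, ?_, ?_⟩ <;> linarith
    · field_simp
      nlinarith
    · simpa [aff, mul_comm] using hright b hb.1 hb.2
  obtain ⟨C₃, h₃⟩ : ∃ C, ∀ r, 0 < r → r < w → 2 * r < L →
      ∫ b in r..(L - r), coordX u (-1 * -1) 0 (c, 1) (1, 0) (r, b)
        ≤ -1 * (L - 2 * r) + C * r := by
    refine side_flux_le hΩ hu (n₂ := c) ?_ (Or.inr rfl) (by norm_num) (by norm_num) fun b hb => ?_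
    · rintro ⟨a, b⟩ ⟨⟨h1, h2⟩, h3, h4⟩
      rw [hmem]
      simp only [aff, Prod.smul_mk, smul_eq_mul, Prod.fst_add,
        Prod.snd_add, Prod.fst_zero, Prod.snd_zero] at *
      refine ⟨?_, ?_, ?_, ?_⟩ <;> linarith
    · simpa [aff] using hbot b hb.1 hb.2
  obtain ⟨C₄, h₄⟩ : ∃ C, ∀ r, 0 < r → r < w → 2 * r < L →
      ∫ b in r..(L - r), coordX u (1 * -1) (c * w, w) (-c, -1) (1, 0) (r, b)
        ≤ -1 * (L - 2 * r) + C * r := by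
    refine side_flux_le hΩ hu (n₂ := -c) ?_ (Or.inr rfl) (by norm_num) (by norm_num) fun b hb => ?_
    · rintro ⟨a, b⟩ ⟨⟨h1, h2⟩, h3, h4⟩
      rw [hmem]
      simp only [aff, Prod.smul_mk, smul_eq_mul, Prod.mk_add_mk] at *
      refine ⟨?_, ?_, ?_, ?_⟩ <;> linarith
    · simpa [aff] using
        htop (c * w + b) (by linarith [hb.1]) (by linarith [hb.2])
  -- the fluxes in the common coordinates of `F` and `G`
  have e₁ : ∀ r b, coordX u (1 * 1) 0 (1, 0) (c, 1) (r, b) = F (r, b) := by simp [hF]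
  have e₂ : ∀ r b, coordX u (-1 * 1) (L, 0) (-1, 0) (c, 1) (r, b) = -F (L - r, b) := by
    intro r b
    simp [hF, coordX, aff, sub_eq_add_neg]
  have e₃ : ∀ r b, coordX u (-1 * -1) 0 (c, 1) (1, 0) (r, b) = -G (b, r) := by
    intro r b
    simp [hG, coordX, coordY, aff, add_comm]
  have e₄ : ∀ r b, coordX u (1 * -1) (c * w, w) (-c, -1) (1, 0) (r, b) = G (b, w - r) := by
    intro r b
    have : aff (c * w, w) (-c, -1) (1, 0) (r, b) = aff 0 (1, 0) (c, 1) (b, w - r) := by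
      simp only [aff, Prod.smul_mk, smul_eq_mul, Prod.mk_add_mk, zero_add]
      ext <;> simp <;> ring
    simp [hG, coordX, coordY, this]
  simp only [e₁, e₂, e₃, e₄, intervalIntegral.integral_neg] at h₁ h₂ h₃ h₄
  have hFE : ∀ q, |F q| ≤ E := fun q => by
    simpa [hF, hE, coordX] using abs_field_le u (aff 0 (1, 0) (c, 1) q) 1 c
  have hG1 : ∀ q, |G q| ≤ 1 := fun q => by
    simpa [hG, coordY] using abs_field_le u (aff 0 (1, 0) (c, 1) q) 0 1
  have hD : IsOpen (Ioo 0 L ×ˢ Ioo 0 w) := isOpen_Ioo.prod isOpen_Ioo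
  have key : ∀ r, 0 < r → 2 * r < w → 2 * r < L →
      0 ≤ 2 * (E * (w - 2 * r)) - 2 * (L - 2 * r) + (C₃ + C₄) * r ∧
      2 * (E * (w - 2 * r)) - 2 * (L - 2 * r) ≤ L * w + (C₁ + C₂) * r := by
    intro r hr hrw hrL
    have hsub : Icc r (L - r) ×ˢ Icc r (w - r) ⊆ Ioo 0 L ×ˢ Ioo 0 w := fun q hq =>
      ⟨⟨hr.trans_le hq.1.1, by linarith [hq.1.2]⟩, hr.trans_le hq.2.1, by linarith [hq.2.2]⟩
    have hFC := contDiffOn_coord hΩ hu (k := 1) hmap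
    have hFC' := contDiffOn_coord hΩ hu (k := -1) hmap
    have d1 := box_div_le hD hFC.1 hFC.2 (K := 1) (by linarith : r ≤ L - r)
      (by linarith : r ≤ w - r) hsub fun q hq => by
        rw [div_coord hΩ hu (hmap q hq)]
        have := one_le_areaW u (aff 0 (1, 0) (c, 1) q)
        rw [div_le_one (by linarith)]
        simpa using this
    have d2 := box_div_le hD hFC'.1 hFC'.2 (K := 0) (by linarith : r ≤ L - r)
      (by linarith : r ≤ w - r) hsub fun q hq => by
        rw [div_coord hΩ hu (hmap q hq)]
        have := areaW_pos u (aff 0 (1, 0) (c, 1) q)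
        refine div_nonpos_of_nonpos_of_nonneg ?_ this.le
        norm_num
    have nF : ∀ q, coordX u (-1) 0 (1, 0) (c, 1) q = -F q := fun q => by simp [hF, coordX]
    have nG : ∀ q, coordY u (-1) 0 (1, 0) (c, 1) q = -G q := fun q => by simp [hG, coordY]
    simp only [nF, nG, intervalIntegral.integral_neg] at d2
    rw [← hF, ← hG] at d1
    have f₁ := h₁ r hr (by linarith) hrw
    have f₂ := h₂ r hr (by linarith) hrw
    have f₃ := h₃ r hr (by linarith) hrL
    have f₄ := h₄ r hr (by linarith) hrL
    have g₁ := abs_le.1 (abs_integral_le_of_abs_le (f := fun b => F (r, b))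
      (by linarith : r ≤ w - r) fun b _ => hFE _)
    have g₂ := abs_le.1 (abs_integral_le_of_abs_le (f := fun b => F (L - r, b))
      (by linarith : r ≤ w - r) fun b _ => hFE _)
    have g₃ := abs_le.1 (abs_integral_le_of_abs_le (f := fun b => G (b, r))
      (by linarith : r ≤ L - r) fun b _ => hG1 _)
    have g₄ := abs_le.1 (abs_integral_le_of_abs_le (f := fun b => G (b, w - r))
      (by linarith : r ≤ L - r) fun b _ => hG1 _)
    have harea : (L - r - r) * (w - r - r) ≤ L * w := by gcongr <;> linarith
    constructor
    · linarith [g₁.1, g₂.2]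
    · linarith [g₃.2, g₄.1]
  have hev : ∀ᶠ r in nhdsWithin (0 : ℝ) (Ioi 0), 0 < r ∧ 2 * r < w ∧ 2 * r < L := by
    refine eventually_mem_nhdsWithin.and (Filter.Eventually.and ?_ ?_)
    · filter_upwards [mem_nhdsWithin_of_mem_nhds (gt_mem_nhds (half_pos hw))] with r hr
      linarith [show r < w / 2 from hr]
    · filter_upwards [mem_nhdsWithin_of_mem_nhds (gt_mem_nhds (half_pos hL))] with r hr
      linarith [show r < L / 2 from hr]
  have hwE : w / sin α = E * w := by rw [hEsin]; ring
  rw [hwE]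
  constructor
  · refine ge_of_tendsto (x := nhdsWithin (0 : ℝ) (Ioi 0))
      (f := fun r => 2 * (E * (w - 2 * r)) - 2 * (L - 2 * r) + (C₃ + C₄) * r) ?_
      (hev.mono fun r hr => (key r hr.1 hr.2.1 hr.2.2).1)
    refine Tendsto.mono_left ?_ nhdsWithin_le_nhds
    refine Continuous.tendsto' (by fun_prop) 0 _ ?_
    simp
  · refine le_of_tendsto_of_tendsto (b := nhdsWithin (0 : ℝ) (Ioi 0))
      (f := fun r => 2 * (E * (w - 2 * r)) - 2 * (L - 2 * r))
      (g := fun r => L * w + (C₁ + C₂) * r) ?_ ?_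
      (hev.mono fun r hr => (key r hr.1 hr.2.1 hr.2.2).2)
    · refine Tendsto.mono_left ?_ nhdsWithin_le_nhds
      refine Continuous.tendsto' (by fun_prop) 0 _ ?_
      simp
    · refine Tendsto.mono_left ?_ nhdsWithin_le_nhds
      refine Continuous.tendsto' (by fun_prop) 0 _ ?_
      simp

/-- `w / L(α,w) → sin α` as `w → 0`. -/
theorem scherk_ratio_tendsto_sin (α : ℝ) (hα : α ∈ Set.Ioo 0 π) :
    ∀ ε > (0 : ℝ), ∃ δ > (0 : ℝ), ∀ w L : ℝ, 0 < w → w < δ → 0 < L →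
      (∃ u : ℝ × ℝ → ℝ, ScherkBVP α w L u) → |w / L - Real.sin α| < ε := by
  intro ε hε
  refine ⟨ε, hε, fun w L hw hwε hL ⟨u, hu⟩ => ?_⟩
  have hs : 0 < sin α := sin_pos_of_pos_of_lt_pi hα.1 hα.2
  obtain ⟨h1, h2⟩ := scherk_flux_bounds hs hw hL hu
  have e : w / L - sin α = (2 * (w / sin α) - 2 * L) * (sin α / (2 * L)) := by
    field_simp
  have hk : 0 ≤ sin α / (2 * L) := by positivity
  have h3 := mul_nonneg h1 hk
  have h4 := mul_le_mul_of_nonneg_right h2 hk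
  have h5 : L * w * (sin α / (2 * L)) = w * sin α / 2 := by field_simp
  have h6 : w * sin α ≤ w := mul_le_of_le_one_right hw.le (sin_le_one α)
  rw [e, abs_of_nonneg h3]
  linarith
end
end

section
/- Let w > 0 and suppose u : (0,∞)×(0,w) → ℝ is a translator with boundary value −∞ at (x,0) for every x > 0 and boundary value +∞ at (x,w) for every x > 0. Then the upward unit normal of the graph of u converges to (0,−1,0) uniformly as x → ∞: for every ε > 0 there exists a > 0 such that for all (x,y) with x > a and 0 < y < w, the vector ν(x,y) = (−∂u/∂x(x,y), −∂u/∂y(x,y), 1)/√(1 + |∇u(x,y)|²) satisfies ‖ν(x,y) − (0,−1,0)‖ < ε. -/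
/-! Write `W = √(1 + |∇u|²)`, `q = u_y`.  The squared distance of the unit normal to `(0, -1, 0)` is
`2 (1 - q / W)`, twice the defect `df`, and it has to be shown that the defect tends to zero
uniformly.  The argument is quantitative and does not pass to limits of translators.

Flux.  The translator equation reads `div (∇u / W) = 1 / W`, so the field `∇u / W - (0, 1)` has
positive divergence, while its vertical component is `-df` and its horizontal component is at most
`√(2 df)`.  Testing with a long cutoff in `x` times a weight vanishing at the top shows that the
integral of the defect over a box of length `L` is `O(1 / L)`, independently of the vertical extent
(`defect_integral_le`); the boundary value `-∞` is used to cut off at the bottom without a boundary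
term.  Testing next with a short cutoff in `x` times a nondecreasing cutoff in `(u - c) / r` shows
that the integral of `W - q + r² q` over the part of the graph at height `c ± r` above
`[x₀ - r, x₀ + r]` is at most `ε + 8 r⁴` as soon as `x₀` is large, uniformly in `c` (`slab_small`).

From integrals to points.  Put `fz = (W - q) / (W + 1)`, which is comparable with the defect, and let
`Lop` be the second order part of the equation, which is `W²` times the drift Laplacian of the graph.
Differentiating the equation gives `Lop fz ≥ -2` (`Lop_fz_ge`), so `fz` plus the squared distance
`ro` in `ℝ³` to a point of the graph is a subsolution near that point.  As `(e^u / W) Lop` is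
symmetric in divergence form, Green's identity (`green`) against a regularized and truncated
fundamental solution `Psi` of `ro` yields a mean value inequality (`mean_value`): `fz` at a point is
at most `1024 / r²` times the integral of `W (fz + ro)` over the part of the graph within distance
`r`.  Both boundary values enter to see that this part of the graph stays away from the sides of the
strip.  There `W (fz + ro)` is at most a constant times the integrand of the slab estimate, so `fz`
is at most a constant times `(ε + r⁴) / r²`, which is small for a suitable choice of `r` and then
of `ε`. -/

open Real Filter MeasureTheory Set

noncomputable section

/-! ### First order calculus and the divergence theorem on a box -/

/-- `HP f z a b`: the function `f` is differentiable at `z` with partial derivatives `a`, `b`. -/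
def HP (f : ℝ × ℝ → ℝ) (z : ℝ × ℝ) (a b : ℝ) : Prop :=
  HasFDerivAt f (a • ContinuousLinearMap.fst ℝ ℝ ℝ + b • ContinuousLinearMap.snd ℝ ℝ ℝ) z

lemma HP.pdx_eq {f : ℝ × ℝ → ℝ} {z : ℝ × ℝ} {a b : ℝ} (h : HP f z a b) : pdx f z = a := by
  unfold pdx; rw [HasFDerivAt.fderiv h]; simp

lemma HP.pdy_eq {f : ℝ × ℝ → ℝ} {z : ℝ × ℝ} {a b : ℝ} (h : HP f z a b) : pdy f z = b := by
  unfold pdy; rw [HasFDerivAt.fderiv h]; simp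

lemma HP.of_diff {f : ℝ × ℝ → ℝ} {z : ℝ × ℝ} (h : DifferentiableAt ℝ f z) :
    HP f z (pdx f z) (pdy f z) := by
  have h1 := h.hasFDerivAt
  unfold HP
  refine h1.congr_fderiv ?_
  ext <;> simp [pdx, pdy]

lemma HP.congr' {f : ℝ × ℝ → ℝ} {z : ℝ × ℝ} {a b a' b' : ℝ} (h : HP f z a b)
    (ha : a = a') (hb : b = b') : HP f z a' b' := by
  subst ha; subst hb; exact h

lemma HP.congr_fun {f g : ℝ × ℝ → ℝ} {Ω : Set (ℝ × ℝ)} (hΩ : IsOpen Ω) {z : ℝ × ℝ} (hz : z ∈ Ω)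
    {a b : ℝ} (h : HP f z a b) (hfg : ∀ y ∈ Ω, g y = f y) : HP g z a b := by
  unfold HP at *
  refine h.congr_of_eventuallyEq ?_
  filter_upwards [hΩ.mem_nhds hz] with y hy using hfg y hy

lemma HP.const (c : ℝ) (z : ℝ × ℝ) : HP (fun _ => c) z 0 0 := by
  unfold HP
  refine (hasFDerivAt_const c z).congr_fderiv ?_
  ext <;> simp

lemma HP.fst (z : ℝ × ℝ) : HP (fun y => y.1) z 1 0 := by
  unfold HP
  refine (hasFDerivAt_fst (𝕜 := ℝ) (p := z)).congr_fderiv ?_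
  ext <;> simp

lemma HP.snd (z : ℝ × ℝ) : HP (fun y => y.2) z 0 1 := by
  unfold HP
  refine (hasFDerivAt_snd (𝕜 := ℝ) (p := z)).congr_fderiv ?_
  ext <;> simp

lemma HP.add {f g : ℝ × ℝ → ℝ} {z : ℝ × ℝ} {a b c d : ℝ} (hf : HP f z a b) (hg : HP g z c d) :
    HP (fun y => f y + g y) z (a + c) (b + d) := by
  unfold HP at *
  refine (HasFDerivAt.add hf hg).congr_fderiv ?_
  ext <;> simp

lemma HP.sub {f g : ℝ × ℝ → ℝ} {z : ℝ × ℝ} {a b c d : ℝ} (hf : HP f z a b) (hg : HP g z c d) :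
    HP (fun y => f y - g y) z (a - c) (b - d) := by
  unfold HP at *
  refine (HasFDerivAt.sub hf hg).congr_fderiv ?_
  ext <;> simp

lemma HP.neg {f : ℝ × ℝ → ℝ} {z : ℝ × ℝ} {a b : ℝ} (hf : HP f z a b) :
    HP (fun y => - f y) z (-a) (-b) := by
  unfold HP at *
  refine (HasFDerivAt.neg hf).congr_fderiv ?_
  ext <;> simp

lemma HP.mul {f g : ℝ × ℝ → ℝ} {z : ℝ × ℝ} {a b c d : ℝ} (hf : HP f z a b) (hg : HP g z c d) :
    HP (fun y => f y * g y) z (a * g z + f z * c) (b * g z + f z * d) := by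
  unfold HP at *
  refine (HasFDerivAt.mul hf hg).congr_fderiv ?_
  ext <;> simp <;> ring

lemma HP.cmul {f : ℝ × ℝ → ℝ} {z : ℝ × ℝ} {a b : ℝ} (k : ℝ) (hf : HP f z a b) :
    HP (fun y => k * f y) z (k * a) (k * b) :=
  ((HP.const k z).mul hf).congr' (by ring) (by ring)

lemma HP.sq {f : ℝ × ℝ → ℝ} {z : ℝ × ℝ} {a b : ℝ} (hf : HP f z a b) :
    HP (fun y => f y ^ 2) z (2 * f z * a) (2 * f z * b) := by
  have h := hf.mul hf
  simp only [← pow_two] at h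
  exact h.congr' (by ring) (by ring)

lemma HP.comp {f : ℝ × ℝ → ℝ} {z : ℝ × ℝ} {a b : ℝ} (hf : HP f z a b) {φ : ℝ → ℝ} {d : ℝ}
    (hφ : HasDerivAt φ d (f z)) : HP (fun y => φ (f y)) z (d * a) (d * b) := by
  unfold HP at *
  refine (hφ.comp_hasFDerivAt z hf).congr_fderiv ?_
  ext <;> simp

lemma HP.div {f g : ℝ × ℝ → ℝ} {z : ℝ × ℝ} {a b c d : ℝ} (hf : HP f z a b) (hg : HP g z c d)
    (h0 : g z ≠ 0) :
    HP (fun y => f y / g y) z ((a - f z / g z * c) / g z) ((b - f z / g z * d) / g z) := by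
  have h := hf.mul (hg.comp (hasDerivAt_inv h0))
  simp only [div_eq_mul_inv]
  refine h.congr' ?_ ?_ <;> field_simp <;> ring

lemma HP.sqrt {f : ℝ × ℝ → ℝ} {z : ℝ × ℝ} {a b : ℝ} (hf : HP f z a b) (h0 : f z ≠ 0) :
    HP (fun y => √(f y)) z (a / (2 * √(f z))) (b / (2 * √(f z))) :=
  (hf.comp (Real.hasDerivAt_sqrt h0)).congr' (by ring) (by ring)

/-- Partial derivatives of `C^{n+1}` functions on an open set are `C^n`. -/
lemma contDiffOn_pdx {f : ℝ × ℝ → ℝ} {Ω : Set (ℝ × ℝ)} (hΩ : IsOpen Ω) {n m : WithTop ℕ∞}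
    (h : ContDiffOn ℝ n f Ω) (hm : m + 1 ≤ n) : ContDiffOn ℝ m (pdx f) Ω := by
  have := h.fderiv_of_isOpen hΩ hm
  exact this.clm_apply contDiffOn_const

lemma contDiffOn_pdy {f : ℝ × ℝ → ℝ} {Ω : Set (ℝ × ℝ)} (hΩ : IsOpen Ω) {n m : WithTop ℕ∞}
    (h : ContDiffOn ℝ n f Ω) (hm : m + 1 ≤ n) : ContDiffOn ℝ m (pdy f) Ω := by
  have := h.fderiv_of_isOpen hΩ hm
  exact this.clm_apply contDiffOn_const

/-- Smoothness on a set. -/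
def Sm (Ω : Set (ℝ × ℝ)) (f : ℝ × ℝ → ℝ) : Prop := ContDiffOn ℝ (⊤ : ℕ∞) f Ω

lemma Sm.px {f : ℝ × ℝ → ℝ} {Ω : Set (ℝ × ℝ)} (hΩ : IsOpen Ω) (h : Sm Ω f) : Sm Ω (pdx f) :=
  contDiffOn_pdx hΩ h (by simp)

lemma Sm.py {f : ℝ × ℝ → ℝ} {Ω : Set (ℝ × ℝ)} (hΩ : IsOpen Ω) (h : Sm Ω f) : Sm Ω (pdy f) :=
  contDiffOn_pdy hΩ h (by simp)

lemma HP.of_contDiffOn {f : ℝ × ℝ → ℝ} {Ω : Set (ℝ × ℝ)} (hΩ : IsOpen Ω)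
    (h : ContDiffOn ℝ 1 f Ω) {z : ℝ × ℝ} (hz : z ∈ Ω) : HP f z (pdx f z) (pdy f z) :=
  HP.of_diff ((h.contDiffAt (hΩ.mem_nhds hz)).differentiableAt (by simp))

lemma Sm.of_le {f : ℝ × ℝ → ℝ} {Ω : Set (ℝ × ℝ)} (h : Sm Ω f) : ContDiffOn ℝ 1 f Ω :=
  ContDiffOn.of_le h (by exact_mod_cast le_top)

lemma Sm.hp {f : ℝ × ℝ → ℝ} {Ω : Set (ℝ × ℝ)} (hΩ : IsOpen Ω) (h : Sm Ω f) {z : ℝ × ℝ}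
    (hz : z ∈ Ω) : HP f z (pdx f z) (pdy f z) :=
  HP.of_contDiffOn hΩ h.of_le hz

/-- The divergence theorem on a closed box for a field whose relevant component vanishes on three
of the sides. -/
lemma integral_div_eq {Ω : Set (ℝ × ℝ)} (hΩ : IsOpen Ω) {V₁ V₂ : ℝ × ℝ → ℝ}
    (h₁ : ContDiffOn ℝ 1 V₁ Ω) (h₂ : ContDiffOn ℝ 1 V₂ Ω) {a b c d : ℝ} (hab : a ≤ b)
    (hcd : c ≤ d) (hbox : Icc a b ×ˢ Icc c d ⊆ Ω)
    (ha : ∀ y ∈ Icc c d, V₁ (a, y) = 0) (hb : ∀ y ∈ Icc c d, V₁ (b, y) = 0)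
    (hc : ∀ x ∈ Icc a b, V₂ (x, c) = 0) :
    ∫ z in Icc a b ×ˢ Icc c d, (pdx V₁ z + pdy V₂ z) = ∫ x in a..b, V₂ (x, d) := by
  have hbox' : Icc (a, c) (b, d) ⊆ Ω := by rwa [← Icc_prod_Icc]
  have hInt : IntegrableOn (fun z => pdx V₁ z + pdy V₂ z) (Icc (a, c) (b, d)) := by
    refine ContinuousOn.integrableOn_compact isCompact_Icc ?_
    exact ((contDiffOn_pdx hΩ h₁ (m := 0) (by simp)).continuousOn.add
      (contDiffOn_pdy hΩ h₂ (m := 0) (by simp)).continuousOn).mono hbox'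
  have hin : ∀ x ∈ Ioo a b ×ˢ Ioo c d, x ∈ Ω := fun x hx =>
    hbox ⟨Ioo_subset_Icc_self hx.1, Ioo_subset_Icc_self hx.2⟩
  have key := integral_divergence_prod_Icc_of_hasFDerivAt_of_le V₁ V₂ (fderiv ℝ V₁) (fderiv ℝ V₂)
    (a, c) (b, d) ⟨hab, hcd⟩ (h₁.continuousOn.mono hbox') (h₂.continuousOn.mono hbox')
    (fun x hx => ((h₁.contDiffAt (hΩ.mem_nhds (hin x hx))).differentiableAt
      (by simp)).hasFDerivAt)
    (fun x hx => ((h₂.contDiffAt (hΩ.mem_nhds (hin x hx))).differentiableAt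
      (by simp)).hasFDerivAt) hInt
  rw [Icc_prod_Icc]
  refine key.trans ?_
  have z1 : ∫ y in c..d, V₁ (b, y) = 0 := by
    rw [intervalIntegral.integral_congr (g := fun _ => (0 : ℝ))]
    · simp
    · intro y hy; rw [uIcc_of_le hcd] at hy; exact hb y hy
  have z2 : ∫ y in c..d, V₁ (a, y) = 0 := by
    rw [intervalIntegral.integral_congr (g := fun _ => (0 : ℝ))]
    · simp
    · intro y hy; rw [uIcc_of_le hcd] at hy; exact ha y hy
  have z4 : ∫ x in a..b, V₂ (x, c) = 0 := by
    rw [intervalIntegral.integral_congr (g := fun _ => (0 : ℝ))]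
    · simp
    · intro y hy; rw [uIcc_of_le hab] at hy; exact hc y hy
  simp only [z1, z2, z4]; simp

/-- The form in which the divergence theorem is used: a field with nonpositive total flux through
the boundary of the box `R`, whose divergence is at least `g·1_B − K`, yields `∫_B g ≤ ∫_R K`. -/
lemma integral_le_of_div {Ω : Set (ℝ × ℝ)} (hΩ : IsOpen Ω) {V₁ V₂ g K : ℝ × ℝ → ℝ}
    (h₁ : ContDiffOn ℝ 1 V₁ Ω) (h₂ : ContDiffOn ℝ 1 V₂ Ω) {a b c d : ℝ} (hab : a ≤ b)
    (hcd : c ≤ d) (hbox : Icc a b ×ˢ Icc c d ⊆ Ω)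
    (ha : ∀ y ∈ Icc c d, V₁ (a, y) = 0) (hb : ∀ y ∈ Icc c d, V₁ (b, y) = 0)
    (hc : ∀ x ∈ Icc a b, V₂ (x, c) = 0) (hd : ∀ x ∈ Icc a b, V₂ (x, d) ≤ 0)
    {B : Set (ℝ × ℝ)} (hB : MeasurableSet B) (hBR : B ⊆ Icc a b ×ˢ Icc c d)
    (hgi : IntegrableOn g B) (hK : ContinuousOn K Ω)
    (hR : ∀ z ∈ Icc a b ×ˢ Icc c d, 0 ≤ pdx V₁ z + pdy V₂ z + K z)
    (hgB : ∀ z ∈ B, g z ≤ pdx V₁ z + pdy V₂ z + K z) :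
    ∫ z in B, g z ≤ ∫ z in Icc a b ×ˢ Icc c d, K z := by
  have hRc : IsCompact (Icc a b ×ˢ Icc c d) := isCompact_Icc.prod isCompact_Icc
  have hE : ContinuousOn (fun z => pdx V₁ z + pdy V₂ z) Ω :=
    (contDiffOn_pdx hΩ h₁ (m := 0) (by simp)).continuousOn.add
      (contDiffOn_pdy hΩ h₂ (m := 0) (by simp)).continuousOn
  have hEi := (hE.mono hbox).integrableOn_compact hRc (μ := volume)
  have hKi := (hK.mono hbox).integrableOn_compact hRc (μ := volume)
  have hsum : IntegrableOn (fun z => pdx V₁ z + pdy V₂ z + K z) (Icc a b ×ˢ Icc c d) volume :=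
    hEi.add hKi
  have e0 : ∫ z in Icc a b ×ˢ Icc c d, (pdx V₁ z + pdy V₂ z) ≤ 0 := by
    rw [integral_div_eq hΩ h₁ h₂ hab hcd hbox ha hb hc,
      intervalIntegral.integral_of_le hab]
    exact setIntegral_nonpos measurableSet_Ioc (fun x hx => hd x (Ioc_subset_Icc_self hx))
  calc ∫ z in B, g z ≤ ∫ z in B, (pdx V₁ z + pdy V₂ z + K z) :=
        setIntegral_mono_on hgi (hsum.mono_set hBR) hB hgB
    _ ≤ ∫ z in Icc a b ×ˢ Icc c d, (pdx V₁ z + pdy V₂ z + K z) := by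
        refine setIntegral_mono_set hsum ?_ hBR.eventuallyLE
        exact (ae_restrict_iff' hRc.measurableSet).2 (ae_of_all _ hR)
    _ = (∫ z in Icc a b ×ˢ Icc c d, (pdx V₁ z + pdy V₂ z)) + ∫ z in Icc a b ×ˢ Icc c d, K z :=
        integral_add hEi hKi
    _ ≤ ∫ z in Icc a b ×ˢ Icc c d, K z := by linarith

/-! ### The linearised operator along a translator -/

/-- The area element `W = √(1 + |∇u|²)` of the graph of `u`. -/
def Wf (u : ℝ × ℝ → ℝ) (z : ℝ × ℝ) : ℝ := √(1 + pdx u z ^ 2 + pdy u z ^ 2)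

/-- The second order part `L f = (1 + u_y²) f_xx − 2 u_x u_y f_xy + (1 + u_x²) f_yy` of the
translator operator; up to the factor `W²` it is the drift Laplacian of the graph. -/
def Lop (u f : ℝ × ℝ → ℝ) (z : ℝ × ℝ) : ℝ :=
  (1 + pdy u z ^ 2) * pdx (pdx f) z - 2 * pdx u z * pdy u z * pdy (pdx f) z
    + (1 + pdx u z ^ 2) * pdy (pdy f) z

/-- The bilinear form `a(∇f, ∇g)` with the coefficient matrix of `Lop`. -/
def Gop (u f g : ℝ × ℝ → ℝ) (z : ℝ × ℝ) : ℝ :=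
  (1 + pdy u z ^ 2) * (pdx f z * pdx g z)
    - pdx u z * pdy u z * (pdx f z * pdy g z + pdy f z * pdx g z)
    + (1 + pdx u z ^ 2) * (pdy f z * pdy g z)

lemma Wf_sq (u : ℝ × ℝ → ℝ) (z : ℝ × ℝ) : Wf u z ^ 2 = 1 + pdx u z ^ 2 + pdy u z ^ 2 :=
  Real.sq_sqrt (by positivity)

lemma Wf_pos (u : ℝ × ℝ → ℝ) (z : ℝ × ℝ) : 0 < Wf u z := Real.sqrt_pos.2 (by positivity)

lemma one_le_Wf (u : ℝ × ℝ → ℝ) (z : ℝ × ℝ) : 1 ≤ Wf u z :=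
  Real.one_le_sqrt.2 (by nlinarith [sq_nonneg (pdx u z), sq_nonneg (pdy u z)])

lemma abs_pdy_lt_Wf (u : ℝ × ℝ → ℝ) (z : ℝ × ℝ) : |pdy u z| < Wf u z :=
  abs_lt_of_sq_lt_sq (by rw [Wf_sq]; nlinarith [sq_nonneg (pdx u z)]) (Wf_pos u z).le

lemma Sm.Wf {u : ℝ × ℝ → ℝ} {Ω : Set (ℝ × ℝ)} (hΩ : IsOpen Ω) (h : Sm Ω u) : Sm Ω (Wf u) := by
  have h1 : ContDiffOn ℝ (⊤ : ℕ∞) (pdx u) Ω := h.px hΩ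
  have h2 : ContDiffOn ℝ (⊤ : ℕ∞) (pdy u) Ω := h.py hΩ
  have h3 : ContDiffOn ℝ (⊤ : ℕ∞) (fun z => 1 + pdx u z ^ 2 + pdy u z ^ 2) Ω :=
    (contDiffOn_const.add (h1.pow 2)).add (h2.pow 2)
  exact h3.sqrt (fun z _ => by positivity)

lemma Sm.two {f : ℝ × ℝ → ℝ} {Ω : Set (ℝ × ℝ)} (h : Sm Ω f) : ContDiffOn ℝ 2 f Ω :=
  ContDiffOn.of_le h (WithTop.coe_le_coe.2 (le_top : (2 : ℕ∞) ≤ ⊤))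

section C2

variable {Ω : Set (ℝ × ℝ)} {f g u : ℝ × ℝ → ℝ} {z : ℝ × ℝ}

lemma C2.hp (hΩ : IsOpen Ω) (h : ContDiffOn ℝ 2 f Ω) (hz : z ∈ Ω) :
    HP f z (pdx f z) (pdy f z) :=
  HP.of_contDiffOn hΩ (h.of_le (by norm_num)) hz

lemma C2.px (hΩ : IsOpen Ω) (h : ContDiffOn ℝ 2 f Ω) : ContDiffOn ℝ 1 (pdx f) Ω :=
  contDiffOn_pdx hΩ h (by norm_num)

lemma C2.py (hΩ : IsOpen Ω) (h : ContDiffOn ℝ 2 f Ω) : ContDiffOn ℝ 1 (pdy f) Ω :=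
  contDiffOn_pdy hΩ h (by norm_num)

lemma C2.symm (hΩ : IsOpen Ω) (h : ContDiffOn ℝ 2 f Ω) (hz : z ∈ Ω) :
    pdx (pdy f) z = pdy (pdx f) z := by
  have h1 : ContDiffAt ℝ 2 f z := h.contDiffAt (hΩ.mem_nhds hz)
  have h2 := h1.isSymmSndFDerivAt (by simp)
  have h3 : DifferentiableAt ℝ (fderiv ℝ f) z :=
    (h1.fderiv_right (m := 1) (by norm_num)).differentiableAt (by simp)
  have e1 : pdx (pdy f) z = fderiv ℝ (fderiv ℝ f) z (1, 0) (0, 1) := by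
    have : HasFDerivAt (pdy f) ((fderiv ℝ (fderiv ℝ f) z).flip (0, 1)) z := by
      have := h3.hasFDerivAt.clm_apply (hasFDerivAt_const ((0 : ℝ), (1 : ℝ)) z)
      refine this.congr_fderiv ?_
      ext <;> simp
    unfold pdx; rw [this.fderiv]; rfl
  have e2 : pdy (pdx f) z = fderiv ℝ (fderiv ℝ f) z (0, 1) (1, 0) := by
    have : HasFDerivAt (pdx f) ((fderiv ℝ (fderiv ℝ f) z).flip (1, 0)) z := by
      have := h3.hasFDerivAt.clm_apply (hasFDerivAt_const ((1 : ℝ), (0 : ℝ)) z)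
      refine this.congr_fderiv ?_
      ext <;> simp
    unfold pdy; rw [this.fderiv]; rfl
  rw [e1, e2, h2]

lemma C2.hpx (hΩ : IsOpen Ω) (h : ContDiffOn ℝ 2 f Ω) (hz : z ∈ Ω) :
    HP (pdx f) z (pdx (pdx f) z) (pdy (pdx f) z) :=
  HP.of_contDiffOn hΩ (C2.px hΩ h) hz

lemma C2.hpy (hΩ : IsOpen Ω) (h : ContDiffOn ℝ 2 f Ω) (hz : z ∈ Ω) :
    HP (pdy f) z (pdy (pdx f) z) (pdy (pdy f) z) :=
  (HP.of_contDiffOn hΩ (C2.py hΩ h) hz).congr' (C2.symm hΩ h hz) rfl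

/-- `Lop` may be computed from any functions that represent the first derivatives on `Ω`. -/
lemma Lop_eq (hΩ : IsOpen Ω) (hz : z ∈ Ω) {fx fy : ℝ × ℝ → ℝ} {fxx fxy fyx fyy : ℝ}
    (h : ∀ y ∈ Ω, HP f y (fx y) (fy y)) (hx : HP fx z fxx fxy) (hy : HP fy z fyx fyy) :
    Lop u f z = (1 + pdy u z ^ 2) * fxx - 2 * pdx u z * pdy u z * fxy
      + (1 + pdx u z ^ 2) * fyy := by
  have e1 : HP (pdx f) z fxx fxy := hx.congr_fun hΩ hz (fun y hy => (h y hy).pdx_eq)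
  have e2 : HP (pdy f) z fyx fyy := hy.congr_fun hΩ hz (fun y hy => (h y hy).pdy_eq)
  unfold Lop
  rw [e1.pdx_eq, e1.pdy_eq, e2.pdy_eq]

lemma Lop_congr (hΩ : IsOpen Ω) (hz : z ∈ Ω) (hg : ContDiffOn ℝ 2 g Ω)
    (h : ∀ y ∈ Ω, f y = g y) : Lop u f z = Lop u g z := by
  rw [Lop_eq hΩ hz (fun y hy => (C2.hp hΩ hg hy).congr_fun hΩ hy h) (C2.hpx hΩ hg hz)
    (C2.hpy hΩ hg hz)]
  rfl

lemma Lop_add (hΩ : IsOpen Ω) (hz : z ∈ Ω) (hf : ContDiffOn ℝ 2 f Ω) (hg : ContDiffOn ℝ 2 g Ω) :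
    Lop u (fun y => f y + g y) z = Lop u f z + Lop u g z := by
  rw [Lop_eq hΩ hz (fun y hy => (C2.hp hΩ hf hy).add (C2.hp hΩ hg hy))
    ((C2.hpx hΩ hf hz).add (C2.hpx hΩ hg hz)) ((C2.hpy hΩ hf hz).add (C2.hpy hΩ hg hz))]
  unfold Lop; ring

lemma Lop_sub (hΩ : IsOpen Ω) (hz : z ∈ Ω) (hf : ContDiffOn ℝ 2 f Ω) (hg : ContDiffOn ℝ 2 g Ω) :
    Lop u (fun y => f y - g y) z = Lop u f z - Lop u g z := by
  rw [Lop_eq hΩ hz (fun y hy => (C2.hp hΩ hf hy).sub (C2.hp hΩ hg hy))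
    ((C2.hpx hΩ hf hz).sub (C2.hpx hΩ hg hz)) ((C2.hpy hΩ hf hz).sub (C2.hpy hΩ hg hz))]
  unfold Lop; ring

lemma Lop_const (c : ℝ) : Lop u (fun _ => c) z = 0 := by
  rw [Lop_eq isOpen_univ (mem_univ z) (fun y _ => HP.const c y) (HP.const 0 z) (HP.const 0 z)]
  ring

lemma Lop_mul (hΩ : IsOpen Ω) (hz : z ∈ Ω) (hf : ContDiffOn ℝ 2 f Ω) (hg : ContDiffOn ℝ 2 g Ω) :
    Lop u (fun y => f y * g y) z
      = f z * Lop u g z + g z * Lop u f z + 2 * Gop u f g z := by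
  rw [Lop_eq hΩ hz (fun y hy => (C2.hp hΩ hf hy).mul (C2.hp hΩ hg hy))
    (((C2.hpx hΩ hf hz).mul (C2.hp hΩ hg hz)).add ((C2.hp hΩ hf hz).mul (C2.hpx hΩ hg hz)))
    (((C2.hpy hΩ hf hz).mul (C2.hp hΩ hg hz)).add ((C2.hp hΩ hf hz).mul (C2.hpy hΩ hg hz)))]
  unfold Lop Gop; ring

lemma Lop_comp (hΩ : IsOpen Ω) (hz : z ∈ Ω) (hf : ContDiffOn ℝ 2 f Ω) {φ φ' : ℝ → ℝ} {d : ℝ}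
    (h1 : ∀ y ∈ Ω, HasDerivAt φ (φ' (f y)) (f y)) (h2 : HasDerivAt φ' d (f z)) :
    Lop u (fun y => φ (f y)) z = φ' (f z) * Lop u f z + d * Gop u f f z := by
  rw [Lop_eq hΩ hz (fun y hy => (C2.hp hΩ hf hy).comp (h1 y hy))
    (((C2.hp hΩ hf hz).comp h2).mul (C2.hpx hΩ hf hz))
    (((C2.hp hΩ hf hz).comp h2).mul (C2.hpy hΩ hf hz))]
  unfold Lop Gop; ring

end C2

/-! ### An almost-subsolution measuring the tilt of the normal -/

/-- `f₀ = (W − u_y)/(W + 1) = (1 + ν_y)/(1 + ν_z)`, where `ν` is the upward unit normal.  It is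
comparable with `|ν − (0,−1,0)|²`. -/
def fz (u : ℝ × ℝ → ℝ) (z : ℝ × ℝ) : ℝ := (Wf u z - pdy u z) / (Wf u z + 1)

section Translator

variable {Ω : Set (ℝ × ℝ)} {u : ℝ × ℝ → ℝ} {z : ℝ × ℝ}

lemma Sm.fz (hΩ : IsOpen Ω) (h : Sm Ω u) : Sm Ω (fz u) := by
  have h1 : ContDiffOn ℝ (⊤ : ℕ∞) (_root_.Wf u) Ω := h.Wf hΩ
  have h2 : ContDiffOn ℝ (⊤ : ℕ∞) (pdy u) Ω := h.py hΩ
  exact (h1.sub h2).div (h1.add contDiffOn_const)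
    (fun z _ => by have := Wf_pos u z; positivity)

lemma HP_Wf (hΩ : IsOpen Ω) (h : Sm Ω u) (hz : z ∈ Ω) :
    HP (Wf u) z ((pdx u z * pdx (pdx u) z + pdy u z * pdy (pdx u) z) / Wf u z)
      ((pdx u z * pdy (pdx u) z + pdy u z * pdy (pdy u) z) / Wf u z) := by
  have h1 := C2.hpx hΩ h.two hz
  have h2 := C2.hpy hΩ h.two hz
  have h3 := (((HP.const 1 z).add h1.sq).add h2.sq).sqrt (by positivity)
  have hW := Wf_pos u z
  refine HP.congr' (f := Wf u) h3 ?_ ?_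
  · change _ / (2 * Wf u z) = _; field_simp; ring
  · change _ / (2 * Wf u z) = _; field_simp; ring

/-- The translator equation differentiated in `x`. -/
lemma Lop_pdx (hΩ : IsOpen Ω) (hu : IsTranslatorOn Ω u) (hz : z ∈ Ω) :
    Lop u (pdx u) z = 2 * pdx u z * pdx (pdx u) z + 2 * pdy u z * pdy (pdx u) z
      - 2 * pdx u z * (pdx (pdx u) z * pdy (pdy u) z - pdy (pdx u) z ^ 2) := by
  have hs : Sm Ω u := hu.1
  have p := C2.hpx hΩ hs.two hz
  have q := C2.hpy hΩ hs.two hz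
  have r := ((hs.px hΩ).px hΩ).hp hΩ hz
  have s := ((hs.px hΩ).py hΩ).hp hΩ hz
  have t := ((hs.py hΩ).py hΩ).hp hΩ hz
  have e0 := (((((HP.const 1 z).add q.sq).mul r).sub ((((HP.const 2 z).mul p).mul q).mul s)).add
    (((HP.const 1 z).add p.sq).mul t)).sub (((HP.const 1 z).add p.sq).add q.sq)
  have e1 : HP (fun _ => (0 : ℝ)) z _ _ := e0.congr_fun hΩ hz
    (fun y hy => by have := hu.2 y hy; linarith)
  have e2 := e1.pdx_eq.symm.trans (HP.const 0 z).pdx_eq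
  have s1 : pdx (pdy (pdx u)) z = pdy (pdx (pdx u)) z := C2.symm hΩ (hs.px hΩ).two hz
  have s2 : pdx (pdy (pdy u)) z = pdy (pdy (pdx u)) z := by
    rw [C2.symm hΩ (hs.py hΩ).two hz]
    exact (((hs.px hΩ).py hΩ).hp hΩ hz |>.congr_fun hΩ hz
      (fun y hy => C2.symm hΩ hs.two hy)).pdy_eq
  rw [s1, s2] at e2
  unfold Lop
  linear_combination e2

/-- The translator equation differentiated in `y`. -/
lemma Lop_pdy (hΩ : IsOpen Ω) (hu : IsTranslatorOn Ω u) (hz : z ∈ Ω) :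
    Lop u (pdy u) z = 2 * pdx u z * pdy (pdx u) z + 2 * pdy u z * pdy (pdy u) z
      - 2 * pdy u z * (pdx (pdx u) z * pdy (pdy u) z - pdy (pdx u) z ^ 2) := by
  have hs : Sm Ω u := hu.1
  have p := C2.hpx hΩ hs.two hz
  have q := C2.hpy hΩ hs.two hz
  have r := ((hs.px hΩ).px hΩ).hp hΩ hz
  have s := ((hs.px hΩ).py hΩ).hp hΩ hz
  have t := ((hs.py hΩ).py hΩ).hp hΩ hz
  have e0 := (((((HP.const 1 z).add q.sq).mul r).sub ((((HP.const 2 z).mul p).mul q).mul s)).add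
    (((HP.const 1 z).add p.sq).mul t)).sub (((HP.const 1 z).add p.sq).add q.sq)
  have e1 : HP (fun _ => (0 : ℝ)) z _ _ := e0.congr_fun hΩ hz
    (fun y hy => by have := hu.2 y hy; linarith)
  have e2 := e1.pdy_eq.symm.trans (HP.const 0 z).pdy_eq
  have s1 : pdx (pdy (pdx u)) z = pdy (pdx (pdx u)) z := C2.symm hΩ (hs.px hΩ).two hz
  have s3 : ∀ y ∈ Ω, pdx (pdy u) y = pdy (pdx u) y := fun y hy => C2.symm hΩ hs.two hy
  have s2 := ((hs.px hΩ).py hΩ).hp hΩ hz |>.congr_fun hΩ hz s3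
  unfold Lop
  rw [s2.pdx_eq, s2.pdy_eq, s1]
  linear_combination e2

lemma Lop_Wf (hΩ : IsOpen Ω) (hu : IsTranslatorOn Ω u) (hz : z ∈ Ω) :
    Wf u z * Lop u (Wf u) z + Gop u (Wf u) (Wf u) z
      = pdx u z * Lop u (pdx u) z + pdy u z * Lop u (pdy u) z
        + Gop u (pdx u) (pdx u) z + Gop u (pdy u) (pdy u) z := by
  have hs : Sm Ω u := hu.1
  have hW := (hs.Wf hΩ).two
  have hp := (hs.px hΩ).two
  have hq := (hs.py hΩ).two
  have e1 := Lop_mul (u := u) hΩ hz hW hW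
  have e2 := Lop_mul (u := u) hΩ hz hp hp
  have e3 := Lop_mul (u := u) hΩ hz hq hq
  have e4 := Lop_add (u := u) hΩ hz (contDiffOn_const (c := (1 : ℝ))) (hp.mul hp)
  have e5 := Lop_add (u := u) hΩ hz ((contDiffOn_const (c := (1 : ℝ))).add (hp.mul hp))
    (hq.mul hq)
  have e6 : Lop u (fun y => Wf u y * Wf u y) z
      = Lop u (fun y => 1 + pdx u y * pdx u y + pdy u y * pdy u y) z :=
    Lop_congr hΩ hz (((contDiffOn_const (c := (1 : ℝ))).add (hp.mul hp)).add (hq.mul hq))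
      (fun y _ => by have := Wf_sq u y; linarith)
  have e7 := Lop_const (u := u) (z := z) 1
  linarith

/-- `L f₀` in terms of `L W` and `L u_y`. -/
lemma Lop_fz (hΩ : IsOpen Ω) (hu : IsTranslatorOn Ω u) (hz : z ∈ Ω) :
    (Wf u z + 1) * Lop u (fz u) z
      = (1 - fz u z) * Lop u (Wf u) z - Lop u (pdy u) z - 2 * Gop u (fz u) (Wf u) z := by
  have hs : Sm Ω u := hu.1
  have hW := (hs.Wf hΩ).two
  have hq := (hs.py hΩ).two
  have hf := (hs.fz hΩ).two
  have e1 := Lop_mul (u := u) hΩ hz hf (hW.add (contDiffOn_const (c := (1 : ℝ))))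
  have e2 := Lop_sub (u := u) hΩ hz hW hq
  have e3 := Lop_add (u := u) hΩ hz hW (contDiffOn_const (c := (1 : ℝ)))
  have e4 := Lop_congr (u := u) hΩ hz (hW.sub hq)
    (f := fun y => fz u y * (Wf u y + 1)) (fun y _ => by
      have := Wf_pos u y
      simp only [fz]; field_simp)
  have e5 := Lop_const (u := u) (z := z) 1
  have e6 : Gop u (fz u) (fun y => Wf u y + 1) z = Gop u (fz u) (Wf u) z := by
    have := ((hs.Wf hΩ).hp hΩ hz).add (HP.const 1 z)
    unfold Gop; rw [this.pdx_eq, this.pdy_eq]; simp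
  change Lop u (fun y => fz u y * (Wf u y + 1)) z = Lop u (fun y => Wf u y - pdy u y) z at e4
  change Lop u (fun y => fz u y * (Wf u y + 1)) z = fz u z * Lop u (fun y => Wf u y + 1) z
    + (Wf u z + 1) * Lop u (fz u) z + 2 * Gop u (fz u) (fun y => Wf u y + 1) z at e1
  rw [e6] at e1
  linear_combination e4 - e1 + e2 - fz u z * e3 - fz u z * e5

/-- The quadratic inequality behind `L f₀ ≥ −2`.  In the coordinates `τ`, `b` of the traceless
part of the second fundamental form the linear part is `W² c₁ τ + W c₂ b` with
`c₁² + c₂² = 2 (W − q) (W − 1) / W² ≤ 4`. -/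
lemma jet_ineq {p q r s t W : ℝ} (hW : W ^ 2 = 1 + p ^ 2 + q ^ 2) (hW0 : 0 < W) (hqW : |q| < W)
    (hE : (1 + q ^ 2) * r - 2 * p * q * s + (1 + p ^ 2) * t = 1 + p ^ 2 + q ^ 2) :
    -(3 / 2) * W ^ 2 ≤ -2 * (r * t - s ^ 2) - 2 * (p * s + q * t)
      + 2 * (1 + q) * (p ^ 2 * r + 2 * p * q * s + q ^ 2 * t) / (W * (W + 1)) + W * (1 + q) := by
  have hk : (0 : ℝ) < 1 + q ^ 2 := by positivity
  obtain ⟨τ, hτ⟩ : ∃ τ, τ = 1 / 2 - t / (1 + q ^ 2) := ⟨_, rfl⟩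
  obtain ⟨b, hb⟩ : ∃ b, b = s - p * q * t / (1 + q ^ 2) := ⟨_, rfl⟩
  have ht : t = (1 + q ^ 2) * (1 / 2 - τ) := by rw [hτ]; field_simp; ring
  have hs : s = b + p * q * (1 / 2 - τ) := by rw [hb, ht]; field_simp; ring
  have hr : r = (1 + p ^ 2 + q ^ 2 - (1 + p ^ 2) * t + 2 * p * q * s) / (1 + q ^ 2) := by
    field_simp; linarith
  have hγ : p ^ 2 * r + 2 * p * q * s + q ^ 2 * t = W ^ 2 * ((W ^ 2 - 1) / 2
      + ((p ^ 2 - q ^ 2 * W ^ 2) * τ + 2 * p * q * b) / (1 + q ^ 2)) := by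
    rw [hr, hs, ht, hW]; field_simp; ring
  have hg : p * s + q * t = p * b + q * W ^ 2 * (1 / 2 - τ) := by
    rw [hs, ht, hW]; ring
  have hdet : W ^ 2 - 4 * (r * t - s ^ 2) = 4 * (W ^ 2 * τ ^ 2 + b ^ 2) := by
    rw [hr, hs, ht, hW]; field_simp; ring
  obtain ⟨c1, hc1⟩ : ∃ c1, c1 = q + (1 + q) * (p ^ 2 - q ^ 2 * W ^ 2) / ((1 + q ^ 2) * W * (W + 1)) :=
    ⟨_, rfl⟩
  obtain ⟨c2, hc2⟩ : ∃ c2, c2 = -1 / W + 2 * q * (1 + q) / ((1 + q ^ 2) * (W + 1)) := ⟨_, rfl⟩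
  have hp2 : p ^ 2 = W ^ 2 - 1 - q ^ 2 := by linarith
  have hcc : c1 ^ 2 + p ^ 2 * c2 ^ 2 = 2 * (W - q) * (W - 1) / W ^ 2 := by
    rw [hc1, hc2, hp2]; field_simp; ring
  have hcc4 : c1 ^ 2 + (p * c2) ^ 2 ≤ 4 := by
    rw [mul_pow, hcc, div_le_iff₀ (by positivity)]
    have := abs_lt.1 hqW
    linarith [mul_pos hW0 (by linarith : 0 < W + q)]
  have hy : 2 * (1 + q) * (p ^ 2 * r + 2 * p * q * s + q ^ 2 * t) / (W * (W + 1))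
      = 2 * (W ^ 2 * c1 * τ + W * (p * c2) * b) + 2 * (p * s + q * t) + W ^ 2 - W * (1 + q) := by
    rw [hγ, hg, hc1, hc2]; field_simp; ring
  rw [hy]
  have h1 : (c1 * (W * τ) + p * c2 * b) ^ 2 ≤ 4 * ((W * τ) ^ 2 + b ^ 2) := by
    linarith [sq_nonneg (c1 * b - p * c2 * (W * τ)), mul_nonneg (sub_nonneg.2 hcc4)
      (by positivity : 0 ≤ (W * τ) ^ 2 + b ^ 2)]
  linarith [sq_nonneg (c1 * (W * τ) + p * c2 * b + 2 * W)]

/-- `f₀` is almost a subsolution. -/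
lemma Lop_fz_ge (hΩ : IsOpen Ω) (hu : IsTranslatorOn Ω u) (hz : z ∈ Ω) : -2 ≤ Lop u (fz u) z := by
  have hs : Sm Ω u := hu.1
  have hE := hu.2 z hz
  have e1 := Lop_fz hΩ hu hz
  have e2 := Lop_Wf hΩ hu hz
  rw [Lop_pdx hΩ hu hz, Lop_pdy hΩ hu hz] at e2
  rw [Lop_pdy hΩ hu hz] at e1
  have hW := Wf_pos u z
  have hWf := HP_Wf hΩ hs hz
  have hp := C2.hpx hΩ hs.two hz
  have hq := C2.hpy hΩ hs.two hz
  have hff := (hWf.sub hq).div (hWf.add (HP.const 1 z)) (by positivity)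
  have hff : HP (fz u) z _ _ := hff
  have hJ := jet_ineq (Wf_sq u z) hW (abs_pdy_lt_Wf u z) hE
  have hf : fz u z = (Wf u z - pdy u z) / (Wf u z + 1) := rfl
  rw [← hf] at hff
  unfold Gop at e1 e2
  rw [hff.pdx_eq, hff.pdy_eq, hWf.pdx_eq, hWf.pdy_eq] at e1
  rw [hWf.pdx_eq, hWf.pdy_eq, hp.pdx_eq, hp.pdy_eq, hq.pdx_eq, hq.pdy_eq] at e2
  have hWs := Wf_sq u z
  generalize Lop u (fz u) z = Lf at *
  generalize Lop u (Wf u) z = LW at *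
  generalize fz u z = f at *
  generalize Wf u z = W at *
  generalize pdy (pdx u) z = s at *
  generalize pdx (pdx u) z = r at *
  generalize pdy (pdy u) z = t at *
  generalize pdx u z = p at *
  generalize pdy u z = q at *
  clear hff hp hq hWf
  have hF : f * (W + 1) = W - q := by rw [hf]; field_simp
  have hGWW : (1 + q ^ 2) * ((p * r + q * s) * (p * r + q * s))
      - p * q * ((p * r + q * s) * (p * s + q * t) + (p * s + q * t) * (p * r + q * s))
      + (1 + p ^ 2) * ((p * s + q * t) * (p * s + q * t))
      = W ^ 2 * ((p ^ 2 * r + 2 * p * q * s + q ^ 2 * t) - (r * t - s ^ 2) * (W ^ 2 - 1)) := by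
    rw [hWs]; linear_combination (p ^ 2 * r + 2 * p * q * s + q ^ 2 * t) * hE
  have hGWq : (1 + q ^ 2) * ((p * r + q * s) * s)
      - p * q * ((p * r + q * s) * t + (p * s + q * t) * s)
      + (1 + p ^ 2) * ((p * s + q * t) * t)
      = W ^ 2 * ((p * s + q * t) - (r * t - s ^ 2) * q) := by
    rw [hWs]; linear_combination (p * s + q * t) * hE
  have hLW : W * LW = 2 * (p ^ 2 * r + 2 * p * q * s + q ^ 2 * t) + W ^ 2
      - 2 * W ^ 2 * (r * t - s ^ 2) := by
    have e3 : W * LW + ((1 + q ^ 2) * ((p * r + q * s) * (p * r + q * s))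
      - p * q * ((p * r + q * s) * (p * s + q * t) + (p * s + q * t) * (p * r + q * s))
      + (1 + p ^ 2) * ((p * s + q * t) * (p * s + q * t))) / W ^ 2 = p * (2 * p * r + 2 * q * s - 2 * p * (r * t - s ^ 2))
        + q * (2 * p * s + 2 * q * t - 2 * q * (r * t - s ^ 2))
        + ((1 + q ^ 2) * (r * r) - p * q * (r * s + s * r) + (1 + p ^ 2) * (s * s))
        + ((1 + q ^ 2) * (s * s) - p * q * (s * t + t * s) + (1 + p ^ 2) * (t * t)) := by
      rw [← e2]; field_simp
    rw [hGWW, mul_div_cancel_left₀ _ (by positivity)] at e3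
    rw [hWs] at e3 ⊢
    linear_combination e3 + (r + t + 1) * hE
  have e4 : (W + 1) * Lf = (1 - f) * LW - (2 * p * s + 2 * q * t - 2 * q * (r * t - s ^ 2))
      - 2 * ((1 - f) * (((1 + q ^ 2) * ((p * r + q * s) * (p * r + q * s))
      - p * q * ((p * r + q * s) * (p * s + q * t) + (p * s + q * t) * (p * r + q * s))
      + (1 + p ^ 2) * ((p * s + q * t) * (p * s + q * t))) / W ^ 2) - ((1 + q ^ 2) * ((p * r + q * s) * s)
      - p * q * ((p * r + q * s) * t + (p * s + q * t) * s)
      + (1 + p ^ 2) * ((p * s + q * t) * t)) / W) / (W + 1) := by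
    rw [e1]; field_simp; ring
  rw [hGWW, hGWq, mul_div_cancel_left₀ _ (by positivity)] at e4
  have hT : (W + 1) ^ 2 * Lf = -2 * (r * t - s ^ 2) - 2 * (p * s + q * t)
      + 2 * (1 + q) * (p ^ 2 * r + 2 * p * q * s + q ^ 2 * t) / (W * (W + 1)) + W * (1 + q) := by
    have hLW' : LW = (2 * (p ^ 2 * r + 2 * p * q * s + q ^ 2 * t) + W ^ 2
      - 2 * W ^ 2 * (r * t - s ^ 2)) / W := by rw [← hLW]; field_simp
    have hf1 : 1 - f = (1 + q) / (W + 1) := by rw [hf]; field_simp; ring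
    rw [pow_two, mul_assoc, e4, hLW', hf1]
    field_simp
    ring
  have : 0 ≤ (W + 1) ^ 2 * (Lf + 2) := by nlinarith
  have := nonneg_of_mul_nonneg_right this (by positivity)
  linarith

end Translator

/-! ### Green's identity -/

section Green

variable {Ω : Set (ℝ × ℝ)} {u f g : ℝ × ℝ → ℝ} {z : ℝ × ℝ}

/-- Coefficients of the weighted divergence form of `Lop`: the columns of
`(e^u / W) (a_ij)` are divergence free. -/
def G11 (u : ℝ × ℝ → ℝ) (z : ℝ × ℝ) : ℝ := exp (u z) * (1 + pdy u z ^ 2) / Wf u z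

/-- Off-diagonal coefficient of the weighted divergence form of `Lop`, see `G11`. -/
def G12 (u : ℝ × ℝ → ℝ) (z : ℝ × ℝ) : ℝ := -(exp (u z) * (pdx u z * pdy u z)) / Wf u z

/-- Second diagonal coefficient of the weighted divergence form of `Lop`, see `G11`. -/
def G22 (u : ℝ × ℝ → ℝ) (z : ℝ × ℝ) : ℝ := exp (u z) * (1 + pdx u z ^ 2) / Wf u z

lemma Sm.G11 (hΩ : IsOpen Ω) (h : Sm Ω u) : ContDiffOn ℝ 1 (G11 u) Ω :=
  (h.of_le.exp.mul (contDiffOn_const.add ((h.py hΩ).of_le.pow 2))).div (h.Wf hΩ).of_le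
    (fun z _ => (Wf_pos u z).ne')

lemma Sm.G12 (hΩ : IsOpen Ω) (h : Sm Ω u) : ContDiffOn ℝ 1 (G12 u) Ω :=
  (h.of_le.exp.mul ((h.px hΩ).of_le.mul (h.py hΩ).of_le)).neg.div (h.Wf hΩ).of_le
    (fun z _ => (Wf_pos u z).ne')

lemma Sm.G22 (hΩ : IsOpen Ω) (h : Sm Ω u) : ContDiffOn ℝ 1 (G22 u) Ω :=
  (h.of_le.exp.mul (contDiffOn_const.add ((h.px hΩ).of_le.pow 2))).div (h.Wf hΩ).of_le
    (fun z _ => ne_of_gt (Wf_pos u z))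

/-- The translator equation makes `e^u` the integrating factor for which `Lop` has divergence
form. -/
lemma G_div_free (hΩ : IsOpen Ω) (hu : IsTranslatorOn Ω u) (hz : z ∈ Ω) :
    pdx (G11 u) z + pdy (G12 u) z = 0 ∧ pdx (G12 u) z + pdy (G22 u) z = 0 := by
  have hs : Sm Ω u := hu.1
  have hE := hu.2 z hz
  have hWp := Wf_pos u z
  have hWs := Wf_sq u z
  have hW := HP_Wf hΩ hs hz
  have he := (hs.hp hΩ hz).comp (Real.hasDerivAt_exp (u z))
  have hp := C2.hpx hΩ hs.two hz
  have hq := C2.hpy hΩ hs.two hz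
  have g11 : HP (G11 u) z _ _ := (he.mul ((HP.const 1 z).add hq.sq)).div hW hWp.ne'
  have g12 : HP (G12 u) z _ _ := (he.mul (hp.mul hq)).neg.div hW hWp.ne'
  have g22 : HP (G22 u) z _ _ := (he.mul ((HP.const 1 z).add hp.sq)).div hW hWp.ne'
  rw [g11.pdx_eq, g12.pdy_eq, g12.pdx_eq, g22.pdy_eq]
  clear g11 g12 g22 he hp hq hW
  have he := Real.exp_pos (u z)
  generalize Real.exp (u z) = e at *
  generalize Wf u z = W at *
  generalize pdy (pdx u) z = s at *
  generalize pdx (pdx u) z = r at *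
  generalize pdy (pdy u) z = t at *
  generalize pdx u z = p at *
  generalize pdy u z = q at *
  have hW2 : (1 + q ^ 2) * r - 2 * p * q * s + (1 + p ^ 2) * t = W ^ 2 := by rw [hE, hWs]
  constructor
  · have : e * p * (W ^ 2 - ((1 + q ^ 2) * r - 2 * p * q * s + (1 + p ^ 2) * t)) / W ^ 3 = 0 := by
      rw [hW2]; simp
    refine Eq.trans ?_ this
    field_simp
    rw [hWs]
    ring
  · have : e * q * (W ^ 2 - ((1 + q ^ 2) * r - 2 * p * q * s + (1 + p ^ 2) * t)) / W ^ 3 = 0 := by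
      rw [hW2]; simp
    refine Eq.trans ?_ this
    field_simp
    rw [hWs]
    ring

/-- Green's identity for `Lop` on a box `R`, for a function `g` that vanishes to first order on the
boundary of `R`: if `(e^u / W) (g L f − f L g)` is at least `h·1_B − K`, then `∫_B h ≤ ∫_R K`. -/
lemma green (hΩ : IsOpen Ω) (hu : IsTranslatorOn Ω u) (hf : ContDiffOn ℝ 2 f Ω)
    (hg : ContDiffOn ℝ 2 g Ω) {a b c d : ℝ} (hab : a ≤ b)
    (hcd : c ≤ d) (hbox : Icc a b ×ˢ Icc c d ⊆ Ω)
    (hbd : ∀ x ∈ Icc a b, ∀ y ∈ Icc c d, (x = a ∨ x = b ∨ y = c ∨ y = d) →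
      g (x, y) = 0 ∧ pdx g (x, y) = 0 ∧ pdy g (x, y) = 0)
    {h K : ℝ × ℝ → ℝ} {B : Set (ℝ × ℝ)} (hB : MeasurableSet B) (hBR : B ⊆ Icc a b ×ˢ Icc c d)
    (hh : IntegrableOn h B) (hK : ContinuousOn K Ω)
    (hR : ∀ z ∈ Icc a b ×ˢ Icc c d,
      0 ≤ Real.exp (u z) / Wf u z * (g z * Lop u f z - f z * Lop u g z) + K z)
    (hgB : ∀ z ∈ B,
      h z ≤ Real.exp (u z) / Wf u z * (g z * Lop u f z - f z * Lop u g z) + K z) :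
    ∫ z in B, h z ≤ ∫ z in Icc a b ×ˢ Icc c d, K z := by
  have hs : Sm Ω u := hu.1
  have f1 := hf.of_le (show (1 : WithTop ℕ∞) ≤ 2 by norm_num)
  have g1 := hg.of_le (show (1 : WithTop ℕ∞) ≤ 2 by norm_num)
  have hX1 := (g1.mul (C2.px hΩ hf)).sub (f1.mul (C2.px hΩ hg))
  have hX2 := (g1.mul (C2.py hΩ hf)).sub (f1.mul (C2.py hΩ hg))
  have hV1 := ((hs.G11 hΩ).mul hX1).add ((hs.G12 hΩ).mul hX2)
  have hV2 := ((hs.G12 hΩ).mul hX1).add ((hs.G22 hΩ).mul hX2)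
  have key : ∀ z ∈ Ω,
      pdx (fun x => G11 u x * (g x * pdx f x - f x * pdx g x)
        + G12 u x * (g x * pdy f x - f x * pdy g x)) z
      + pdy (fun x => G12 u x * (g x * pdx f x - f x * pdx g x)
        + G22 u x * (g x * pdy f x - f x * pdy g x)) z
      = Real.exp (u z) / Wf u z * (g z * Lop u f z - f z * Lop u g z) := by
    intro z hz
    have a1 := C2.hp hΩ hf hz
    have a2 := C2.hpx hΩ hf hz
    have a3 := C2.hpy hΩ hf hz
    have b1 := C2.hp hΩ hg hz
    have b2 := C2.hpx hΩ hg hz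
    have b3 := C2.hpy hΩ hg hz
    have c1 := HP.of_contDiffOn hΩ (hs.G11 hΩ) hz
    have c2 := HP.of_contDiffOn hΩ (hs.G12 hΩ) hz
    have c3 := HP.of_contDiffOn hΩ (hs.G22 hΩ) hz
    have v1 := (c1.mul ((b1.mul a2).sub (a1.mul b2))).add (c2.mul ((b1.mul a3).sub (a1.mul b3)))
    have v2 := (c2.mul ((b1.mul a2).sub (a1.mul b2))).add (c3.mul ((b1.mul a3).sub (a1.mul b3)))
    have w1 := v1.pdx_eq
    have w2 := v2.pdy_eq
    obtain ⟨d1, d2⟩ := G_div_free hΩ hu hz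
    have e1 : pdx (G11 u) z = - pdy (G12 u) z := by linarith
    have e2 : pdx (G12 u) z = - pdy (G22 u) z := by linarith
    refine (congrArg₂ (· + ·) w1 w2).trans ?_
    have hWp := Wf_pos u z
    rw [e1, e2]
    unfold Lop G11 G12 G22
    field_simp
    ring
  refine integral_le_of_div hΩ hV1 hV2 hab hcd hbox ?_ ?_ ?_ ?_ hB hBR hh hK
    (fun z hz => (hR z hz).trans_eq (congrArg (· + K z) (key z (hbox hz)).symm))
    (fun z hz => (hgB z hz).trans_eq (congrArg (· + K z) (key z (hbox (hBR hz))).symm))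
  all_goals
    intro y hy
  · obtain ⟨k1, k2, k3⟩ := hbd a (left_mem_Icc.2 hab) y hy (by tauto)
    simp [k1, k2, k3]
  · obtain ⟨k1, k2, k3⟩ := hbd b (right_mem_Icc.2 hab) y hy (by tauto)
    simp [k1, k2, k3]
  · obtain ⟨k1, k2, k3⟩ := hbd y hy c (left_mem_Icc.2 hcd) (by tauto)
    simp [k1, k2, k3]
  · obtain ⟨k1, k2, k3⟩ := hbd y hy d (right_mem_Icc.2 hcd) (by tauto)
    simp [k1, k2, k3]

end Green

/-! ### Cutoff functions -/

lemma hasDerivAt_maxsq (s : ℝ) : HasDerivAt (fun s : ℝ => (max s 0) ^ 2) (2 * max s 0) s := by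
  rcases lt_trichotomy s 0 with hs | rfl | hs
  · rw [max_eq_right hs.le, mul_zero]
    refine (hasDerivAt_const s (0 : ℝ)).congr_of_eventuallyEq ?_
    filter_upwards [Iio_mem_nhds hs] with y hy
    rw [max_eq_right (le_of_lt hy)]; simp
  · rw [hasDerivAt_iff_isLittleO]
    simp only [max_self, sub_zero, mul_zero, smul_zero]
    refine (Asymptotics.IsBigO.of_bound 1 ?_).trans_isLittleO
      (Asymptotics.isLittleO_pow_id (𝕜 := ℝ) (n := 2) (by norm_num))
    refine Eventually.of_forall fun x => ?_
    simp only [norm_pow, Real.norm_eq_abs, one_mul, ne_eq, OfNat.ofNat_ne_zero, not_false_eq_true,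
      zero_pow, sub_zero]
    rcases le_total x 0 with h | h
    · rw [max_eq_right h]; simp; positivity
    · rw [max_eq_left h]
  · rw [max_eq_left hs.le]
    have h := (hasDerivAt_id s).pow 2
    simp only [id, Nat.cast_ofNat, mul_one] at h
    refine (h.congr_of_eventuallyEq ?_).congr_deriv (by norm_num)
    filter_upwards [Ioi_mem_nhds hs] with y hy
    rw [max_eq_left (le_of_lt hy)]; simp

lemma contDiff_maxsq : ContDiff ℝ 1 (fun s : ℝ => (max s 0) ^ 2) := by
  rw [contDiff_one_iff_deriv]
  refine ⟨fun s => (hasDerivAt_maxsq s).differentiableAt, ?_⟩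
  have : deriv (fun s : ℝ => (max s 0) ^ 2) = fun s => 2 * max s 0 :=
    funext fun s => (hasDerivAt_maxsq s).deriv
  rw [this]
  fun_prop

/-- A `C¹` nondecreasing function with values in `[0, 1]` that vanishes on `(-∞, 0]`. -/
def sg (s : ℝ) : ℝ := (max s 0) ^ 2 / (1 + (max s 0) ^ 2)

/-- The derivative of `sg`. -/
def sgd (s : ℝ) : ℝ := 2 * max s 0 / (1 + (max s 0) ^ 2) ^ 2

lemma hasDerivAt_sg (s : ℝ) : HasDerivAt sg (sgd s) s := by
  have h := hasDerivAt_maxsq s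
  have h2 := h.div (h.const_add 1) (show (1 + (max s 0) ^ 2) ≠ 0 by positivity)
  refine h2.congr_deriv ?_
  unfold sgd
  congr 1
  ring

lemma contDiff_sg : ContDiff ℝ 1 sg :=
  contDiff_maxsq.div (contDiff_const.add contDiff_maxsq) fun s => by positivity

lemma continuous_sgd : Continuous sgd := by
  unfold sgd
  exact Continuous.div (by fun_prop) (by fun_prop) fun s => by positivity

lemma sg_nonneg (s : ℝ) : 0 ≤ sg s := by unfold sg; positivity

lemma sg_le_one (s : ℝ) : sg s ≤ 1 := by
  unfold sg; rw [div_le_one (by positivity)]; linarith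

lemma sgd_nonneg (s : ℝ) : 0 ≤ sgd s := by unfold sgd; positivity

lemma sgd_le_one (s : ℝ) : sgd s ≤ 1 := by
  unfold sgd; rw [div_le_one (by positivity)]
  nlinarith [sq_nonneg (max s 0 - 1), sq_nonneg (max s 0 ^ 2)]

lemma sg_eq_zero {s : ℝ} (h : s ≤ 0) : sg s = 0 := by unfold sg; rw [max_eq_right h]; simp

lemma half_le_sg {s : ℝ} (h : 1 ≤ s) : 1 / 2 ≤ sg s := by
  unfold sg; rw [max_eq_left (by linarith), div_le_div_iff₀ (by norm_num) (by positivity)]; nlinarith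

lemma le_sgd {s : ℝ} (h : 1 ≤ s) (h3 : s ≤ 3) : 1 / 50 ≤ sgd s := by
  unfold sgd; rw [max_eq_left (by linarith), div_le_div_iff₀ (by norm_num) (by positivity)]
  have h1 : 1 + s ^ 2 ≤ 10 := by nlinarith
  have : (1 + s ^ 2) ^ 2 ≤ 10 ^ 2 := by gcongr
  linarith

/-- A `C¹` bump function supported in `[x₀ - L, x₀ + L]`. -/
def bp (x₀ L x : ℝ) : ℝ := (max (1 - ((x - x₀) / L) ^ 2) 0) ^ 2

/-- The derivative of `bp`. -/
def bpd (x₀ L x : ℝ) : ℝ := -4 * (x - x₀) / L ^ 2 * max (1 - ((x - x₀) / L) ^ 2) 0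

lemma hasDerivAt_bp (x₀ L x : ℝ) : HasDerivAt (bp x₀ L) (bpd x₀ L x) x := by
  have h1 : HasDerivAt (fun x : ℝ => 1 - ((x - x₀) / L) ^ 2) (-(2 * (x - x₀) / L ^ 2)) x := by
    have := ((((hasDerivAt_id x).sub_const x₀).div_const L).pow 2).const_sub 1
    refine this.congr_deriv ?_
    simp only [id, Nat.cast_ofNat]
    ring
  have h2 := (hasDerivAt_maxsq (1 - ((x - x₀) / L) ^ 2)).comp x h1
  refine h2.congr_deriv ?_
  unfold bpd; ring

lemma contDiff_bp (x₀ L : ℝ) : ContDiff ℝ 1 (bp x₀ L) :=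
  contDiff_maxsq.comp (contDiff_const.sub (((contDiff_id.sub contDiff_const).div_const L).pow 2))

lemma bp_nonneg (x₀ L x : ℝ) : 0 ≤ bp x₀ L x := by unfold bp; positivity

lemma bp_le_one (x₀ L x : ℝ) : bp x₀ L x ≤ 1 := by
  unfold bp
  have : max (1 - ((x - x₀) / L) ^ 2) 0 ≤ 1 := max_le (by nlinarith [sq_nonneg ((x - x₀) / L)]) (by norm_num)
  exact pow_le_one₀ (le_max_right _ _) this

lemma bp_left {x₀ L : ℝ} (hL : 0 < L) : bp x₀ L (x₀ - L) = 0 := by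
  unfold bp
  have : (x₀ - L - x₀) / L = -1 := by field_simp; ring
  rw [this]; norm_num

lemma bp_right {x₀ L : ℝ} (hL : 0 < L) : bp x₀ L (x₀ + L) = 0 := by
  unfold bp
  have : (x₀ + L - x₀) / L = 1 := by field_simp; ring
  rw [this]; norm_num

lemma bpd_sq_le {x₀ L x : ℝ} (hL : 0 < L) (hx : |x - x₀| ≤ L) :
    bpd x₀ L x ^ 2 ≤ 16 / L ^ 2 * bp x₀ L x := by
  unfold bpd bp
  have h : ((x - x₀) / L) ^ 2 ≤ 1 := by
    rw [sq_le_one_iff_abs_le_one, abs_div, abs_of_pos hL, div_le_one hL]; exact hx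
  have : (-4 * (x - x₀) / L ^ 2 * max (1 - ((x - x₀) / L) ^ 2) 0) ^ 2
    = 16 / L ^ 2 * (max (1 - ((x - x₀) / L) ^ 2) 0) ^ 2 * ((x - x₀) / L) ^ 2 := by
    field_simp; ring
  rw [this]
  exact mul_le_of_le_one_right (by positivity) h

lemma le_bp {x₀ L x : ℝ} (hL : 0 < L) (hx : |x - x₀| ≤ L / 2) : 9 / 16 ≤ bp x₀ L x := by
  have h : |(x - x₀) / L| ≤ 1 / 2 := by
    rw [abs_div, abs_of_pos hL, div_le_iff₀ hL]; linarith
  have h2 : ((x - x₀) / L) ^ 2 ≤ 1 / 4 := by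
    rw [← sq_abs]; nlinarith [abs_nonneg ((x - x₀) / L)]
  have h3 : 3 / 4 ≤ max (1 - ((x - x₀) / L) ^ 2) 0 := le_max_of_le_left (by linarith)
  unfold bp
  nlinarith

/-! ### The field `∇u / W − (0, 1)` -/

section Flux

variable {Ω : Set (ℝ × ℝ)} {u θ : ℝ × ℝ → ℝ} {z : ℝ × ℝ}

/-- The translator equation in divergence form, `div (∇u / W) = 1 / W`, tested with `θ`. -/
lemma flux_div (hΩ : IsOpen Ω) (hu : IsTranslatorOn Ω u) (hz : z ∈ Ω) {a b : ℝ} (hθ : HP θ z a b) :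
    HP (fun x => θ x * (pdx u x / Wf u x)) z
      (pdx (fun x => θ x * (pdx u x / Wf u x)) z) (pdy (fun x => θ x * (pdx u x / Wf u x)) z) ∧
    HP (fun x => θ x * (pdy u x / Wf u x - 1)) z (pdx (fun x => θ x * (pdy u x / Wf u x - 1)) z)
      (pdy (fun x => θ x * (pdy u x / Wf u x - 1)) z) ∧
    pdx (fun x => θ x * (pdx u x / Wf u x)) z + pdy (fun x => θ x * (pdy u x / Wf u x - 1)) z
      = θ z / Wf u z + a * (pdx u z / Wf u z) + b * (pdy u z / Wf u z - 1) := by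
  have hs : Sm Ω u := hu.1
  have hE := hu.2 z hz
  have hWp := Wf_pos u z
  have hWs := Wf_sq u z
  have hW := HP_Wf hΩ hs hz
  have hp := C2.hpx hΩ hs.two hz
  have hq := C2.hpy hΩ hs.two hz
  have v1 := hθ.mul (hp.div hW hWp.ne')
  have v2 := hθ.mul ((hq.div hW hWp.ne').sub (HP.const 1 z))
  refine ⟨HP.of_diff v1.differentiableAt, HP.of_diff v2.differentiableAt, ?_⟩
  rw [v1.pdx_eq, v2.pdy_eq]
  clear v1 v2 hp hq hW hθ
  generalize Wf u z = W at *
  generalize pdy (pdx u) z = s at *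
  generalize pdx (pdx u) z = r at *
  generalize pdy (pdy u) z = t at *
  generalize pdx u z = p at *
  generalize pdy u z = q at *
  have hW2 : (1 + q ^ 2) * r - 2 * p * q * s + (1 + p ^ 2) * t = W ^ 2 := by rw [hE, hWs]
  have : θ z * ((1 + q ^ 2) * r - 2 * p * q * s + (1 + p ^ 2) * t - W ^ 2) / W ^ 3 = 0 := by
    rw [hW2]; simp
  rw [← sub_eq_zero]
  refine Eq.trans ?_ this
  field_simp
  rw [hWs]
  ring

lemma flux_contDiffOn (hΩ : IsOpen Ω) (hs : Sm Ω u) (hθ : ContDiffOn ℝ 1 θ Ω) :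
    ContDiffOn ℝ 1 (fun x => θ x * (pdx u x / Wf u x)) Ω ∧
    ContDiffOn ℝ 1 (fun x => θ x * (pdy u x / Wf u x - 1)) Ω :=
  ⟨hθ.mul ((hs.px hΩ).of_le.div (hs.Wf hΩ).of_le fun z _ => (Wf_pos u z).ne'),
    hθ.mul (((hs.py hΩ).of_le.div (hs.Wf hΩ).of_le fun z _ => (Wf_pos u z).ne').sub contDiffOn_const)⟩

/-- The defect `1 - q / W`, half the squared distance of the unit normal to `(0, -1, 0)`. -/
def df (u : ℝ × ℝ → ℝ) (z : ℝ × ℝ) : ℝ := 1 - pdy u z / Wf u z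

lemma df_nonneg (u : ℝ × ℝ → ℝ) (z : ℝ × ℝ) : 0 ≤ df u z := by
  unfold df
  have := (le_abs_self _).trans (abs_pdy_lt_Wf u z).le
  rw [sub_nonneg, div_le_one (Wf_pos u z)]; exact this

lemma df_id (u : ℝ × ℝ → ℝ) (z : ℝ × ℝ) :
    (pdx u z / Wf u z) ^ 2 + df u z ^ 2 + (1 / Wf u z) ^ 2 = 2 * df u z := by
  have hWp := Wf_pos u z
  have hWs := Wf_sq u z
  unfold df
  field_simp
  linear_combination (-1) * hWs

lemma flux_id (u : ℝ × ℝ → ℝ) (z : ℝ × ℝ) :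
    pdx u z * (pdx u z / Wf u z) + pdy u z * (pdy u z / Wf u z - 1)
      = (Wf u z - pdy u z) - 1 / Wf u z := by
  have hWp := Wf_pos u z
  have hWs := Wf_sq u z
  field_simp
  linear_combination (-1) * hWs

lemma continuousOn_df (hΩ : IsOpen Ω) (hs : Sm Ω u) : ContinuousOn (df u) Ω :=
  continuousOn_const.sub ((hs.py hΩ).continuousOn.div (hs.Wf hΩ).continuousOn
    fun z _ => (Wf_pos u z).ne')

end Flux

/-! ### The half strip -/

section Strip

variable {w : ℝ} {u : ℝ × ℝ → ℝ}

lemma isOpen_THalfStrip (w : ℝ) : IsOpen (THalfStrip w) := by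
  unfold THalfStrip
  exact (isOpen_lt continuous_const continuous_fst).inter
    ((isOpen_lt continuous_const continuous_snd).inter (isOpen_lt continuous_snd continuous_const))

lemma box_subset {a b c d : ℝ} (ha : 0 < a) (hc : 0 < c) (hd : d < w) :
    Icc a b ×ˢ Icc c d ⊆ THalfStrip w := fun _ hz =>
  ⟨ha.trans_le hz.1.1, hc.trans_le hz.2.1, hz.2.2.trans_lt hd⟩

/-- Uniform version, over compact intervals, of a limit at the points of a horizontal line. -/
lemma boundary_aux {l : Filter ℝ} {t a b : ℝ} {S : Set (ℝ × ℝ)}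
    (h : ∀ x ∈ Icc a b, Tendsto u (nhdsWithin (x, t) S) l) {T : Set ℝ} (hT : T ∈ l) :
    ∃ ε > 0, ∀ x ∈ Icc a b, ∀ y, |y - t| < ε → (x, y) ∈ S → u (x, y) ∈ T := by
  have key : ∀ᶠ y in nhds t, ∀ x ∈ Icc a b, (x, y) ∈ S → u (x, y) ∈ T := by
    refine isCompact_Icc.eventually_forall_of_forall_eventually (K := Icc a b) fun x hx => ?_
    have := h x hx hT
    rw [mem_map, mem_nhdsWithin_iff_eventually] at this
    exact ((continuous_snd.prodMk continuous_fst).tendsto (t, x)).eventually this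
  obtain ⟨ε, hε, h3⟩ := Metric.eventually_nhds_iff.1 key
  exact ⟨ε, hε, fun x hx y hy hS => h3 (by rwa [Real.dist_eq]) x hx hS⟩

lemma boundary_low (hw : 0 < w)
    (h0 : ∀ x : ℝ, 0 < x → Tendsto u (nhdsWithin (x, 0) (THalfStrip w)) atBot)
    {a b ym : ℝ} (ha : 0 < a) (hym : 0 < ym) (c : ℝ) :
    ∃ y₀, 0 < y₀ ∧ y₀ < ym ∧ y₀ < w ∧ ∀ x ∈ Icc a b, u (x, y₀) < c := by
  obtain ⟨ε, hε, h⟩ := boundary_aux (fun x hx => h0 x (ha.trans_le hx.1)) (Iio_mem_atBot c)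
    (a := a) (b := b)
  obtain ⟨y, hy0, hy⟩ := exists_between (lt_min hε (lt_min hym hw))
  rw [lt_min_iff, lt_min_iff] at hy
  refine ⟨y, hy0, hy.2.1, hy.2.2, fun x hx => h x hx y ?_ ⟨ha.trans_le hx.1, hy0, hy.2.2⟩⟩
  rw [sub_zero, abs_of_pos hy0]; exact hy.1

lemma boundary_high (hw : 0 < w)
    (h1 : ∀ x : ℝ, 0 < x → Tendsto u (nhdsWithin (x, w) (THalfStrip w)) atTop)
    {a b ym : ℝ} (ha : 0 < a) (hym : ym < w) (c : ℝ) :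
    ∃ y₁, 0 < y₁ ∧ ym < y₁ ∧ y₁ < w ∧ ∀ x ∈ Icc a b, c < u (x, y₁) := by
  obtain ⟨ε, hε, h⟩ := boundary_aux (fun x hx => h1 x (ha.trans_le hx.1)) (Ioi_mem_atTop c)
    (a := a) (b := b)
  obtain ⟨y, hy, hyw⟩ := exists_between (max_lt (sub_lt_self w hε) (max_lt hym hw))
  rw [max_lt_iff, max_lt_iff] at hy
  refine ⟨y, hy.2.2, hy.2.1, hyw, fun x hx => h x hx y ?_ ⟨ha.trans_le hx.1, hy.2.2, hyw⟩⟩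
  rw [abs_sub_lt_iff]; constructor <;> linarith [hy.1]

end Strip

/-! ### Integral estimates from the flux -/

section Est

variable {w : ℝ} {u : ℝ × ℝ → ℝ}

lemma volume_real_box {a b c d : ℝ} (hab : a ≤ b) (hcd : c ≤ d) :
    (volume : Measure (ℝ × ℝ)).real (Icc a b ×ˢ Icc c d) = (b - a) * (d - c) := by
  rw [Measure.volume_eq_prod, measureReal_prod_prod, Real.volume_real_Icc_of_le hab,
    Real.volume_real_Icc_of_le hcd]

lemma integrableOn_box {f : ℝ × ℝ → ℝ} {Ω : Set (ℝ × ℝ)} (hf : ContinuousOn f Ω) {a b c d : ℝ}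
    (h : Icc a b ×ˢ Icc c d ⊆ Ω) : IntegrableOn f (Icc a b ×ˢ Icc c d) :=
  (hf.mono h).integrableOn_compact (isCompact_Icc.prod isCompact_Icc)

/-- Pointwise estimate for `defect_integral_le`: the divergence of the tested field controls half
of the cut off defect, the cross term being absorbed by the arithmetic-geometric mean
inequality. -/
lemma flux_alg {L P d η η' ζ z' τ T D V : ℝ} (hw : 0 < w) (hL : 0 < L) (hP2 : P ^ 2 ≤ 2 * d)
    (hd0 : 0 ≤ d) (hη0 : 0 ≤ η) (hη1 : η ≤ 1) (hb : η' ^ 2 ≤ 16 / L ^ 2 * η) (hζ0 : 0 ≤ ζ)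
    (hζ1 : ζ ≤ 1) (hz0 : 0 ≤ z') (hz1 : z' ≤ w / L ^ 2) (hτ0 : 0 ≤ τ) (hτ1 : τ ≤ w) (hT : 0 ≤ T)
    (hD : 0 ≤ D) (hV0 : 0 ≤ V) (hV1 : V ≤ 1) :
    1 / 2 * (η * ζ * d) ≤ T + ζ * (η' * τ * P) + η * z' * τ * (D - V) + η * ζ * d
      + 17 * w ^ 2 / L ^ 2 := by
  have hX : |η' * τ * P| ≤ 1 / 2 * (η * d) + 16 * w ^ 2 / L ^ 2 := by
    refine abs_le_of_sq_le_sq ?_ (by positivity)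
    calc (η' * τ * P) ^ 2 = η' ^ 2 * τ ^ 2 * P ^ 2 := by ring
      _ ≤ (16 / L ^ 2 * η) * w ^ 2 * (2 * d) := by gcongr
      _ = 4 * (1 / 2 * (η * d)) * (16 * w ^ 2 / L ^ 2) := by ring
      _ ≤ _ := by nlinarith [sq_nonneg (1 / 2 * (η * d) - 16 * w ^ 2 / L ^ 2)]
  have hX1 : - (1 / 2 * (η * ζ * d)) - 16 * w ^ 2 / L ^ 2 ≤ ζ * (η' * τ * P) := by
    have h1 := (abs_le.1 hX).1
    have h2 : ζ * -(1 / 2 * (η * d) + 16 * w ^ 2 / L ^ 2) ≤ ζ * (η' * τ * P) := by gcongr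
    have h3 : ζ * (16 * w ^ 2 / L ^ 2) ≤ 16 * w ^ 2 / L ^ 2 :=
      mul_le_of_le_one_left (by positivity) hζ1
    linarith
  have hY : η * z' * τ * V ≤ w ^ 2 / L ^ 2 := by
    calc η * z' * τ * V ≤ 1 * (w / L ^ 2) * w * 1 := by gcongr
      _ = w ^ 2 / L ^ 2 := by ring
  have hZ : 0 ≤ η * z' * τ * D := by positivity
  have h17 : 17 * w ^ 2 / L ^ 2 = 16 * w ^ 2 / L ^ 2 + w ^ 2 / L ^ 2 := by ring
  rw [h17]
  linarith

/-- First flux estimate.  The field `∇u / W − (0, 1)` has divergence `1 / W ≥ 0` and horizontal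
component at most the square root of twice the defect, so testing with a cutoff times `yb - y` shows
that the defect has total mass `O(1 / L)` in boxes of length `L`. -/
lemma defect_integral_le (hw : 0 < w) (hu : IsTranslatorOn (THalfStrip w) u)
    (h0 : ∀ x : ℝ, 0 < x → Tendsto u (nhdsWithin (x, 0) (THalfStrip w)) atBot)
    {x₀ L ya yb : ℝ} (hL : 0 < L) (hLx : L < x₀) (hya : 0 < ya) (hab : ya ≤ yb) (hyb : yb < w) :
    ∫ z in Icc (x₀ - L / 2) (x₀ + L / 2) ×ˢ Icc ya yb, df u z ≤ 242 * w ^ 3 / L := by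
  have hs : Sm (THalfStrip w) u := hu.1
  have hΩ := isOpen_THalfStrip w
  set B := Icc (x₀ - L / 2) (x₀ + L / 2) ×ˢ Icc ya yb with hBdef
  have hBΩ : B ⊆ THalfStrip w := box_subset (by linarith) hya hyb
  obtain ⟨M, hM⟩ := (isCompact_Icc.prod isCompact_Icc : IsCompact B).exists_bound_of_continuousOn
    (hs.continuousOn.mono hBΩ)
  set N := max M (L ^ 2 / w) with hN
  have hNpos : 0 < N := lt_max_of_lt_right (by positivity)
  have hNinv : 1 / N ≤ w / L ^ 2 := by
    rw [div_le_div_iff₀ hNpos (by positivity)]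
    have : L ^ 2 / w ≤ N := le_max_right _ _
    rw [div_le_iff₀ hw] at this
    linarith
  obtain ⟨y₀, hy0, hy0a, hy0w, hlow⟩ :=
    boundary_low hw h0 (a := x₀ - L) (b := x₀ + L) (by linarith) hya (-(2 * N))
  have hbox : Icc (x₀ - L) (x₀ + L) ×ˢ Icc y₀ yb ⊆ THalfStrip w := box_subset (by linarith) hy0 hyb
  -- the test function is a product of cutoffs in `x` and in `u`, and of a weight vanishing at the top
  set θ : ℝ × ℝ → ℝ := fun z => bp x₀ L z.1 * sg (2 + u z / N) * (yb - z.2) with hθ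
  have hθc : ContDiffOn ℝ 1 θ (THalfStrip w) := by
    refine (ContDiffOn.mul ?_ ?_).mul (contDiffOn_const.sub contDiff_snd.contDiffOn)
    · exact (contDiff_bp x₀ L).comp_contDiffOn contDiff_fst.contDiffOn
    · exact contDiff_sg.comp_contDiffOn (contDiffOn_const.add (hs.of_le.div_const N))
  obtain ⟨hV1, hV2⟩ := flux_contDiffOn hΩ hs hθc
  -- pointwise lower bound for the divergence
  have key : ∀ z ∈ Icc (x₀ - L) (x₀ + L) ×ˢ Icc y₀ yb,
      1 / 2 * (bp x₀ L z.1 * sg (2 + u z / N) * df u z) ≤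
      pdx (fun x => θ x * (pdx u x / Wf u x)) z + pdy (fun x => θ x * (pdy u x / Wf u x - 1)) z
        + 17 * w ^ 2 / L ^ 2 := by
    intro z hz
    have hzΩ := hbox hz
    have hη : HP (fun z : ℝ × ℝ => bp x₀ L z.1) z _ _ := (HP.fst z).comp (hasDerivAt_bp x₀ L z.1)
    have hζ : HP (fun z : ℝ × ℝ => sg (2 + u z / N)) z _ _ :=
      ((HP.const 2 z).add ((hs.hp hΩ hzΩ).cmul N⁻¹)).comp (φ := fun s => sg s)
        (hasDerivAt_sg (2 + N⁻¹ * u z)) |>.congr_fun hΩ hzΩ (fun y _ => by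
          show sg _ = sg _
          congr 2; ring)
    have hτ := (HP.const yb z).sub (HP.snd z)
    obtain ⟨-, -, hd⟩ := flux_div hΩ hu hzΩ ((hη.mul hζ).mul hτ)
    rw [hd]
    have hP := df_id u z
    have hid := flux_id u z
    have hd0 := df_nonneg u z
    have hWq : 0 ≤ Wf u z - pdy u z := sub_nonneg.2 ((le_abs_self _).trans (abs_pdy_lt_Wf u z).le)
    have hx : |z.1 - x₀| ≤ L := by
      rw [abs_le]; constructor <;> linarith [hz.1.1, hz.1.2]
    have hb := bpd_sq_le hL hx
    have hη0 := bp_nonneg x₀ L z.1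
    have hη1 := bp_le_one x₀ L z.1
    have hζ0 := sg_nonneg (2 + u z / N)
    have hζ1 := sg_le_one (2 + u z / N)
    have hζd0 := sgd_nonneg (2 + N⁻¹ * u z)
    have hζd1 := sgd_le_one (2 + N⁻¹ * u z)
    have hτ0 : 0 ≤ yb - z.2 := sub_nonneg.2 hz.2.2
    have hτ1 : yb - z.2 ≤ w := by linarith [hz.2.1]
    have hW1 := one_le_Wf u z
    have hWi : 1 / Wf u z ≤ 1 := by rw [div_le_one (by linarith)]; exact hW1
    have hWi0 : 0 ≤ 1 / Wf u z := by positivity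
    have hθW : 0 ≤ bp x₀ L z.1 * sg (2 + u z / N) * (yb - z.2) / Wf u z := by positivity
    have hP2 : (pdx u z / Wf u z) ^ 2 ≤ 2 * df u z := by
      nlinarith [sq_nonneg (df u z), sq_nonneg (1 / Wf u z)]
    have hz0 : 0 ≤ sgd (2 + N⁻¹ * u z) * N⁻¹ := by positivity
    have hz1 : sgd (2 + N⁻¹ * u z) * N⁻¹ ≤ w / L ^ 2 := by
      rw [one_div] at hNinv
      calc sgd (2 + N⁻¹ * u z) * N⁻¹ ≤ 1 * (w / L ^ 2) := by gcongr
        _ = w / L ^ 2 := one_mul _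
    refine (flux_alg hw hL hP2 hd0 hη0 hη1 hb hζ0 hζ1 hz0 hz1 hτ0 hτ1 hθW hWq hWi0 hWi).trans_eq ?_
    simp only [df]
    linear_combination (-(bp x₀ L z.1 * (sgd (2 + N⁻¹ * u z) * N⁻¹) * (yb - z.2))) * hid
  have hK : ContinuousOn (fun _ : ℝ × ℝ => 17 * w ^ 2 / L ^ 2) (THalfStrip w) := continuousOn_const
  have hdi := integrableOn_box (continuousOn_df hΩ hs) hBΩ
  have main := integral_le_of_div (B := B) (g := fun z => 9 / 64 * df u z) hΩ hV1 hV2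
    (by linarith : x₀ - L ≤ x₀ + L)
    (by linarith : y₀ ≤ yb) hbox
    (fun y _ => by simp [hθ, bp_left hL]) (fun y _ => by simp [hθ, bp_right hL])
    (fun x hx => by
      have : 2 + u (x, y₀) / N ≤ 0 := by
        have := hlow x hx
        have h2 : u (x, y₀) / N ≤ -2 := by rw [div_le_iff₀ hNpos]; linarith
        linarith
      simp [hθ, sg_eq_zero this])
    (fun x hx => by simp [hθ])
    (measurableSet_Icc.prod measurableSet_Icc)
    (prod_mono (Icc_subset_Icc (by linarith) (by linarith)) (Icc_subset_Icc hy0a.le le_rfl))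
    (hdi.const_mul _) hK
    (fun z hz => le_trans (by
      have := df_nonneg u z
      have := bp_nonneg x₀ L z.1
      have := sg_nonneg (2 + u z / N)
      positivity) (key z hz))
    (fun z hz => le_trans (by
      have h1 := df_nonneg u z
      have h2 := le_bp hL (x := z.1) (x₀ := x₀) (by
        rw [abs_le]; constructor <;> linarith [hz.1.1, hz.1.2])
      have h3 : 1 / 2 ≤ sg (2 + u z / N) := half_le_sg (by
        have h4 := (abs_le.1 ((hM z hz).trans (le_max_left M (L ^ 2 / w)))).1
        have : -1 ≤ u z / N := by rw [le_div_iff₀ hNpos]; linarith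
        linarith)
      have h4 : 9 / 16 * (1 / 2) ≤ bp x₀ L z.1 * sg (2 + u z / N) := by gcongr
      nlinarith) (key z (prod_mono (Icc_subset_Icc (by linarith) (by linarith))
        (Icc_subset_Icc hy0a.le le_rfl) hz)))
  rw [integral_const_mul, setIntegral_const, volume_real_box (by linarith) (by linarith),
    smul_eq_mul] at main
  have h5 : (x₀ + L - (x₀ - L)) * (yb - y₀) * (17 * w ^ 2 / L ^ 2) ≤ 34 * w ^ 3 / L := by
    calc (x₀ + L - (x₀ - L)) * (yb - y₀) * (17 * w ^ 2 / L ^ 2)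
        ≤ (2 * L) * w * (17 * w ^ 2 / L ^ 2) := by
          have : 0 ≤ yb - y₀ := by linarith
          gcongr <;> linarith
      _ = 34 * w ^ 3 / L := by field_simp; ring
  have h6 : (0 : ℝ) < w ^ 3 / L := by positivity
  have h7 : 34 * w ^ 3 / L = 34 * (w ^ 3 / L) := by ring
  have h8 : 242 * w ^ 3 / L = 242 * (w ^ 3 / L) := by ring
  rw [h8]
  linarith

end Est

section Est

variable {w : ℝ} {u : ℝ × ℝ → ℝ}

/-- Pointwise estimate for `slab_integral_le`: the error terms are linear in the square root of the
defect `d`, which is at most `κ + d / κ` for every `κ`. -/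
lemma slab_alg {r κ P d η η' ζ z' T V : ℝ} (hr : 0 < r) (hκ : 0 < κ) (hP2 : P ^ 2 ≤ 2 * d)
    (hd0 : 0 ≤ d) (hη1 : η ≤ 1) (hb : η' ^ 2 ≤ 16 / (2 * r) ^ 2 * η) (hζ0 : 0 ≤ ζ)
    (hζ1 : ζ ≤ 1) (hz0 : 0 ≤ z') (hz1 : z' ≤ 1 / r) (hT : 0 ≤ T)
    (hV0 : 0 ≤ V) (hV2 : V ^ 2 ≤ 2 * d) :
    0 ≤ T + ζ * (η' * P) - η * z' * V + 3 / r * (κ + d / κ) := by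
  have hk : 2 * d ≤ (κ + d / κ) ^ 2 := by
    have : (κ + d / κ) ^ 2 = (κ - d / κ) ^ 2 + 4 * d := by field_simp; ring
    rw [this]; nlinarith [sq_nonneg (κ - d / κ)]
  have hk0 : 0 ≤ κ + d / κ := by positivity
  have hP : |P| ≤ κ + d / κ := abs_le_of_sq_le_sq (hP2.trans hk) hk0
  have hV : V ≤ κ + d / κ := (le_abs_self V).trans (abs_le_of_sq_le_sq (hV2.trans hk) hk0)
  have hη' : |η'| ≤ 2 / r := by
    refine abs_le_of_sq_le_sq (hb.trans ?_) (by positivity)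
    calc 16 / (2 * r) ^ 2 * η ≤ 16 / (2 * r) ^ 2 * 1 := by gcongr
      _ = (2 / r) ^ 2 := by field_simp; norm_num
  have h1 : |ζ * (η' * P)| ≤ 1 * (2 / r * (κ + d / κ)) := by
    rw [abs_mul, abs_mul, abs_of_nonneg hζ0]; gcongr
  have h2 : η * z' * V ≤ 1 * (1 / r) * (κ + d / κ) := by gcongr
  have h3 := (abs_le.1 h1).1
  have h4 : 3 / r * (κ + d / κ) = 2 / r * (κ + d / κ) + 1 / r * (κ + d / κ) := by ring
  linarith

/-- Second flux estimate: a weighted area of the part of the graph in a slab `u ≈ c`, in which the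
defect `W - q` carries full weight and the rest only weight `r²`. -/
lemma slab_integral_le (hw : 0 < w) (hu : IsTranslatorOn (THalfStrip w) u)
    (h0 : ∀ x : ℝ, 0 < x → Tendsto u (nhdsWithin (x, 0) (THalfStrip w)) atBot)
    {x₀ L r κ ya yb : ℝ} (c : ℝ) (hr : 0 < r) (hr1 : r ≤ 1) (hκ : 0 < κ) (hrL : 4 * r ≤ L)
    (hLx : L < x₀) (hya : 0 < ya) (hab : ya ≤ yb) (hyb : yb < w) :
    ∫ z in Icc (x₀ - r) (x₀ + r) ×ˢ Icc ya yb,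
      sgd ((u z - c) / r + 2) * (Wf u z - pdy u z + r ^ 2 * pdy u z)
      ≤ 16 / 3 * (4 * κ * r * w + 242 * w ^ 3 / (κ * L)) + 8 * r ^ 4 := by
  have hs : Sm (THalfStrip w) u := hu.1
  have hΩ := isOpen_THalfStrip w
  have hL : 0 < L := by linarith
  set B := Icc (x₀ - r) (x₀ + r) ×ˢ Icc ya yb with hBdef
  have hBΩ : B ⊆ THalfStrip w := box_subset (by linarith) hya hyb
  obtain ⟨y₀, hy0, hy0a, hy0w, hlow⟩ :=
    boundary_low hw h0 (a := x₀ - 2 * r) (b := x₀ + 2 * r) (by linarith) hya (c - 2 * r)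
  set R := Icc (x₀ - 2 * r) (x₀ + 2 * r) ×ˢ Icc y₀ yb with hRdef
  have hbox : R ⊆ THalfStrip w := box_subset (by linarith) hy0 hyb
  have hBR : B ⊆ R :=
    prod_mono (Icc_subset_Icc (by linarith) (by linarith)) (Icc_subset_Icc hy0a.le le_rfl)
  have hh : 0 < yb - y₀ := by linarith
  have h2r : 0 < 2 * r := by linarith
  set θ : ℝ × ℝ → ℝ := fun z => bp x₀ (2 * r) z.1 * sg ((u z - c) / r + 2) with hθ
  have hθc : ContDiffOn ℝ 1 θ (THalfStrip w) := by
    refine ContDiffOn.mul ?_ ?_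
    · exact (contDiff_bp x₀ (2 * r)).comp_contDiffOn contDiff_fst.contDiffOn
    · exact contDiff_sg.comp_contDiffOn
        (((hs.of_le.sub contDiffOn_const).div_const r).add contDiffOn_const)
  have hθ0 : ∀ z, 0 ≤ θ z := fun z => mul_nonneg (bp_nonneg _ _ _) (sg_nonneg _)
  have hθ1 : ∀ z, θ z ≤ 1 := fun z =>
    mul_le_one₀ (bp_le_one _ _ _) (sg_nonneg _) (sg_le_one _)
  obtain ⟨hV1, hV2⟩ := flux_contDiffOn hΩ hs hθc
  -- the extra vertical field turns the weight `W - q` into `W - q + r² q`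
  have hV2' : ContDiffOn ℝ 1 (fun x => θ x * (pdy u x / Wf u x - 1)
      + r ^ 2 * (θ x - (yb - y₀)⁻¹ * (x.2 - y₀))) (THalfStrip w) :=
    hV2.add (contDiffOn_const.mul (hθc.sub (contDiffOn_const.mul
      (contDiff_snd.contDiffOn.sub contDiffOn_const))))
  set K : ℝ × ℝ → ℝ := fun z => 3 / r * (κ + df u z / κ) + r ^ 2 * (yb - y₀)⁻¹ with hKdef
  have hdc := continuousOn_df hΩ hs
  have hK : ContinuousOn K (THalfStrip w) :=
    (continuousOn_const.mul (continuousOn_const.add (hdc.div_const κ))).add continuousOn_const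
  have hWq : ∀ z, 0 ≤ Wf u z - pdy u z + r ^ 2 * pdy u z := fun z => by
    have h1 := abs_lt.1 (abs_pdy_lt_Wf u z)
    have h2 : r ^ 2 ≤ 1 := pow_le_one₀ hr.le hr1
    nlinarith [sq_nonneg r]
  have key : ∀ z ∈ R,
      bp x₀ (2 * r) z.1 * (sgd ((u z - c) / r + 2) * r⁻¹) * (Wf u z - pdy u z + r ^ 2 * pdy u z) ≤
      pdx (fun x => θ x * (pdx u x / Wf u x)) z + pdy (fun x => θ x * (pdy u x / Wf u x - 1)
      + r ^ 2 * (θ x - (yb - y₀)⁻¹ * (x.2 - y₀))) z + K z := by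
    intro z hz
    have hzΩ := hbox hz
    have hη : HP (fun z : ℝ × ℝ => bp x₀ (2 * r) z.1) z _ _ :=
      (HP.fst z).comp (hasDerivAt_bp x₀ (2 * r) z.1)
    have e : r⁻¹ * (u z - c) + 2 = (u z - c) / r + 2 := by ring
    have hζ : HP (fun z : ℝ × ℝ => sg ((u z - c) / r + 2)) z _ _ :=
      ((((hs.hp hΩ hzΩ).sub (HP.const c z)).cmul r⁻¹).add (HP.const 2 z)).comp (φ := fun s => sg s)
        (hasDerivAt_sg (r⁻¹ * (u z - c) + 2)) |>.congr_fun hΩ hzΩ (fun y _ => by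
          show sg _ = sg _
          congr 2; ring)
    rw [e] at hζ
    obtain ⟨-, hp2, hd⟩ := flux_div hΩ hu hzΩ (hη.mul hζ)
    have hp3 := hp2.add (((hη.mul hζ).sub (((HP.snd z).sub (HP.const y₀ z)).cmul (yb - y₀)⁻¹)).cmul
      (r ^ 2))
    have hp4 : pdy (fun x => θ x * (pdy u x / Wf u x - 1)
      + r ^ 2 * (θ x - (yb - y₀)⁻¹ * (x.2 - y₀))) z = _ := hp3.pdy_eq
    rw [hp4]
    have hP := df_id u z
    have hid := flux_id u z
    have hd0 := df_nonneg u z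
    have hx : |z.1 - x₀| ≤ 2 * r := by
      rw [abs_le]; constructor <;> linarith [hz.1.1, hz.1.2]
    have hb := bpd_sq_le h2r hx
    have hη0 := bp_nonneg x₀ (2 * r) z.1
    have hη1 := bp_le_one x₀ (2 * r) z.1
    have hζ0 := sg_nonneg ((u z - c) / r + 2)
    have hζ1 := sg_le_one ((u z - c) / r + 2)
    have hζd0 := sgd_nonneg ((u z - c) / r + 2)
    have hζd1 := sgd_le_one ((u z - c) / r + 2)
    have hWp := Wf_pos u z
    have hWi0 : 0 ≤ 1 / Wf u z := by positivity
    have hθW : 0 ≤ bp x₀ (2 * r) z.1 * sg ((u z - c) / r + 2) / Wf u z := by positivity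
    have hP2 : (pdx u z / Wf u z) ^ 2 ≤ 2 * df u z := by
      nlinarith [sq_nonneg (df u z), sq_nonneg (1 / Wf u z)]
    have hV2 : (1 / Wf u z) ^ 2 ≤ 2 * df u z := by
      nlinarith [sq_nonneg (df u z), sq_nonneg (pdx u z / Wf u z)]
    have hz0 : 0 ≤ sgd ((u z - c) / r + 2) * r⁻¹ := by positivity
    have hz1 : sgd ((u z - c) / r + 2) * r⁻¹ ≤ 1 / r := by
      rw [one_div]; exact mul_le_of_le_one_left (by positivity) hζd1
    have halg := slab_alg hr hκ hP2 hd0 hη1 hb hζ0 hζ1 hz0 hz1 hθW hWi0 hV2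
    rw [← sub_nonneg]
    refine halg.trans_eq ?_
    simp only [hKdef, hθ]
    linear_combination (-(bp x₀ (2 * r) z.1 * (sgd ((u z - c) / r + 2) * r⁻¹))) * hid - hd
  have hgc : ContinuousOn (fun z => sgd ((u z - c) / r + 2) * (Wf u z - pdy u z + r ^ 2 * pdy u z))
      (THalfStrip w) := by
    refine ContinuousOn.mul ?_ (((hs.Wf hΩ).continuousOn.sub (hs.py hΩ).continuousOn).add
      (continuousOn_const.mul (hs.py hΩ).continuousOn))
    exact continuous_sgd.comp_continuousOn
      (((hs.continuousOn.sub continuousOn_const).div_const r).add continuousOn_const)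
  have main := integral_le_of_div (B := B)
    (g := fun z => 9 / 16 * r⁻¹ * (sgd ((u z - c) / r + 2) *
      (Wf u z - pdy u z + r ^ 2 * pdy u z))) hΩ hV1 hV2'
    (by linarith : x₀ - 2 * r ≤ x₀ + 2 * r)
    (by linarith : y₀ ≤ yb) hbox
    (fun y _ => by simp [hθ, bp_left h2r]) (fun y _ => by simp [hθ, bp_right h2r])
    (fun x hx => by
      have : (u (x, y₀) - c) / r + 2 ≤ 0 := by
        have := hlow x hx
        have h2 : (u (x, y₀) - c) / r ≤ -2 := by rw [div_le_iff₀ hr]; linarith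
        linarith
      simp [hθ, sg_eq_zero this])
    (fun x hx => by
      have h1 := df_nonneg u (x, yb)
      have h2 := hθ0 (x, yb)
      have h3 := hθ1 (x, yb)
      have h4 : (yb - y₀)⁻¹ * (yb - y₀) = 1 := inv_mul_cancel₀ hh.ne'
      show θ (x, yb) * (pdy u (x, yb) / Wf u (x, yb) - 1)
        + r ^ 2 * (θ (x, yb) - (yb - y₀)⁻¹ * (yb - y₀)) ≤ 0
      rw [h4]
      unfold df at h1
      nlinarith [sq_nonneg r])
    (measurableSet_Icc.prod measurableSet_Icc) hBR
    ((integrableOn_box hgc hBΩ).const_mul _) hK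
    (fun z hz => le_trans (by
      have := hWq z
      have := bp_nonneg x₀ (2 * r) z.1
      have := sgd_nonneg ((u z - c) / r + 2)
      positivity) (key z hz))
    (fun z hz => le_trans (by
      have h2 := le_bp h2r (x := z.1) (x₀ := x₀) (by
        rw [abs_le]; constructor <;> linarith [hz.1.1, hz.1.2])
      have h3 : 0 ≤ sgd ((u z - c) / r + 2) * r⁻¹ * (Wf u z - pdy u z + r ^ 2 * pdy u z) :=
        mul_nonneg (mul_nonneg (sgd_nonneg _) (by positivity)) (hWq z)
      nlinarith [mul_le_mul_of_nonneg_right h2 h3]) (key z (hBR hz)))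
  have hS1 : ∫ z in R, df u z ≤ 242 * w ^ 3 / L := by
    refine le_trans (setIntegral_mono_set (integrableOn_box (Ω := THalfStrip w) hdc ?_) ?_ ?_)
      (defect_integral_le hw hu h0 hL hLx hy0 (by linarith : y₀ ≤ yb) hyb)
    · exact box_subset (by linarith) hy0 hyb
    · exact Eventually.of_forall fun z => df_nonneg u z
    · exact (Set.prod_mono (Icc_subset_Icc (by linarith) (by linarith)) Subset.rfl).eventuallyLE
  have hKi : ∫ z in R, K z = 3 / r * (κ * (4 * r * (yb - y₀)) + κ⁻¹ * ∫ z in R, df u z)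
      + r ^ 2 * (4 * r) := by
    have hdi := integrableOn_box hdc hbox
    have e1 : ∀ z, K z = (3 / r * κ + r ^ 2 * (yb - y₀)⁻¹) + (3 / r * κ⁻¹) * df u z := fun z => by
      simp only [hKdef]; ring
    have hc : IntegrableOn (fun _ : ℝ × ℝ => (3 / r * κ + r ^ 2 * (yb - y₀)⁻¹)) R :=
      integrableOn_box (Ω := THalfStrip w) continuousOn_const hbox
    rw [integral_congr_ae (Eventually.of_forall e1), integral_add hc (hdi.const_mul _),
      integral_const_mul, setIntegral_const, volume_real_box (by linarith) (by linarith), smul_eq_mul]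
    field_simp
    ring
  rw [integral_const_mul, hKi] at main
  set I := ∫ z in B, sgd ((u z - c) / r + 2) * (Wf u z - pdy u z + r ^ 2 * pdy u z)
  have h5 : 3 / r * (κ * (4 * r * (yb - y₀)) + κ⁻¹ * ∫ z in R, df u z) + r ^ 2 * (4 * r)
      ≤ 3 / r * (κ * (4 * r * w) + κ⁻¹ * (242 * w ^ 3 / L)) + r ^ 2 * (4 * r) := by
    gcongr; linarith
  have h6 := main.trans h5
  have h7 : I = 16 / 9 * r * (9 / 16 * r⁻¹ * I) := by field_simp
  rw [h7]
  calc 16 / 9 * r * (9 / 16 * r⁻¹ * I)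
      ≤ 16 / 9 * r * (3 / r * (κ * (4 * r * w) + κ⁻¹ * (242 * w ^ 3 / L)) + r ^ 2 * (4 * r)) := by
        gcongr
    _ = 16 / 3 * (4 * κ * r * w + 242 * w ^ 3 / (κ * L)) + 64 / 9 * r ^ 4 := by field_simp; ring
    _ ≤ _ := by gcongr; norm_num

/-- The second flux estimate with the parameters chosen: far out, everything but the last term is
negligible. -/
lemma slab_small (hw : 0 < w) (hu : IsTranslatorOn (THalfStrip w) u)
    (h0 : ∀ x : ℝ, 0 < x → Tendsto u (nhdsWithin (x, 0) (THalfStrip w)) atBot)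
    {r ε : ℝ} (hr : 0 < r) (hr1 : r ≤ 1) (hε : 0 < ε) :
    ∃ X > 0, ∀ x₀ > X, r < x₀ ∧ ∀ c ya yb, 0 < ya → ya ≤ yb → yb < w →
      ∫ z in Icc (x₀ - r) (x₀ + r) ×ˢ Icc ya yb,
        sgd ((u z - c) / r + 2) * (Wf u z - pdy u z + r ^ 2 * pdy u z) ≤ ε + 8 * r ^ 4 := by
  set κ := ε / (64 * w) with hκd
  have hκ : 0 < κ := by positivity
  set L := max 4 (242 * w ^ 3 * 16 / (κ * ε)) with hLd
  have hL4 : 4 ≤ L := le_max_left _ _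
  refine ⟨L, by linarith, fun x₀ hx => ⟨by linarith, fun c ya yb h1 h2 h3 => ?_⟩⟩
  refine (slab_integral_le hw hu h0 c hr hr1 hκ (by linarith) hx h1 h2 h3).trans ?_
  have e1 : 4 * κ * r * w ≤ ε / 16 := by
    calc 4 * κ * r * w ≤ 4 * κ * 1 * w := by gcongr
      _ = ε / 16 := by rw [hκd]; field_simp; norm_num
  have e2 : 242 * w ^ 3 / (κ * L) ≤ ε / 16 := by
    have : 242 * w ^ 3 * 16 / (κ * ε) ≤ L := le_max_right _ _
    rw [div_le_iff₀ (by positivity)] at this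
    rw [div_le_div_iff₀ (by positivity) (by norm_num)]
    linarith
  linarith

end Est

/-! ### A truncated almost-fundamental solution -/

section Kernel

variable {r δ s : ℝ}

/-- Minus the derivative of the kernel `Psi`. -/
def Kf (r δ s : ℝ) : ℝ :=
  (1 / (s + δ ^ 2) + 2 / √(s + δ ^ 2)) * (max (1 - s / r ^ 2) 0) ^ 2

/-- The derivative of `Kf`. -/
def Kd (r δ s : ℝ) : ℝ :=
  (-(1 / (s + δ ^ 2) ^ 2) - 1 / ((s + δ ^ 2) * √(s + δ ^ 2))) * (max (1 - s / r ^ 2) 0) ^ 2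
    + (1 / (s + δ ^ 2) + 2 / √(s + δ ^ 2)) * (-(2 / r ^ 2) * max (1 - s / r ^ 2) 0)

/-- A kernel which, composed with the squared distance in `ℝ³` to a point of the graph, is a
regularization at scale `δ` of a fundamental solution, truncated at distance `r`. -/
def Psi (r δ s : ℝ) : ℝ := -∫ t in (r ^ 2)..s, Kf r δ t

lemma hasDerivAt_Kf (hs : 0 < s + δ ^ 2) : HasDerivAt (Kf r δ) (Kd r δ s) s := by
  have h1 : HasDerivAt (fun s : ℝ => s + δ ^ 2) 1 s := (hasDerivAt_id s).add_const _
  have h2 := h1.sqrt hs.ne'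
  have hq : 0 < √(s + δ ^ 2) := Real.sqrt_pos.2 hs
  have h3 := ((hasDerivAt_const s (1 : ℝ)).div h1 hs.ne').add
    ((hasDerivAt_const s (2 : ℝ)).div h2 hq.ne')
  have h4 : HasDerivAt (fun s : ℝ => 1 - s / r ^ 2) (-(1 / r ^ 2)) s := by
    simpa using ((hasDerivAt_id s).div_const (r ^ 2)).const_sub 1
  have h5 := (hasDerivAt_maxsq (1 - s / r ^ 2)).comp s h4
  refine (h3.mul h5).congr_deriv ?_
  unfold Kd
  have hsq : √(s + δ ^ 2) ^ 2 = s + δ ^ 2 := Real.sq_sqrt hs.le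
  have e1 : (0 * √(s + δ ^ 2) - 2 * (1 / (2 * √(s + δ ^ 2)))) / √(s + δ ^ 2) ^ 2
      = - (1 / ((s + δ ^ 2) * √(s + δ ^ 2))) := by
    rw [hsq]; field_simp; ring
  simp only [Function.comp, Pi.add_apply, Pi.div_apply]
  rw [e1]
  ring

lemma contDiffOn_Kf : ContDiffOn ℝ 1 (Kf r δ) (Ioi (-δ ^ 2)) := by
  have h0 : ∀ s ∈ Ioi (-δ ^ 2), 0 < s + δ ^ 2 := fun s hs => by
    rw [mem_Ioi] at hs; linarith
  have h1 : ContDiffOn ℝ 1 (fun s : ℝ => s + δ ^ 2) (Ioi (-δ ^ 2)) :=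
    contDiffOn_id.add contDiffOn_const
  refine ContDiffOn.mul (ContDiffOn.add ?_ ?_) ?_
  · exact contDiffOn_const.div h1 fun s hs => (h0 s hs).ne'
  · exact contDiffOn_const.div (h1.sqrt fun s hs => (h0 s hs).ne')
      fun s hs => (Real.sqrt_pos.2 (h0 s hs)).ne'
  · exact (contDiff_maxsq.comp
      (contDiff_const.sub (contDiff_id.div_const (r ^ 2)))).contDiffOn

lemma Kf_eq_zero (hr : 0 < r) (h : r ^ 2 ≤ s) : Kf r δ s = 0 := by
  unfold Kf
  have : 1 - s / r ^ 2 ≤ 0 := by rw [sub_nonpos, le_div_iff₀ (by positivity)]; linarith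
  rw [max_eq_right this]; simp

lemma Kf_nonneg (h : 0 ≤ s) : 0 ≤ Kf r δ s := by
  unfold Kf
  have : 0 ≤ s + δ ^ 2 := by positivity
  positivity

lemma hasDerivAt_Psi (hδ : 0 < δ) (hs : -δ ^ 2 < s) : HasDerivAt (Psi r δ) (-Kf r δ s) s := by
  have hc : ContinuousOn (Kf r δ) (Ioi (-δ ^ 2)) := contDiffOn_Kf.continuousOn
  have hsub : uIcc (r ^ 2) s ⊆ Ioi (-δ ^ 2) := by
    refine ordConnected_Ioi.uIcc_subset ?_ hs
    rw [mem_Ioi]; nlinarith [sq_nonneg r, pow_pos hδ 2]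
  refine HasDerivAt.neg ?_
  refine intervalIntegral.integral_hasDerivAt_right (hc.mono hsub).intervalIntegrable ?_
    (hc.continuousAt (Ioi_mem_nhds hs))
  exact hc.stronglyMeasurableAtFilter isOpen_Ioi s hs

lemma contDiffOn_Psi (hδ : 0 < δ) : ContDiffOn ℝ 2 (Psi r δ) (Ioi (-δ ^ 2)) := by
  have h2 : (2 : WithTop ℕ∞) = 1 + 1 := by norm_num
  rw [h2, contDiffOn_succ_iff_deriv_of_isOpen isOpen_Ioi]
  refine ⟨fun s hs => (hasDerivAt_Psi hδ hs).differentiableAt.differentiableWithinAt,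
    by simp, ?_⟩
  exact contDiffOn_Kf.neg.congr fun s hs => (hasDerivAt_Psi hδ hs).deriv

lemma Psi_eq_zero (hr : 0 < r) (h : r ^ 2 ≤ s) : Psi r δ s = 0 := by
  unfold Psi
  rw [intervalIntegral.integral_congr (g := fun _ => 0)]
  · simp
  · intro t ht
    rw [uIcc_of_le h] at ht
    exact Kf_eq_zero hr ht.1

lemma Psi_nonneg (hs : 0 ≤ s) (hr : 0 < r) : 0 ≤ Psi r δ s := by
  rcases le_total (r ^ 2) s with h | h
  · rw [Psi_eq_zero hr h]
  · unfold Psi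
    rw [← intervalIntegral.integral_symm]
    exact intervalIntegral.integral_nonneg h fun t ht => Kf_nonneg (hs.trans ht.1)

/-- The differential inequality satisfied by the kernel, in terms of the squared distance `s`, its
image `A (4 + 2 ζ)` under the operator, and its squared gradient `G`. -/
lemma kernel_ineq {A G ζ : ℝ} (hr : 0 < r) (hr1 : r ≤ 1 / 4) (hδ : 0 < δ) (hδ1 : δ ≤ 1 / 4)
    (hs : 0 ≤ s) (hA : 0 ≤ A) (hG : G ≤ 4 * s * A) (hζ : ζ ^ 2 ≤ s) :
    -Kf r δ s * (A * (4 + 2 * ζ)) + -Kd r δ s * G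
      ≤ A * (-(4 * (max (1 - s / r ^ 2) 0) ^ 2 * δ ^ 2 / (s + δ ^ 2) ^ 2)
        + 16 / r ^ 2 * max (1 - s / r ^ 2) 0) := by
  rcases le_total (r ^ 2) s with h | h
  · have hb : max (1 - s / r ^ 2) 0 = 0 := by
      refine max_eq_right ?_
      rw [sub_nonpos, le_div_iff₀ (by positivity)]; linarith
    unfold Kf Kd
    rw [hb]; simp
  · have hD : 0 < s + δ ^ 2 := by positivity
    obtain ⟨t, ht0, ht⟩ : ∃ t, 0 < t ∧ t ^ 2 = s + δ ^ 2 :=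
      ⟨_, Real.sqrt_pos.2 hD, Real.sq_sqrt hD.le⟩
    have hsq : √(s + δ ^ 2) = t := by rw [← ht, Real.sqrt_sq ht0.le]
    have hr2 : r ^ 2 ≤ 1 / 16 := by nlinarith
    have hδ2 : δ ^ 2 ≤ 1 / 16 := by nlinarith
    have ht1 : t ≤ 1 / 2 := by nlinarith
    have hζt : |ζ| ≤ t := abs_le_of_sq_le_sq (by nlinarith [sq_nonneg δ]) ht0.le
    have hζ1 := (abs_le.1 hζt).1
    unfold Kf Kd
    rw [hsq, ← ht]
    have hb0 : 0 ≤ max (1 - s / r ^ 2) 0 := le_max_right _ _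
    set b := max (1 - s / r ^ 2) 0
    have hst : s = t ^ 2 - δ ^ 2 := by linarith
    -- the terms with the full cutoff
    have t1 : -((1 / t ^ 2 + 2 / t) * b ^ 2) * (A * (4 + 2 * ζ))
        + (1 / (t ^ 2) ^ 2 + 1 / (t ^ 2 * t)) * b ^ 2 * G
        ≤ A * (-(4 * b ^ 2 * δ ^ 2 / (t ^ 2) ^ 2)) := by
      have g1 : (1 / (t ^ 2) ^ 2 + 1 / (t ^ 2 * t)) * b ^ 2 * G
          ≤ (1 / (t ^ 2) ^ 2 + 1 / (t ^ 2 * t)) * b ^ 2 * (4 * s * A) := by gcongr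
      have g2 : 0 ≤ A * b ^ 2 / t ^ 3 * (2 * t * ζ + 4 * t ^ 2 + 4 * t ^ 2 * ζ + 4 * δ ^ 2) := by
        refine mul_nonneg (by positivity) ?_
        nlinarith [mul_nonneg ht0.le (by linarith : (0:ℝ) ≤ ζ + t), sq_nonneg δ, sq_nonneg t,
          mul_nonneg (sq_nonneg t) (by linarith : (0:ℝ) ≤ ζ + 1 / 2)]
      have g3 : A * (-(4 * b ^ 2 * δ ^ 2 / (t ^ 2) ^ 2))
          - (-((1 / t ^ 2 + 2 / t) * b ^ 2) * (A * (4 + 2 * ζ))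
            + (1 / (t ^ 2) ^ 2 + 1 / (t ^ 2 * t)) * b ^ 2 * (4 * s * A))
          = A * b ^ 2 / t ^ 3 * (2 * t * ζ + 4 * t ^ 2 + 4 * t ^ 2 * ζ + 4 * δ ^ 2) := by
        rw [hst]; field_simp; ring
      linarith
    -- the terms with a derivative of the cutoff
    have t2 : (1 / t ^ 2 + 2 / t) * (2 / r ^ 2 * b) * G ≤ A * (16 / r ^ 2 * b) := by
      have g0 : s ≤ t ^ 2 := by nlinarith [sq_nonneg δ]
      calc (1 / t ^ 2 + 2 / t) * (2 / r ^ 2 * b) * G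
          ≤ (1 / t ^ 2 + 2 / t) * (2 / r ^ 2 * b) * (4 * t ^ 2 * A) := by
            gcongr; exact hG.trans (by gcongr)
        _ = (8 * (1 + 2 * t)) * (A * b / r ^ 2) := by field_simp; ring
        _ ≤ 16 * (A * b / r ^ 2) := by gcongr; linarith
        _ = _ := by ring
    linarith

end Kernel

/-! ### A mean value inequality on the graph -/

section MeanValue

variable {Ω : Set (ℝ × ℝ)} {u : ℝ × ℝ → ℝ} {z p₀ : ℝ × ℝ} {r δ : ℝ}

/-- The squared distance in `ℝ³` between the points of the graph above `z` and above `p₀`. -/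
def ro (u : ℝ × ℝ → ℝ) (p₀ z : ℝ × ℝ) : ℝ :=
  (z.1 - p₀.1) ^ 2 + (z.2 - p₀.2) ^ 2 + (u z - u p₀) ^ 2

lemma ro_nonneg (u : ℝ × ℝ → ℝ) (p₀ z : ℝ × ℝ) : 0 ≤ ro u p₀ z := by unfold ro; positivity

lemma Sm.ro (h : Sm Ω u) : Sm Ω (ro u p₀) := by
  unfold Sm at *
  refine ContDiffOn.add (ContDiffOn.add ?_ ?_) ?_
  · exact (contDiff_fst.contDiffOn.sub contDiffOn_const).pow 2
  · exact (contDiff_snd.contDiffOn.sub contDiffOn_const).pow 2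
  · exact (h.sub contDiffOn_const).pow 2

lemma HP_ro (hΩ : IsOpen Ω) (h : Sm Ω u) (hz : z ∈ Ω) :
    HP (ro u p₀) z (2 * (z.1 - p₀.1) + 2 * (u z - u p₀) * pdx u z)
      (2 * (z.2 - p₀.2) + 2 * (u z - u p₀) * pdy u z) := by
  have h1 := (((HP.fst z).sub (HP.const p₀.1 z)).sq.add ((HP.snd z).sub (HP.const p₀.2 z)).sq).add
    ((h.hp hΩ hz).sub (HP.const (u p₀) z)).sq
  exact h1.congr' (by ring) (by ring)

lemma Lop_ro (hΩ : IsOpen Ω) (hu : IsTranslatorOn Ω u) (hz : z ∈ Ω) :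
    Lop u (ro u p₀) z = Wf u z ^ 2 * (4 + 2 * (u z - u p₀)) := by
  have hs : Sm Ω u := hu.1
  have hE := hu.2 z hz
  have hp := C2.hpx hΩ hs.two hz
  have hq := C2.hpy hΩ hs.two hz
  have hζ := (hs.hp hΩ hz).sub (HP.const (u p₀) z)
  rw [Lop_eq hΩ hz (fun y hy => HP_ro hΩ hs hy)
    ((((HP.fst z).sub (HP.const p₀.1 z)).cmul 2).add ((hζ.cmul 2).mul hp))
    ((((HP.snd z).sub (HP.const p₀.2 z)).cmul 2).add ((hζ.cmul 2).mul hq)), Wf_sq]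
  linear_combination (2 * (u z - u p₀)) * hE

lemma Gop_ro_le (hΩ : IsOpen Ω) (hs : Sm Ω u) (hz : z ∈ Ω) :
    Gop u (ro u p₀) (ro u p₀) z ≤ 4 * ro u p₀ z * Wf u z ^ 2 := by
  have h := HP_ro (p₀ := p₀) hΩ hs hz
  unfold Gop
  rw [h.pdx_eq, h.pdy_eq, Wf_sq]
  unfold ro
  nlinarith [sq_nonneg ((u z - u p₀) - pdx u z * (z.1 - p₀.1) - pdy u z * (z.2 - p₀.2))]

lemma contDiffOn_Psi_ro (hs : Sm Ω u) (hδ : 0 < δ) :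
    ContDiffOn ℝ 2 (fun z => Psi r δ (ro u p₀ z)) Ω :=
  (contDiffOn_Psi hδ).comp (hs.ro (p₀ := p₀)).two fun z _ => by
    rw [mem_Ioi]; nlinarith [ro_nonneg u p₀ z, pow_pos hδ 2]

lemma Lop_Psi_le (hΩ : IsOpen Ω) (hu : IsTranslatorOn Ω u) (hz : z ∈ Ω) (hr : 0 < r)
    (hr1 : r ≤ 1 / 4) (hδ : 0 < δ) (hδ1 : δ ≤ 1 / 4) :
    Lop u (fun z => Psi r δ (ro u p₀ z)) z ≤ Wf u z ^ 2 *
      (-(4 * (max (1 - ro u p₀ z / r ^ 2) 0) ^ 2 * δ ^ 2 / (ro u p₀ z + δ ^ 2) ^ 2)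
        + 16 / r ^ 2 * max (1 - ro u p₀ z / r ^ 2) 0) := by
  have hs : Sm Ω u := hu.1
  have hpos : ∀ y, 0 < ro u p₀ y + δ ^ 2 := fun y => by
    have := ro_nonneg u p₀ y
    positivity
  rw [Lop_comp hΩ hz (hs.ro (p₀ := p₀)).two (φ := Psi r δ) (φ' := fun s => -Kf r δ s)
    (d := -Kd r δ (ro u p₀ z)) (fun y _ => hasDerivAt_Psi hδ (by linarith [hpos y]))
    (hasDerivAt_Kf (hpos z)).neg, Lop_ro hΩ hu hz]
  refine kernel_ineq hr hr1 hδ hδ1 (ro_nonneg u p₀ z) (sq_nonneg _) (Gop_ro_le hΩ hs hz) ?_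
  unfold ro
  nlinarith [sq_nonneg (z.1 - p₀.1), sq_nonneg (z.2 - p₀.2)]

lemma fz_nonneg (u : ℝ × ℝ → ℝ) (z : ℝ × ℝ) : 0 ≤ fz u z := by
  have h1 := abs_lt.1 (abs_pdy_lt_Wf u z)
  have h2 := Wf_pos u z
  unfold fz
  exact div_nonneg (by linarith) (by linarith)

lemma fz_pos (u : ℝ × ℝ → ℝ) (z : ℝ × ℝ) : 0 < fz u z := by
  have h1 := abs_lt.1 (abs_pdy_lt_Wf u z)
  have h2 := Wf_pos u z
  unfold fz
  exact div_pos (by linarith) (by linarith)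

/-- The squared distance dominates the defect of `fz` from being a subsolution. -/
lemma Lop_ft_nonneg (hΩ : IsOpen Ω) (hu : IsTranslatorOn Ω u) (hz : z ∈ Ω)
    (hζ : |u z - u p₀| ≤ 1) : 0 ≤ Lop u (fun z => fz u z + ro u p₀ z) z := by
  have hs : Sm Ω u := hu.1
  rw [Lop_add hΩ hz (hs.fz hΩ).two hs.ro.two, Lop_ro hΩ hu hz]
  have h1 := Lop_fz_ge hΩ hu hz
  have h2 : 1 ≤ Wf u z ^ 2 := one_le_pow₀ (one_le_Wf u z)
  have h3 := (abs_le.1 hζ).1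
  nlinarith

/-- Application of Green's identity to `fz + ro` and the kernel. -/
lemma green_kernel (hΩ : IsOpen Ω) (hu : IsTranslatorOn Ω u) {ya yb : ℝ} (hr : 0 < r)
    (hr1 : r ≤ 1 / 4) (hδ : 0 < δ) (hδ1 : δ ≤ 1 / 4) (hy : ya ≤ yb)
    (hbox : Icc (p₀.1 - r) (p₀.1 + r) ×ˢ Icc ya yb ⊆ Ω)
    (hlo : ∀ x ∈ Icc (p₀.1 - r) (p₀.1 + r), u (x, ya) < u p₀ - r)
    (hhi : ∀ x ∈ Icc (p₀.1 - r) (p₀.1 + r), u p₀ + r < u (x, yb))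
    {B : Set (ℝ × ℝ)} (hB : MeasurableSet B)
    (hBR : B ⊆ Icc (p₀.1 - r) (p₀.1 + r) ×ˢ Icc ya yb) {H : ℝ}
    (hH : ∀ z ∈ B, H ≤ exp (u z) * Wf u z * (fz u z + ro u p₀ z) *
      (4 * (max (1 - ro u p₀ z / r ^ 2) 0) ^ 2 * δ ^ 2 / (ro u p₀ z + δ ^ 2) ^ 2)) :
    volume.real B * H ≤ ∫ z in Icc (p₀.1 - r) (p₀.1 + r) ×ˢ Icc ya yb,
      16 / r ^ 2 * (exp (u z) * Wf u z * (fz u z + ro u p₀ z) * max (1 - ro u p₀ z / r ^ 2) 0) := by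
  have hs : Sm Ω u := hu.1
  have hf2 : ContDiffOn ℝ 2 (fun z => fz u z + ro u p₀ z) Ω := (hs.fz hΩ).two.add hs.ro.two
  have hg2 : ContDiffOn ℝ 2 (fun z => Psi r δ (ro u p₀ z)) Ω := contDiffOn_Psi_ro hs hδ
  have key : ∀ z ∈ Icc (p₀.1 - r) (p₀.1 + r) ×ˢ Icc ya yb,
      exp (u z) * Wf u z * (fz u z + ro u p₀ z) *
      (4 * (max (1 - ro u p₀ z / r ^ 2) 0) ^ 2 * δ ^ 2 / (ro u p₀ z + δ ^ 2) ^ 2) ≤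
      Real.exp (u z) / Wf u z * (Psi r δ (ro u p₀ z) * Lop u (fun z => fz u z + ro u p₀ z) z
        - (fz u z + ro u p₀ z) * Lop u (fun z => Psi r δ (ro u p₀ z)) z)
      + 16 / r ^ 2 * (exp (u z) * Wf u z * (fz u z + ro u p₀ z) *
          max (1 - ro u p₀ z / r ^ 2) 0) := by
    intro z hz
    have hzΩ := hbox hz
    have hW := Wf_pos u z
    have hρ := ro_nonneg u p₀ z
    have hfn : 0 ≤ fz u z + ro u p₀ z := add_nonneg (fz_nonneg u z) hρ
    have hL := Lop_Psi_le (p₀ := p₀) hΩ hu hzΩ hr hr1 hδ hδ1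
    have hP : 0 ≤ Psi r δ (ro u p₀ z) * Lop u (fun z => fz u z + ro u p₀ z) z := by
      rcases le_total (r ^ 2) (ro u p₀ z) with h | h
      · rw [Psi_eq_zero hr h, zero_mul]
      · refine mul_nonneg (Psi_nonneg hρ hr) (Lop_ft_nonneg hΩ hu hzΩ ?_)
        have : |u z - u p₀| ≤ r := by
          refine abs_le_of_sq_le_sq (le_trans ?_ h) hr.le
          unfold ro
          nlinarith [sq_nonneg (z.1 - p₀.1), sq_nonneg (z.2 - p₀.2)]
        linarith
    have hL2 := mul_le_mul_of_nonneg_left hL hfn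
    have he : 0 ≤ Real.exp (u z) / Wf u z := by positivity
    have h3 := mul_le_mul_of_nonneg_left (sub_le_sub hP hL2) he
    have e : Real.exp (u z) / Wf u z * Wf u z ^ 2 = Real.exp (u z) * Wf u z := by
      field_simp
    set T := 4 * (max (1 - ro u p₀ z / r ^ 2) 0) ^ 2 * δ ^ 2 / (ro u p₀ z + δ ^ 2) ^ 2
    set b := max (1 - ro u p₀ z / r ^ 2) 0
    have e2 : Real.exp (u z) / Wf u z * (0 - (fz u z + ro u p₀ z) *
        (Wf u z ^ 2 * (-T + 16 / r ^ 2 * b)))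
        = exp (u z) * Wf u z * (fz u z + ro u p₀ z) * T
          - 16 / r ^ 2 * (exp (u z) * Wf u z * (fz u z + ro u p₀ z) * b) := by
      linear_combination (-(fz u z + ro u p₀ z) * (-T + 16 / r ^ 2 * b)) * e
    linarith
  have hfin : volume B ≠ ⊤ := by
    refine ne_top_of_le_ne_top ?_ (measure_mono hBR)
    exact (isCompact_Icc.prod isCompact_Icc).measure_lt_top.ne
  have hcρ := (hs.ro (p₀ := p₀)).continuousOn
  have main := green hΩ hu hf2 hg2 (by linarith : p₀.1 - r ≤ p₀.1 + r) hy hbox ?_ hB hBR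
    (h := fun _ => H)
    (K := fun z => 16 / r ^ 2 * (exp (u z) * Wf u z * (fz u z + ro u p₀ z) *
          max (1 - ro u p₀ z / r ^ 2) 0))
    (integrableOn_const hfin) ?_ (fun z hz => le_trans ?_ (key z hz))
    (fun z hz => (hH z hz).trans (key z (hBR hz)))
  · rwa [setIntegral_const, smul_eq_mul] at main
  · intro x hx y hy' hor
    have hzΩ : (x, y) ∈ Ω := hbox ⟨hx, hy'⟩
    have hρ : r ^ 2 ≤ ro u p₀ (x, y) := by
      unfold ro
      have q1 := sq_nonneg (x - p₀.1)
      have q2 := sq_nonneg (y - p₀.2)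
      have q3 := sq_nonneg (u (x, y) - u p₀)
      rcases hor with rfl | rfl | rfl | rfl
      · nlinarith
      · nlinarith
      · have := hlo x hx
        nlinarith
      · have := hhi x hx
        nlinarith
    have hpos := ro_nonneg u p₀ (x, y)
    have hd := (HP_ro (p₀ := p₀) hΩ hs hzΩ).comp (hasDerivAt_Psi (r := r) (s := ro u p₀ (x, y)) hδ
      (by nlinarith [pow_pos hδ 2]))
    refine ⟨Psi_eq_zero hr hρ, ?_, ?_⟩
    · rw [hd.pdx_eq, Kf_eq_zero hr hρ]; simp
    · rw [hd.pdy_eq, Kf_eq_zero hr hρ]; simp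
  · refine continuousOn_const.mul (((hs.continuousOn.rexp.mul (hs.Wf hΩ).continuousOn).mul
      ((hs.fz hΩ).continuousOn.add hcρ)).mul ?_)
    exact (continuousOn_const.sub (hcρ.div_const _)).sup continuousOn_const
  · have h1 := ro_nonneg u p₀ z
    have h2 := fz_nonneg u z
    have h3 := Wf_pos u z
    positivity

end MeanValue

section MeanValue

/-- The ellipse `Q ≤ δ² / 2` of the quadratic form `Q = h² + k² + (α h + β k)²` contains a
parallelogram of area `δ² / √(1 + α² + β²)`, obtained by completing the square in `k`. -/
lemma exists_parallelogram (α β : ℝ) {δ : ℝ} (hδ : 0 < δ) (p₀ : ℝ × ℝ) :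
    ∃ B : Set (ℝ × ℝ), MeasurableSet B ∧ volume.real B = δ ^ 2 / √(1 + α ^ 2 + β ^ 2) ∧
      ∀ z ∈ B, (z.1 - p₀.1) ^ 2 + (z.2 - p₀.2) ^ 2
        + (α * (z.1 - p₀.1) + β * (z.2 - p₀.2)) ^ 2 ≤ δ ^ 2 / 2 := by
  have hW0 : 0 < √(1 + α ^ 2 + β ^ 2) := Real.sqrt_pos.2 (by positivity)
  have hW2 : √(1 + α ^ 2 + β ^ 2) ^ 2 = 1 + α ^ 2 + β ^ 2 := Real.sq_sqrt (by positivity)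
  have hs0 : 0 < √(1 + β ^ 2) := Real.sqrt_pos.2 (by positivity)
  have hs2 : √(1 + β ^ 2) ^ 2 = 1 + β ^ 2 := Real.sq_sqrt (by positivity)
  set W := √(1 + α ^ 2 + β ^ 2)
  set s := √(1 + β ^ 2)
  set A := δ * s / (2 * W) with hA
  set c := δ / (2 * s) with hc
  have hA0 : 0 < A := by positivity
  have hc0 : 0 < c := by positivity
  set m : ℝ → ℝ := fun x => p₀.2 - α * β / (1 + β ^ 2) * (x - p₀.1) with hm
  have hmc : Continuous m := by fun_prop
  refine ⟨regionBetween (fun x => m x - c) (fun x => m x + c) (Icc (p₀.1 - A) (p₀.1 + A)), ?_, ?_, ?_⟩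
  · exact measurableSet_regionBetween (hmc.sub continuous_const).measurable
      (hmc.add continuous_const).measurable measurableSet_Icc
  · have i1 : IntegrableOn (fun x => m x - c) (Icc (p₀.1 - A) (p₀.1 + A)) :=
      (hmc.sub continuous_const).continuousOn.integrableOn_Icc
    have i2 : IntegrableOn (fun x => m x + c) (Icc (p₀.1 - A) (p₀.1 + A)) :=
      (hmc.add continuous_const).continuousOn.integrableOn_Icc
    have hle : ∀ x ∈ Icc (p₀.1 - A) (p₀.1 + A), (fun x => m x - c) x ≤ (fun x => m x + c) x :=
      fun x _ => show m x - c ≤ m x + c by linarith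
    rw [Measure.real, Measure.volume_eq_prod, volume_regionBetween_eq_integral i1 i2
      measurableSet_Icc hle]
    have e : ∀ y, ((fun x => m x + c) - fun x => m x - c) y = 2 * c := fun y => by
      simp only [Pi.sub_apply]; ring
    rw [integral_congr_ae (Eventually.of_forall e), setIntegral_const,
      Real.volume_real_Icc_of_le (by linarith), smul_eq_mul, ENNReal.toReal_ofReal]
    · rw [hA, hc]; field_simp; ring
    · have : 0 ≤ p₀.1 + A - (p₀.1 - A) := by linarith
      positivity
  · rintro z ⟨⟨hz1, hz2⟩, hz3, hz4⟩
    simp only [hm] at hz3 hz4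
    have hb : (1 + β ^ 2) ≠ 0 := by positivity
    set h := z.1 - p₀.1 with hh
    set k := z.2 - p₀.2 with hk
    have hQ : h ^ 2 + k ^ 2 + (α * h + β * k) ^ 2
        = s ^ 2 * (k + α * β / (1 + β ^ 2) * h) ^ 2 + W ^ 2 / s ^ 2 * h ^ 2 := by
      rw [hs2, hW2]; field_simp; ring
    have h1 : (k + α * β / (1 + β ^ 2) * h) ^ 2 ≤ c ^ 2 :=
      sq_le_sq' (by linarith) (by linarith)
    have h2 : h ^ 2 ≤ A ^ 2 := sq_le_sq' (by linarith) (by linarith)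
    rw [hQ]
    calc s ^ 2 * (k + α * β / (1 + β ^ 2) * h) ^ 2 + W ^ 2 / s ^ 2 * h ^ 2
        ≤ s ^ 2 * c ^ 2 + W ^ 2 / s ^ 2 * A ^ 2 := by gcongr
      _ = δ ^ 2 / 2 := by rw [hA, hc]; field_simp; norm_num

variable {Ω : Set (ℝ × ℝ)} {u : ℝ × ℝ → ℝ} {p₀ : ℝ × ℝ} {r : ℝ}

/-- Mean value inequality for `fz`, centred at an arbitrary point of the graph: let the
regularization scale `δ` of `green_kernel` be small, so that the kernel term on the left, integrated
over a parallelogram of area comparable with `δ² / W`, sees essentially the value at the centre. -/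
lemma mean_value (hΩ : IsOpen Ω) (hu : IsTranslatorOn Ω u) {ya yb : ℝ} (hr : 0 < r)
    (hr1 : r ≤ 1 / 4) (hya : ya < p₀.2) (hyb : p₀.2 < yb)
    (hbox : Icc (p₀.1 - r) (p₀.1 + r) ×ˢ Icc ya yb ⊆ Ω)
    (hlo : ∀ x ∈ Icc (p₀.1 - r) (p₀.1 + r), u (x, ya) < u p₀ - r)
    (hhi : ∀ x ∈ Icc (p₀.1 - r) (p₀.1 + r), u p₀ + r < u (x, yb)) :
    fz u p₀ ≤ 1024 / r ^ 2 * ∫ z in Icc (p₀.1 - r) (p₀.1 + r) ×ˢ Icc ya yb,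
      Wf u z * (fz u z + ro u p₀ z) * max (1 - ro u p₀ z / r ^ 2) 0 := by
  have hs : Sm Ω u := hu.1
  set R := Icc (p₀.1 - r) (p₀.1 + r) ×ˢ Icc ya yb with hR
  have hRn : R ∈ nhds p₀ :=
    prod_mem_nhds (Icc_mem_nhds (by linarith) (by linarith)) (Icc_mem_nhds hya hyb)
  have hp₀ : p₀ ∈ Ω := hbox (mem_of_mem_nhds hRn)
  have hΩn : Ω ∈ nhds p₀ := hΩ.mem_nhds hp₀
  have hWp := Wf_pos u p₀
  have hfp := fz_pos u p₀
  -- everything is nearly constant, and `u` nearly affine, close to the centre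
  have c1 : ∀ᶠ z in nhds p₀, Wf u p₀ / 2 < Wf u z :=
    ((hs.Wf hΩ).continuousOn.continuousAt hΩn).eventually (Ioi_mem_nhds (by linarith))
  have c2 : ∀ᶠ z in nhds p₀, fz u p₀ / 2 < fz u z :=
    ((hs.fz hΩ).continuousOn.continuousAt hΩn).eventually (Ioi_mem_nhds (by linarith))
  have c3 : ∀ᶠ z in nhds p₀, ro u p₀ z < r ^ 2 / 2 := by
    refine ((hs.ro (p₀ := p₀)).continuousOn.continuousAt hΩn).eventually (Iio_mem_nhds ?_)
    have : ro u p₀ p₀ = 0 := by simp [ro]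
    rw [this]; positivity
  have c4 : ∀ᶠ z in nhds p₀, exp (u p₀) / 2 < exp (u z) :=
    (hs.continuousOn.rexp.continuousAt hΩn).eventually
      (Ioi_mem_nhds (by linarith [exp_pos (u p₀)]))
  have c5 : ∀ᶠ z in nhds p₀, |u z - u p₀ - (pdx u p₀ * (z.1 - p₀.1) + pdy u p₀ * (z.2 - p₀.2))|
      ≤ 1 / 2 * ‖z - p₀‖ := by
    have h1 : HasFDerivAt u _ p₀ := hs.hp hΩ hp₀
    filter_upwards [h1.isLittleO.bound (by norm_num : (0:ℝ) < 1 / 2)] with z hz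
    simpa [Real.norm_eq_abs] using hz
  obtain ⟨η, hη, hnear⟩ := Metric.eventually_nhds_iff.1
    (c1.and (c2.and (c3.and (c4.and (c5.and hRn)))))
  set δ := min (η / 2) (1 / 4) with hδd
  have hδ : 0 < δ := lt_min (by linarith) (by norm_num)
  have hδ1 : δ ≤ 1 / 4 := min_le_right _ _
  have hδη : δ < η := (min_le_left _ _).trans_lt (by linarith)
  obtain ⟨B, hBm, hBv, hBQ⟩ := exists_parallelogram (pdx u p₀) (pdy u p₀) hδ p₀
  have hBnear : ∀ z ∈ B, dist z p₀ < η := fun z hz => by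
    have := hBQ z hz
    have q1 := sq_nonneg (z.1 - p₀.1)
    have q2 := sq_nonneg (z.2 - p₀.2)
    have q3 := sq_nonneg (pdx u p₀ * (z.1 - p₀.1) + pdy u p₀ * (z.2 - p₀.2))
    have q4 := sq_nonneg δ
    refine lt_of_le_of_lt ?_ hδη
    rw [Prod.dist_eq, Real.dist_eq, Real.dist_eq]
    exact max_le (abs_le_of_sq_le_sq (by linarith) hδ.le) (abs_le_of_sq_le_sq (by linarith) hδ.le)
  have hBro : ∀ z ∈ B, ro u p₀ z ≤ δ ^ 2 := fun z hz => by
    have hQ := hBQ z hz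
    obtain ⟨-, -, -, -, h5, -⟩ := hnear (hBnear z hz)
    have hn : ‖z - p₀‖ ^ 2 ≤ (z.1 - p₀.1) ^ 2 + (z.2 - p₀.2) ^ 2 := by
      rw [Prod.norm_def]
      simp only [Prod.fst_sub, Prod.snd_sub, Real.norm_eq_abs]
      rcases max_cases |z.1 - p₀.1| |z.2 - p₀.2| with h | h <;> rw [h.1, sq_abs] <;>
        nlinarith [sq_nonneg (z.1 - p₀.1), sq_nonneg (z.2 - p₀.2)]
    have h6 := sq_le_sq' (by linarith [(abs_le.1 h5).1]) (le_trans (le_abs_self _) h5)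
    unfold ro
    set l := pdx u p₀ * (z.1 - p₀.1) + pdy u p₀ * (z.2 - p₀.2)
    nlinarith [sq_nonneg (u z - u p₀ - l - l)]
  have hInt := green_kernel hΩ hu hr hr1 hδ hδ1 (hya.le.trans hyb.le) hbox hlo hhi hBm
    (fun z hz => (hnear (hBnear z hz)).2.2.2.2.2)
    (H := (exp (u p₀) / 2) * (Wf u p₀ / 2) * (fz u p₀ / 2) * (1 / (4 * δ ^ 2))) ?_
  · have hWdef : √(1 + pdx u p₀ ^ 2 + pdy u p₀ ^ 2) = Wf u p₀ := rfl
    rw [hBv, hWdef] at hInt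
    have hcb : ContinuousOn (fun z => Wf u z * (fz u z + ro u p₀ z) *
        max (1 - ro u p₀ z / r ^ 2) 0) Ω :=
      ((hs.Wf hΩ).continuousOn.mul ((hs.fz hΩ).continuousOn.add hs.ro.continuousOn)).mul
        ((continuousOn_const.sub (hs.ro.continuousOn.div_const _)).sup continuousOn_const)
    have hcl : ContinuousOn (fun z => 16 / r ^ 2 * (exp (u z) * Wf u z * (fz u z + ro u p₀ z) *
        max (1 - ro u p₀ z / r ^ 2) 0)) Ω :=
      continuousOn_const.mul (((hs.continuousOn.rexp.mul (hs.Wf hΩ).continuousOn).mul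
        ((hs.fz hΩ).continuousOn.add hs.ro.continuousOn)).mul
        ((continuousOn_const.sub (hs.ro.continuousOn.div_const _)).sup continuousOn_const))
    have hmono := setIntegral_mono_on (integrableOn_box hcl hbox)
      ((integrableOn_box hcb hbox).const_mul (32 / r ^ 2 * exp (u p₀)))
      (measurableSet_Icc.prod measurableSet_Icc) (fun z hz => ?_)
    · have h7 := hInt.trans hmono
      rw [integral_const_mul (32 / r ^ 2 * exp (u p₀))] at h7
      set I := ∫ z in R, Wf u z * (fz u z + ro u p₀ z) * max (1 - ro u p₀ z / r ^ 2) 0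
      have e1 : δ ^ 2 / Wf u p₀ * (exp (u p₀) / 2 * (Wf u p₀ / 2) * (fz u p₀ / 2)
          * (1 / (4 * δ ^ 2))) = exp (u p₀) * (fz u p₀ / 32) := by
        field_simp; norm_num
      have e2 : 32 / r ^ 2 * exp (u p₀) * I = exp (u p₀) * (32 / r ^ 2 * I) := by ring
      rw [e1, e2] at h7
      have h8 := le_of_mul_le_mul_left h7 (exp_pos _)
      have e3 : 1024 / r ^ 2 * I = 32 * (32 / r ^ 2 * I) := by ring
      rw [e3]; linarith
    · have g1 := ro_nonneg u p₀ z
      have g2 := fz_nonneg u z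
      have g3 := Wf_pos u z
      rcases le_total (1 - ro u p₀ z / r ^ 2) 0 with h | h
      · simp only [max_eq_right h]; simp
      · have hζ : |u z - u p₀| ≤ r := by
          refine abs_le_of_sq_le_sq ?_ hr.le
          rw [sub_nonneg, div_le_one (by positivity)] at h
          unfold ro at h
          nlinarith [sq_nonneg (z.1 - p₀.1), sq_nonneg (z.2 - p₀.2)]
        have hexp : exp (u z) ≤ 2 * exp (u p₀) := by
          have h9 : exp (u z) = exp (u z - u p₀) * exp (u p₀) := by rw [← exp_add]; ring_nf
          have h10 : exp (u z - u p₀) ≤ 2 := by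
            have h11 : exp (u z - u p₀) ≤ exp (1 / 4) :=
              exp_le_exp.2 ((le_abs_self _).trans (hζ.trans hr1))
            have h12 := Real.exp_bound_div_one_sub_of_interval (x := 1 / 4) (by norm_num) (by norm_num)
            norm_num at h12
            linarith
          rw [h9]; gcongr
        calc 16 / r ^ 2 * (exp (u z) * Wf u z * (fz u z + ro u p₀ z) *
              max (1 - ro u p₀ z / r ^ 2) 0)
            ≤ 16 / r ^ 2 * ((2 * exp (u p₀)) * Wf u z * (fz u z + ro u p₀ z) *
              max (1 - ro u p₀ z / r ^ 2) 0) := by gcongr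
          _ = _ := by ring
  · intro z hz
    obtain ⟨h1, h2, h3, h4, -, -⟩ := hnear (hBnear z hz)
    have h5 := hBro z hz
    have h6 := ro_nonneg u p₀ z
    have h7 : 1 / 2 ≤ max (1 - ro u p₀ z / r ^ 2) 0 := by
      refine le_max_of_le_left ?_
      have : ro u p₀ z / r ^ 2 ≤ 1 / 2 := by rw [div_le_iff₀ (by positivity)]; linarith
      linarith
    have h8 : 1 / (4 * δ ^ 2) ≤ 4 * (max (1 - ro u p₀ z / r ^ 2) 0) ^ 2 * δ ^ 2
        / (ro u p₀ z + δ ^ 2) ^ 2 := by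
      calc 1 / (4 * δ ^ 2) = 4 * (1 / 2) ^ 2 * δ ^ 2 / (δ ^ 2 + δ ^ 2) ^ 2 := by
            field_simp; norm_num
        _ ≤ _ := by gcongr
    have k1 := Wf_pos u z
    have k2 := fz_nonneg u z
    refine mul_le_mul (mul_le_mul (mul_le_mul h4.le h1.le ?_ ?_) ?_ ?_ ?_) h8 ?_ ?_
    all_goals first | positivity | linarith

end MeanValue

/-! ### Smallness of the tilt far out in the half-strip -/

section Conclusion

variable {w : ℝ} {u : ℝ × ℝ → ℝ}

/-- Inside the support of the cutoff, the integrand of the mean value inequality is controlled by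
the integrand of the slab estimate. -/
lemma mean_integrand_le {r : ℝ} (hr : 0 < r) (hr1 : r ≤ 1 / 4) (p₀ z : ℝ × ℝ) :
    Wf u z * (fz u z + ro u p₀ z) * max (1 - ro u p₀ z / r ^ 2) 0
      ≤ 100 * (sgd ((u z - u p₀) / r + 2) * (Wf u z - pdy u z + r ^ 2 * pdy u z)) := by
  have hW := Wf_pos u z
  have hq := abs_lt.1 (abs_pdy_lt_Wf u z)
  have hρ := ro_nonneg u p₀ z
  have hf := fz_nonneg u z
  have hr2 : r ^ 2 ≤ 1 / 2 := by nlinarith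
  have hD : 0 ≤ Wf u z - pdy u z + r ^ 2 * pdy u z := by nlinarith [sq_nonneg r]
  rcases le_total (1 - ro u p₀ z / r ^ 2) 0 with h | h
  · rw [max_eq_right h, mul_zero]
    have := sgd_nonneg ((u z - u p₀) / r + 2)
    positivity
  · rw [max_eq_left h]
    have hb : 1 - ro u p₀ z / r ^ 2 ≤ 1 := by
      have : 0 ≤ ro u p₀ z / r ^ 2 := by positivity
      linarith
    rw [sub_nonneg, div_le_one (by positivity)] at h
    have hζ : |u z - u p₀| ≤ r := by
      refine abs_le_of_sq_le_sq ?_ hr.le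
      have h' := h
      unfold ro at h'
      nlinarith [sq_nonneg (z.1 - p₀.1), sq_nonneg (z.2 - p₀.2)]
    have hs : 1 / 50 ≤ sgd ((u z - u p₀) / r + 2) := by
      have h1 := abs_le.1 hζ
      have h2 : -1 ≤ (u z - u p₀) / r := by rw [le_div_iff₀ hr]; linarith
      have h3 : (u z - u p₀) / r ≤ 1 := by rw [div_le_iff₀ hr]; linarith
      exact le_sgd (by linarith) (by linarith)
    have hWf : Wf u z * fz u z ≤ Wf u z - pdy u z := by
      have : Wf u z * fz u z = (Wf u z - pdy u z) * (Wf u z / (Wf u z + 1)) := by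
        unfold fz; field_simp
      rw [this]
      refine mul_le_of_le_one_right (by linarith) ?_
      rw [div_le_one (by linarith)]; linarith
    have hWρ : Wf u z * ro u p₀ z ≤ Wf u z * r ^ 2 := by gcongr
    have h2 : Wf u z * (fz u z + ro u p₀ z) ≤ 2 * (Wf u z - pdy u z + r ^ 2 * pdy u z) := by
      nlinarith [sq_nonneg r]
    have h3 : 1 / 50 * (Wf u z - pdy u z + r ^ 2 * pdy u z)
        ≤ sgd ((u z - u p₀) / r + 2) * (Wf u z - pdy u z + r ^ 2 * pdy u z) := by gcongr
    have h4 : Wf u z * (fz u z + ro u p₀ z) * (1 - ro u p₀ z / r ^ 2)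
        ≤ Wf u z * (fz u z + ro u p₀ z) := mul_le_of_le_one_right (by positivity) hb
    linarith

/-- Far out in the half-strip, `fz` is bounded by the slab estimate at every height. -/
lemma fz_small (hw : 0 < w) (hu : IsTranslatorOn (THalfStrip w) u)
    (h0 : ∀ x, 0 < x → Tendsto u (nhdsWithin (x, 0) (THalfStrip w)) atBot)
    (h1 : ∀ x, 0 < x → Tendsto u (nhdsWithin (x, w) (THalfStrip w)) atTop)
    {r ε : ℝ} (hr : 0 < r) (hr1 : r ≤ 1 / 4) (hε : 0 < ε) :
    ∃ X > 0, ∀ x y, X < x → 0 < y → y < w →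
      fz u (x, y) ≤ 102400 / r ^ 2 * (ε + 8 * r ^ 4) := by
  obtain ⟨X, hX, hsl⟩ := slab_small hw hu h0 hr (by linarith) hε
  refine ⟨X, hX, fun x y hx hy hyw => ?_⟩
  obtain ⟨hrx, hInt⟩ := hsl x hx
  have hΩ := isOpen_THalfStrip w
  have hs : Sm (THalfStrip w) u := hu.1
  obtain ⟨ya, hya0, hya, hyaw, hlo⟩ := boundary_low hw h0 (a := x - r) (b := x + r)
    (by linarith) hy (u (x, y) - r)
  obtain ⟨yb, hyb0, hyb, hybw, hhi⟩ := boundary_high hw h1 (a := x - r) (b := x + r)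
    (by linarith) hyw (u (x, y) + r)
  have hbox : Icc (x - r) (x + r) ×ˢ Icc ya yb ⊆ THalfStrip w :=
    box_subset (by linarith) hya0 hybw
  have hmv := mean_value (p₀ := (x, y)) hΩ hu hr hr1 hya hyb hbox hlo hhi
  have hcb : ContinuousOn (fun z => Wf u z * (fz u z + ro u (x, y) z) *
      max (1 - ro u (x, y) z / r ^ 2) 0) (THalfStrip w) :=
    ((hs.Wf hΩ).continuousOn.mul ((hs.fz hΩ).continuousOn.add hs.ro.continuousOn)).mul
      ((continuousOn_const.sub (hs.ro.continuousOn.div_const _)).sup continuousOn_const)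
  have hgc : ContinuousOn (fun z => sgd ((u z - u (x, y)) / r + 2) *
      (Wf u z - pdy u z + r ^ 2 * pdy u z)) (THalfStrip w) := by
    refine ContinuousOn.mul ?_ (((hs.Wf hΩ).continuousOn.sub (hs.py hΩ).continuousOn).add
      (continuousOn_const.mul (hs.py hΩ).continuousOn))
    exact continuous_sgd.comp_continuousOn
      (((hs.continuousOn.sub continuousOn_const).div_const _).add continuousOn_const)
  have hmono := setIntegral_mono_on (integrableOn_box hcb hbox)
    ((integrableOn_box hgc hbox).const_mul 100) (measurableSet_Icc.prod measurableSet_Icc)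
    (fun z _ => mean_integrand_le hr hr1 (x, y) z)
  rw [integral_const_mul (100 : ℝ)] at hmono
  have hI := hInt (u (x, y)) ya yb hya0 (hya.trans hyb).le hybw
  calc fz u (x, y) ≤ 1024 / r ^ 2 * _ := hmv
    _ ≤ 1024 / r ^ 2 * (100 * (ε + 8 * r ^ 4)) := by
        gcongr
        exact hmono.trans (by gcongr)
    _ = _ := by ring

/-- The squared distance of the normal to `(0, -1, 0)` is at most `4 fz`. -/
lemma normal_sq_le (u : ℝ × ℝ → ℝ) (z : ℝ × ℝ) :
    (pdx u z / Wf u z) ^ 2 + (1 - pdy u z / Wf u z) ^ 2 + (1 / Wf u z) ^ 2 ≤ 4 * fz u z := by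
  have hid := df_id u z
  have hW := one_le_Wf u z
  have hq := abs_lt.1 (abs_pdy_lt_Wf u z)
  have h : df u z ≤ 2 * fz u z := by
    have e : df u z = (Wf u z - pdy u z) / Wf u z := by unfold df; field_simp
    rw [e]; unfold fz
    rw [mul_div_assoc', div_le_div_iff₀ (by linarith) (by linarith)]
    nlinarith
  have e : df u z = 1 - pdy u z / Wf u z := rfl
  rw [← e, hid]; linarith

end Conclusion

/-- with boundary value `−∞` on `y = 0` and `+∞` on `y = w`, the upward
unit normal of the graph converges uniformly to `(0,−1,0)` as `x → ∞`. -/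
theorem halfstrip_normal_tendsto (w : ℝ) (hw : 0 < w) (u : ℝ × ℝ → ℝ)
    (hu : IsTranslatorOn (THalfStrip w) u)
    (h0 : ∀ x : ℝ, 0 < x → Tendsto u (nhdsWithin (x, 0) (THalfStrip w)) atBot)
    (h1 : ∀ x : ℝ, 0 < x → Tendsto u (nhdsWithin (x, w) (THalfStrip w)) atTop) :
    ∀ ε > (0 : ℝ), ∃ a : ℝ, 0 < a ∧ ∀ x y : ℝ, a < x → 0 < y → y < w →
      Real.sqrt
        ((pdx u (x, y) / Real.sqrt (1 + (pdx u (x, y)) ^ 2 + (pdy u (x, y)) ^ 2)) ^ 2 +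
         (1 - pdy u (x, y) / Real.sqrt (1 + (pdx u (x, y)) ^ 2 + (pdy u (x, y)) ^ 2)) ^ 2 +
         (1 / Real.sqrt (1 + (pdx u (x, y)) ^ 2 + (pdy u (x, y)) ^ 2)) ^ 2) < ε := by
  intro ε hε
  -- for the slab integral at most `9 r ^ 4`, the bound is `4 fz ≤ 3686400 r ^ 2`, and
  -- `3686400 < 2000 ^ 2`
  set r := min (1 / 4) (ε / 2000) with hrd
  have hr : 0 < r := lt_min (by norm_num) (by positivity)
  have hr1 : r ≤ 1 / 4 := min_le_left _ _
  have hr2 : r ≤ ε / 2000 := min_le_right _ _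
  obtain ⟨X, hX, h⟩ := fz_small hw hu h0 h1 hr hr1 (ε := r ^ 4) (by positivity)
  refine ⟨X, hX, fun x y hx hy hyw => ?_⟩
  have h2 := normal_sq_le u (x, y)
  have h3 := h x y hx hy hyw
  have e : 102400 / r ^ 2 * (r ^ 4 + 8 * r ^ 4) = 921600 * r ^ 2 := by field_simp; ring
  rw [e] at h3
  have h4 : r ^ 2 ≤ (ε / 2000) ^ 2 := by gcongr
  refine (Real.sqrt_lt' hε).2 (h2.trans_lt ?_)
  nlinarith [sq_pos_of_pos hε]
end
end
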